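/- There exists α₀ < 2/3 such that for every α with α₀ < α < 2, the system of eigenfunctions of 𝓛_{i,α} (i.e., the case c = i) is complete in L²((0,∞), ℂ). -/

import Mathlib

open MeasureTheory Set

/-- `y` is an eigenfunction of the Dirichlet operator `𝓛_{c,α} = −d²/dx² + c·x^α` on
`L²(0,∞)` with eigenvalue `lam`: continuous on `[0,∞)`, `y(0)=0`, not identically zero,
twice differentiable on `(0,∞)` with `y'' = (c x^α − lam) y`, and square integrable. -/
def IsEigenfunction (α : ℝ) (c lam : ℂ) (y : ℝ → ℂ) : Prop :=
  ContinuousOn y (Set.Ici 0) ∧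
  y 0 = 0 ∧
  (∃ x ≥ (0 : ℝ), y x ≠ 0) ∧
  (∃ y' : ℝ → ℂ,
    (∀ x ∈ Set.Ioi (0 : ℝ), HasDerivAt y (y' x) x) ∧
    (∀ x ∈ Set.Ioi (0 : ℝ), HasDerivAt y' ((c * ((x ^ α : ℝ) : ℂ) - lam) * y x) x)) ∧
  MeasureTheory.IntegrableOn (fun x => ‖y x‖ ^ 2) (Set.Ioi 0)

/-- The system of eigenfunctions of `𝓛_{c,α}` is complete in `L²((0,∞),ℂ)`:
the closed linear span of (the `L²`-classes of) all eigenfunctions is everything. -/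
def EigenfunctionsComplete (α : ℝ) (c : ℂ) : Prop :=
  closure ((Submodule.span ℂ
      {F : MeasureTheory.Lp ℂ 2 (MeasureTheory.volume.restrict (Set.Ioi (0 : ℝ))) |
        ∃ lam : ℂ, ∃ y : ℝ → ℂ, IsEigenfunction α c lam y ∧
          ∀ᵐ x ∂(MeasureTheory.volume.restrict (Set.Ioi (0 : ℝ))), F x = y x} :
      Submodule ℂ (MeasureTheory.Lp ℂ 2 (MeasureTheory.volume.restrict (Set.Ioi (0 : ℝ))))) :
    Set (MeasureTheory.Lp ℂ 2 (MeasureTheory.volume.restrict (Set.Ioi (0 : ℝ))))) = Set.univ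

open Filter Topology ComplexConjugate

/-- `y` solves `y'' = q y` on `(0,∞)`, with `y` and `y'` continuous up to `0`. -/
structure IsSol (q y y' : ℝ → ℂ) : Prop where
  cont : ContinuousOn y (Ici 0)
  cont' : ContinuousOn y' (Ici 0)
  deriv : ∀ s, 0 < s → HasDerivAt y (y' s) s
  deriv' : ∀ s, 0 < s → HasDerivAt y' (q s * y s) s

/-- A solution decays at infinity together with its derivative. -/
def Decays (y y' : ℝ → ℂ) : Prop := Tendsto y atTop (𝓝 0) ∧ Tendsto y' atTop (𝓝 0)

/-- The weighted flux `Re (g y' ȳ)`. -/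
def flux (g : ℂ) (y y' : ℝ → ℂ) (s : ℝ) : ℝ := (g * y' s * conj (y s)).re

lemma le_of_hasDerivAt_nonneg {f f' : ℝ → ℝ} {x z : ℝ} (hxz : x ≤ z)
    (hc : ContinuousOn f (Icc x z)) (hd : ∀ s ∈ Ioo x z, HasDerivAt f (f' s) s)
    (hn : ∀ s ∈ Ioo x z, 0 ≤ f' s) : f x ≤ f z := by
  have hm : MonotoneOn f (Icc x z) := by
    apply monotoneOn_of_deriv_nonneg (convex_Icc x z) hc
    · intro s hs
      rw [interior_Icc] at hs
      exact (hd s hs).differentiableAt.differentiableWithinAt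
    · intro s hs
      rw [interior_Icc] at hs
      rw [(hd s hs).deriv]
      exact hn s hs
  exact hm (left_mem_Icc.2 hxz) (right_mem_Icc.2 hxz) hxz

lemma abs_flux_le (g : ℂ) (y y' : ℝ → ℂ) (s : ℝ) :
    |flux g y y' s| ≤ ‖g‖ * ‖y' s‖ * ‖y s‖ := by
  unfold flux
  refine (Complex.abs_re_le_norm _).trans ?_
  simp

lemma Decays.flux_tendsto {y y' : ℝ → ℂ} (h : Decays y y') (g : ℂ) :
    Tendsto (flux g y y') atTop (𝓝 0) := by
  have : Tendsto (fun s => (g * y' s * conj (y s)).re) atTop (𝓝 (g * 0 * conj (0 : ℂ)).re) := by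
    refine (Complex.continuous_re.tendsto _).comp ?_
    exact (tendsto_const_nhds.mul h.2).mul ((Complex.continuous_conj.tendsto _).comp h.1)
  simp only [mul_zero, zero_mul, Complex.zero_re] at this
  exact this

lemma eq_of_hasDerivAt_zero {f : ℝ → ℂ} {x z : ℝ} (hxz : x ≤ z)
    (hc : ContinuousOn f (Icc x z)) (hd : ∀ s ∈ Ioo x z, HasDerivAt f 0 s) : f x = f z := by
  set c : ℂ := conj (f x - f z)
  have h := le_of_hasDerivAt_nonneg (f := fun s => (c * f s).re) (f' := fun _ => 0) hxz
    (Complex.continuous_re.comp_continuousOn (continuousOn_const.mul hc))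
    (fun s hs => by
      have := (Complex.reCLM.hasFDerivAt (x := c * f s)).comp_hasDerivAt s
        ((hd s hs).const_mul c)
      exact HasDerivAt.congr_deriv (f := fun s => (c * f s).re) this (by simp))
      (fun _ _ => le_rfl)
  have h2 : (c * (f x - f z)).re ≤ 0 := by
    rw [mul_sub, Complex.sub_re]; linarith
  rw [show c * (f x - f z) = ((Complex.normSq (f x - f z) : ℝ) : ℂ) by
    rw [Complex.normSq_eq_conj_mul_self], Complex.ofReal_re] at h2
  exact sub_eq_zero.1 (Complex.normSq_eq_zero.1 (le_antisymm h2 (Complex.normSq_nonneg _)))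

lemma hasDerivAt_norm_sq_complex {y : ℝ → ℂ} {d : ℂ} {s : ℝ} (h : HasDerivAt y d s) :
    HasDerivAt (fun s => ‖y s‖ ^ 2) (2 * (d * conj (y s)).re) s := by
  have := h.norm_sq
  simpa [Complex.inner] using this

namespace IsSol

variable {q y y' v v' u u' : ℝ → ℂ}

lemma add (hv : IsSol q v v') (hu : IsSol q u u') :
    IsSol q (fun s => v s + u s) (fun s => v' s + u' s) where
  cont := hv.cont.add hu.cont
  cont' := hv.cont'.add hu.cont'
  deriv s hs := (hv.deriv s hs).add (hu.deriv s hs)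
  deriv' s hs := by
    have := (hv.deriv' s hs).add (hu.deriv' s hs)
    rwa [← mul_add] at this

lemma smul (hu : IsSol q u u') (m : ℂ) :
    IsSol q (fun s => m * u s) (fun s => m * u' s) where
  cont := continuousOn_const.mul hu.cont
  cont' := continuousOn_const.mul hu.cont'
  deriv s hs := (hu.deriv s hs).const_mul m
  deriv' s hs := by
    have := (hu.deriv' s hs).const_mul m
    rwa [mul_left_comm] at this

lemma flux_cont (h : IsSol q y y') (g : ℂ) : ContinuousOn (flux g y y') (Ici 0) := by
  unfold flux
  refine Complex.continuous_re.comp_continuousOn ?_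
  exact (continuousOn_const.mul h.cont').mul (Complex.continuous_conj.comp_continuousOn h.cont)

lemma flux_deriv (h : IsSol q y y') (g : ℂ) {s : ℝ} (hs : 0 < s) :
    HasDerivAt (flux g y y') (g.re * ‖y' s‖ ^ 2 + (g * q s).re * ‖y s‖ ^ 2) s := by
  have h1 := ((h.deriv' s hs).const_mul g).mul ((h.deriv s hs).star)
  have h2 := (Complex.reCLM.hasFDerivAt (x := g * y' s * conj (y s))).comp_hasDerivAt s h1
  have e1 : ‖y' s‖ ^ 2 = (y' s).re ^ 2 + (y' s).im ^ 2 := by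
    rw [Complex.sq_norm, Complex.normSq_apply]; ring
  have e2 : ‖y s‖ ^ 2 = (y s).re ^ 2 + (y s).im ^ 2 := by
    rw [Complex.sq_norm, Complex.normSq_apply]; ring
  refine HasDerivAt.congr_deriv (f := flux g y y') h2 ?_
  rw [e1, e2]
  simp [Complex.mul_re, Complex.mul_im]
  ring

lemma wronskian_const (hv : IsSol q v v') (hu : IsSol q u u') {x : ℝ} (hx : 0 ≤ x) :
    v x * u' x - v' x * u x = v 0 * u' 0 - v' 0 * u 0 := by
  have hc : ContinuousOn (fun s => v s * u' s - v' s * u s) (Icc 0 x) :=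
    ((hv.cont.mul hu.cont').sub (hv.cont'.mul hu.cont)).mono Icc_subset_Ici_self
  refine (eq_of_hasDerivAt_zero hx hc (fun s hs => ?_)).symm
  have h0 := hs.1
  have := ((hv.deriv s h0).mul (hu.deriv' s h0)).sub ((hv.deriv' s h0).mul (hu.deriv s h0))
  refine HasDerivAt.congr_deriv this ?_
  ring

lemma norm_sq_cont (h : IsSol q y y') : ContinuousOn (fun s => ‖y s‖ ^ 2) (Ici 0) :=
  h.cont.norm.pow 2

lemma norm_sq_cont' (h : IsSol q y y') : ContinuousOn (fun s => ‖y' s‖ ^ 2) (Ici 0) :=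
  h.cont'.norm.pow 2

lemma re_mul_conj_ge (z w : ℂ) : -(‖z‖ * ‖w‖) ≤ (z * conj w).re := by
  have := (abs_le.1 (Complex.abs_re_le_norm (z * conj w))).1
  simpa using this

lemma re_mul_conj_le (z w : ℂ) : (z * conj w).re ≤ ‖z‖ * ‖w‖ := by
  have := (abs_le.1 (Complex.abs_re_le_norm (z * conj w))).2
  simpa using this

variable {g : ℂ} {a b c x z : ℝ}

/-- `flux + c |y|²` is monotone where the energy form is coercive and `c² ≤ ab`. -/
lemma flux_add_sq_mono (h : IsSol q y y') (hx : 0 ≤ x) (hxz : x ≤ z)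
    (ha : a ≤ g.re) (ha0 : 0 ≤ a) (hb0 : 0 ≤ b)
    (hb : ∀ s, x < s → s < z → b ≤ (g * q s).re) (hc : c ^ 2 ≤ a * b) :
    flux g y y' x + c * ‖y x‖ ^ 2 ≤ flux g y y' z + c * ‖y z‖ ^ 2 := by
  have hsub : Icc x z ⊆ Ici 0 := fun s hs => hx.trans hs.1
  refine le_of_hasDerivAt_nonneg (f := fun s => flux g y y' s + c * ‖y s‖ ^ 2) hxz
    (((h.flux_cont g).add (continuousOn_const.mul h.norm_sq_cont)).mono hsub)
    (fun s hs => (h.flux_deriv g (hx.trans_lt hs.1)).add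
      ((hasDerivAt_norm_sq_complex (h.deriv s (hx.trans_lt hs.1))).const_mul c)) ?_
  intro s hs
  have h1 := hb s hs.1 hs.2
  have h2 : |c * (y' s * conj (y s)).re| ≤ |c| * (‖y' s‖ * ‖y s‖) := by
    rw [abs_mul]
    gcongr
    exact abs_le.2 ⟨re_mul_conj_ge _ _, re_mul_conj_le _ _⟩
  have h3 := (abs_le.1 h2).1
  have h4 : a * ‖y' s‖ ^ 2 ≤ g.re * ‖y' s‖ ^ 2 := by gcongr
  have h5 : b * ‖y s‖ ^ 2 ≤ (g * q s).re * ‖y s‖ ^ 2 := by gcongr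
  have h6 : |c| ≤ √a * √b := by
    rw [← Real.sqrt_mul ha0]
    exact Real.abs_le_sqrt hc
  have h7 : |c| * (‖y' s‖ * ‖y s‖) ≤ √a * √b * (‖y' s‖ * ‖y s‖) := by gcongr
  have h8 := Real.sq_sqrt ha0
  have h9 := Real.sq_sqrt hb0
  nlinarith [sq_nonneg (√a * ‖y' s‖ - √b * ‖y s‖)]

lemma flux_mono (h : IsSol q y y') (hx : 0 ≤ x) (hxz : x ≤ z)
    (ha : 0 ≤ g.re) (hb : ∀ s, x < s → s < z → 0 ≤ (g * q s).re) :
    flux g y y' x ≤ flux g y y' z := by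
  simpa using h.flux_add_sq_mono (c := 0) hx hxz ha le_rfl le_rfl hb (by simp)

/-- Exponential monotonicity of the flux, in both time directions. -/
lemma exp_mul_flux_mono (h : IsSol q y y') (hx : 0 ≤ x) (hxz : x ≤ z) (hg : ‖g‖ ≤ 1)
    (ha : a ≤ g.re) (ha0 : 0 ≤ a) (hb0 : 0 ≤ b)
    (hb : ∀ s, x < s → s < z → b ≤ (g * q s).re) (hc : c ^ 2 ≤ a * b) :
    Real.exp (2 * c * x) * flux g y y' x ≤ Real.exp (2 * c * z) * flux g y y' z := by
  have hsub : Icc x z ⊆ Ici 0 := fun s hs => hx.trans hs.1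
  refine le_of_hasDerivAt_nonneg (f := fun s => Real.exp (2 * c * s) * flux g y y' s) hxz
    (((Continuous.continuousOn (by fun_prop)).mul (h.flux_cont g)).mono hsub)
    (fun s hs => (((hasDerivAt_id s).const_mul (2 * c)).exp).mul
      (h.flux_deriv g (hx.trans_lt hs.1))) ?_
  intro s hs
  have h1 := hb s hs.1 hs.2
  have h4 : a * ‖y' s‖ ^ 2 ≤ g.re * ‖y' s‖ ^ 2 := by gcongr
  have h5 : b * ‖y s‖ ^ 2 ≤ (g * q s).re * ‖y s‖ ^ 2 := by gcongr
  have h6 : |c| ≤ √a * √b := by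
    rw [← Real.sqrt_mul ha0]
    exact Real.abs_le_sqrt hc
  have h7 : |c| * (‖y' s‖ * ‖y s‖) ≤ √a * √b * (‖y' s‖ * ‖y s‖) := by gcongr
  have h8 := Real.sq_sqrt ha0
  have h9 := Real.sq_sqrt hb0
  have h10 : |flux g y y' s| ≤ ‖y' s‖ * ‖y s‖ := by
    refine (abs_flux_le g y y' s).trans ?_
    rw [mul_assoc]
    exact mul_le_of_le_one_left (by positivity) hg
  have h11 : |c * flux g y y' s| ≤ |c| * (‖y' s‖ * ‖y s‖) := by
    rw [abs_mul]; gcongr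
  have h12 := (abs_le.1 h11).1
  have key : 0 ≤ 2 * c * flux g y y' s +
      (g.re * ‖y' s‖ ^ 2 + (g * q s).re * ‖y s‖ ^ 2) := by
    nlinarith [sq_nonneg (√a * ‖y' s‖ - √b * ‖y s‖)]
  have := mul_nonneg (Real.exp_pos (2 * c * s)).le key
  simp only [id]
  nlinarith [this]

section local_bounds

variable {K M ℓ ρ : ℝ}

lemma coercive_pointwise (hρ : 0 < ρ) (ha : a ≤ g.re)
    (hK0 : 0 ≤ K) (hK1 : 1 / ℓ + M / ρ ≤ K * a) (hK2 : M * ρ ≤ K * b) {s θ : ℝ}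
    (hb : b ≤ (g * q s).re) (hM : ‖q s‖ ≤ M) (hθ1 : θ ≤ 1) :
    ‖y' s‖ ^ 2 / ℓ + θ * |2 * (q s * y s * conj (y' s)).re| ≤
      K * (g.re * ‖y' s‖ ^ 2 + (g * q s).re * ‖y s‖ ^ 2) := by
  have hM0 : 0 ≤ M := (norm_nonneg _).trans hM
  have h1 : |2 * (q s * y s * conj (y' s)).re| ≤ 2 * (M * ‖y s‖ * ‖y' s‖) := by
    rw [abs_mul, abs_two]
    gcongr
    refine (Complex.abs_re_le_norm _).trans ?_
    simp only [norm_mul, Complex.norm_conj]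
    gcongr
  have h2 : θ * |2 * (q s * y s * conj (y' s)).re| ≤ 1 * (2 * (M * ‖y s‖ * ‖y' s‖)) := by
    gcongr
  have h3 : 2 * (‖y s‖ * ‖y' s‖) ≤ ρ * ‖y s‖ ^ 2 + ‖y' s‖ ^ 2 / ρ := by
    have : 0 ≤ (ρ * ‖y s‖ - ‖y' s‖) ^ 2 / ρ := by positivity
    have e : (ρ * ‖y s‖ - ‖y' s‖) ^ 2 / ρ =
        ρ * ‖y s‖ ^ 2 + ‖y' s‖ ^ 2 / ρ - 2 * (‖y s‖ * ‖y' s‖) := by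
      field_simp; ring
    linarith
  have h4 : M * (2 * (‖y s‖ * ‖y' s‖)) ≤ M * (ρ * ‖y s‖ ^ 2 + ‖y' s‖ ^ 2 / ρ) := by gcongr
  have h5 : K * a * ‖y' s‖ ^ 2 ≤ K * g.re * ‖y' s‖ ^ 2 := by gcongr
  have h6 : K * b * ‖y s‖ ^ 2 ≤ K * (g * q s).re * ‖y s‖ ^ 2 := by gcongr
  have h7 : (1 / ℓ + M / ρ) * ‖y' s‖ ^ 2 ≤ K * a * ‖y' s‖ ^ 2 := by gcongr
  have h8 : M * ρ * ‖y s‖ ^ 2 ≤ K * b * ‖y s‖ ^ 2 := by gcongr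
  have e1 : (1 / ℓ + M / ρ) * ‖y' s‖ ^ 2 = ‖y' s‖ ^ 2 / ℓ + M * (‖y' s‖ ^ 2 / ρ) := by ring
  nlinarith

/-- The derivative at the left end of an interval is controlled by the flux increment. -/
lemma sq_deriv_le_right (h : IsSol q y y') (hx : 0 ≤ x) (hℓ : 0 < ℓ) (hρ : 0 < ρ)
    (ha : a ≤ g.re) (hb : ∀ s, x < s → s < x + ℓ → b ≤ (g * q s).re)
    (hM : ∀ s, x < s → s < x + ℓ → ‖q s‖ ≤ M)
    (hK0 : 0 ≤ K) (hK1 : 1 / ℓ + M / ρ ≤ K * a) (hK2 : M * ρ ≤ K * b) :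
    ‖y' x‖ ^ 2 ≤ K * (flux g y y' (x + ℓ) - flux g y y' x) := by
  have hsub : Icc x (x + ℓ) ⊆ Ici 0 := fun s hs => hx.trans hs.1
  have hlin : ∀ s, HasDerivAt (fun s => 1 - (s - x) / ℓ) (-(1 / ℓ)) s := fun s => by
    simpa using (((hasDerivAt_id s).sub_const x).div_const ℓ).const_sub 1
  have := le_of_hasDerivAt_nonneg
    (f := fun s => (1 - (s - x) / ℓ) * ‖y' s‖ ^ 2 + K * flux g y y' s)
    (x := x) (z := x + ℓ) (by linarith)
    ((((Continuous.continuousOn (by fun_prop)).mul h.norm_sq_cont').add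
      (continuousOn_const.mul (h.flux_cont g))).mono hsub)
    (fun s hs => ((hlin s).mul
      (hasDerivAt_norm_sq_complex (h.deriv' s (hx.trans_lt hs.1)))).add
      ((h.flux_deriv g (hx.trans_lt hs.1)).const_mul K)) (fun s hs => by
      have h0 : 0 ≤ 1 - (s - x) / ℓ := by
        have : (s - x) / ℓ ≤ 1 := by rw [div_le_one hℓ]; linarith [hs.2]
        linarith
      have h1 : 1 - (s - x) / ℓ ≤ 1 := by
        have : 0 ≤ (s - x) / ℓ := div_nonneg (by linarith [hs.1]) hℓ.le
        linarith
      have h2 := coercive_pointwise (y := y) (y' := y') hρ ha hK0 hK1 hK2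
        (hb s hs.1 hs.2) (hM s hs.1 hs.2) h1
      have h3 := neg_abs_le (2 * (q s * y s * conj (y' s)).re)
      have h4 : (1 - (s - x) / ℓ) * -|2 * (q s * y s * conj (y' s)).re| ≤
        (1 - (s - x) / ℓ) * (2 * (q s * y s * conj (y' s)).re) := by gcongr
      have e : -(1 / ℓ) * ‖y' s‖ ^ 2 = -(‖y' s‖ ^ 2 / ℓ) := by ring
      rw [e]
      linarith)
  have e1 : (x + ℓ - x) / ℓ = 1 := by rw [add_sub_cancel_left, div_self hℓ.ne']
  simp only [e1, sub_self, zero_div, sub_zero, one_mul, zero_mul, zero_add] at this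
  linarith

/-- The derivative at the right end of an interval is controlled by the flux increment. -/
lemma sq_deriv_le_left (h : IsSol q y y') (hx : 0 ≤ x) (hℓ : 0 < ℓ) (hρ : 0 < ρ)
    (ha : a ≤ g.re) (hb : ∀ s, x < s → s < x + ℓ → b ≤ (g * q s).re)
    (hM : ∀ s, x < s → s < x + ℓ → ‖q s‖ ≤ M)
    (hK0 : 0 ≤ K) (hK1 : 1 / ℓ + M / ρ ≤ K * a) (hK2 : M * ρ ≤ K * b) :
    ‖y' (x + ℓ)‖ ^ 2 ≤ K * (flux g y y' (x + ℓ) - flux g y y' x) := by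
  have hsub : Icc x (x + ℓ) ⊆ Ici 0 := fun s hs => hx.trans hs.1
  have hlin : ∀ s, HasDerivAt (fun s => (s - x) / ℓ) (1 / ℓ) s := fun s => by
    simpa using (((hasDerivAt_id s).sub_const x).div_const ℓ)
  have := le_of_hasDerivAt_nonneg
    (f := fun s => K * flux g y y' s - (s - x) / ℓ * ‖y' s‖ ^ 2)
    (x := x) (z := x + ℓ) (by linarith)
    (((continuousOn_const.mul (h.flux_cont g)).sub
      ((Continuous.continuousOn (by fun_prop)).mul h.norm_sq_cont')).mono hsub)
    (fun s hs => ((h.flux_deriv g (hx.trans_lt hs.1)).const_mul K).sub ((hlin s).mul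
      (hasDerivAt_norm_sq_complex (h.deriv' s (hx.trans_lt hs.1))))) (fun s hs => by
      have h0 : (s - x) / ℓ ≤ 1 := by rw [div_le_one hℓ]; linarith [hs.2]
      have h1 : 0 ≤ (s - x) / ℓ := div_nonneg (by linarith [hs.1]) hℓ.le
      have h2 := coercive_pointwise (y := y) (y' := y') hρ ha hK0 hK1 hK2
        (hb s hs.1 hs.2) (hM s hs.1 hs.2) h0
      have h3 := le_abs_self (2 * (q s * y s * conj (y' s)).re)
      have h4 : (s - x) / ℓ * (2 * (q s * y s * conj (y' s)).re) ≤
        (s - x) / ℓ * |2 * (q s * y s * conj (y' s)).re| := by gcongr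
      have e : 1 / ℓ * ‖y' s‖ ^ 2 = ‖y' s‖ ^ 2 / ℓ := by ring
      rw [e]
      linarith)
  have e1 : (x + ℓ - x) / ℓ = 1 := by rw [add_sub_cancel_left, div_self hℓ.ne']
  simp only [e1, sub_self, zero_div, sub_zero, one_mul, zero_mul] at this
  linarith

/-- The value at the left end of a unit interval is controlled by the flux increment. -/
lemma sq_le_right (h : IsSol q y y') (hx : 0 ≤ x) (ha0 : 0 < a) (hb0 : 0 < b)
    (ha : a ≤ g.re) (hb : ∀ s, x < s → s < x + 1 → b ≤ (g * q s).re) :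
    ‖y x‖ ^ 2 ≤ (1 / a + 2 / b) * (flux g y y' (x + 1) - flux g y y' x) := by
  have hsub : Icc x (x + 1) ⊆ Ici 0 := fun s hs => hx.trans hs.1
  have hlin : ∀ s, HasDerivAt (fun s => 1 - (s - x)) (-1) s := fun s => by
    simpa using ((hasDerivAt_id s).sub_const x).const_sub 1
  have := le_of_hasDerivAt_nonneg
    (f := fun s => (1 - (s - x)) * ‖y s‖ ^ 2 + (1 / a + 2 / b) * flux g y y' s)
    (x := x) (z := x + 1) (by linarith)
    ((((Continuous.continuousOn (by fun_prop)).mul h.norm_sq_cont).add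
      (continuousOn_const.mul (h.flux_cont g))).mono hsub)
    (fun s hs => ((hlin s).mul
      (hasDerivAt_norm_sq_complex (h.deriv s (hx.trans_lt hs.1)))).add
      ((h.flux_deriv g (hx.trans_lt hs.1)).const_mul _)) (fun s hs => by
      have h0 : 0 ≤ 1 - (s - x) := by linarith [hs.2]
      have h1 : 1 - (s - x) ≤ 1 := by linarith [hs.1]
      have h2 := re_mul_conj_ge (y' s) (y s)
      have h3 : (1 - (s - x)) * (2 * (‖y' s‖ * ‖y s‖)) ≤ 1 * (2 * (‖y' s‖ * ‖y s‖)) := by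
        gcongr
      have h4 : (1 - (s - x)) * -(2 * (‖y' s‖ * ‖y s‖)) ≤
          (1 - (s - x)) * (2 * (y' s * conj (y s)).re) := by gcongr; linarith
      have h5 : (1 / a) * (a * ‖y' s‖ ^ 2) ≤ (1 / a + 2 / b) * (g.re * ‖y' s‖ ^ 2) := by
        gcongr
        have : 0 < 2 / b := by positivity
        linarith
      have h6 : (2 / b) * (b * ‖y s‖ ^ 2) ≤
          (1 / a + 2 / b) * ((g * q s).re * ‖y s‖ ^ 2) := by
        gcongr
        · have : 0 < 1 / a := by positivity
          linarith
        · exact hb s hs.1 hs.2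
      have e5 : (1 / a) * (a * ‖y' s‖ ^ 2) = ‖y' s‖ ^ 2 := by field_simp
      have e6 : (2 / b) * (b * ‖y s‖ ^ 2) = 2 * ‖y s‖ ^ 2 := by field_simp
      nlinarith [sq_nonneg (‖y' s‖ - ‖y s‖)])
  have e1 : x + 1 - x = 1 := by ring
  simp only [e1, sub_self, sub_zero, one_mul, zero_mul, zero_add] at this
  linarith

end local_bounds

/-- The square integral is controlled by the flux increment. -/
lemma integral_norm_sq_le (h : IsSol q y y') (hx : 0 ≤ x) (hxz : x ≤ z) (ha : 0 ≤ g.re)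
    (hb : ∀ s, x < s → s < z → b ≤ (g * q s).re) :
    b * ∫ s in x..z, ‖y s‖ ^ 2 ≤ flux g y y' z - flux g y y' x := by
  have hsub : Icc x z ⊆ Ici 0 := fun s hs => hx.trans hs.1
  have hcn := h.norm_sq_cont.mono hsub
  have hii : IntervalIntegrable (fun s => ‖y s‖ ^ 2) volume x z :=
    (hcn.mono (by rw [uIcc_of_le hxz])).intervalIntegrable
  have := le_of_hasDerivAt_nonneg
    (f := fun s => flux g y y' s - b * ∫ t in x..s, ‖y t‖ ^ 2) hxz
    (((h.flux_cont g).mono hsub).sub (continuousOn_const.mul (by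
      have := intervalIntegral.continuousOn_primitive_interval' hii left_mem_uIcc
      rwa [uIcc_of_le hxz] at this)))
    (fun s hs => (h.flux_deriv g (hx.trans_lt hs.1)).sub (HasDerivAt.const_mul b
      (intervalIntegral.integral_hasDerivAt_right
        (hii.mono_set (by
          rw [uIcc_of_le hxz, uIcc_of_le hs.1.le]; exact Icc_subset_Icc_right hs.2.le))
        (hcn.stronglyMeasurableAtFilter_nhdsWithin measurableSet_Icc s |>.filter_mono (by
          rw [(nhdsWithin_eq_nhds.2 (Icc_mem_nhds hs.1 hs.2))]))
        (hcn.continuousAt (Icc_mem_nhds hs.1 hs.2))))) (fun s hs => by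
      have h1 : b * ‖y s‖ ^ 2 ≤ (g * q s).re * ‖y s‖ ^ 2 := by
        gcongr; exact hb s hs.1 hs.2
      have h2 : 0 ≤ g.re * ‖y' s‖ ^ 2 := by positivity
      linarith)
  simp only [intervalIntegral.integral_same, mul_zero, sub_zero] at this
  linarith

end IsSol

namespace IsSol

variable {q y y' v v' u u' : ℝ → ℂ} {g : ℂ} {a b c x z : ℝ}

section decaying

lemma flux_add_sq_nonpos (h : IsSol q y y') (hd : Decays y y') (hx : 0 ≤ x)
    (ha : a ≤ g.re) (ha0 : 0 ≤ a) (hb0 : 0 ≤ b)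
    (hb : ∀ s, x < s → b ≤ (g * q s).re) (hc : c ^ 2 ≤ a * b) :
    flux g y y' x + c * ‖y x‖ ^ 2 ≤ 0 := by
  have ht : Tendsto (fun z => flux g y y' z + c * ‖y z‖ ^ 2) atTop (𝓝 0) := by
    have := (hd.flux_tendsto g).add ((hd.1.norm.pow 2).const_mul c)
    simpa using this
  refine ge_of_tendsto ht ?_
  filter_upwards [eventually_ge_atTop x] with z hz
  exact h.flux_add_sq_mono hx hz ha ha0 hb0 (fun s hs _ => hb s hs) hc

lemma flux_nonpos (h : IsSol q y y') (hd : Decays y y') (hx : 0 ≤ x)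
    (ha : 0 ≤ g.re) (hb : ∀ s, x < s → 0 ≤ (g * q s).re) : flux g y y' x ≤ 0 := by
  simpa using h.flux_add_sq_nonpos (c := 0) hd hx ha le_rfl le_rfl hb (by simp)

lemma integral_norm_sq_le_of_decays (h : IsSol q y y') (hd : Decays y y') (hx : 0 ≤ x)
    (hb0 : 0 < b) (ha : 0 ≤ g.re) (hb : ∀ s, x < s → b ≤ (g * q s).re) :
    IntegrableOn (fun s => ‖y s‖ ^ 2) (Ioi x) ∧
      ∫ s in Ioi x, ‖y s‖ ^ 2 ≤ -flux g y y' x / b := by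
  have hbd : ∀ z, x ≤ z → ∫ s in x..z, ‖y s‖ ^ 2 ≤ -flux g y y' x / b := by
    intro z hz
    have h1 := h.integral_norm_sq_le hx hz ha (fun s hs _ => hb s hs)
    have h2 := h.flux_nonpos hd (hx.trans hz) ha
      (fun s hs => hb0.le.trans (hb s (hz.trans_lt hs)))
    rw [le_div_iff₀ hb0]
    linarith
  have hint : IntegrableOn (fun s => ‖y s‖ ^ 2) (Ioi x) := by
    refine integrableOn_Ioi_of_intervalIntegral_norm_bounded (-flux g y y' x / b) x
      (b := fun n : ℝ => n) (l := atTop) (fun n => ?_) tendsto_id ?_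
    · exact ((h.norm_sq_cont.mono
        (fun s hs => hx.trans hs.1)).integrableOn_Icc).mono_set Ioc_subset_Icc_self
    · filter_upwards [eventually_ge_atTop x] with z hz
      simpa using hbd z hz
  refine ⟨hint, ?_⟩
  refine le_of_tendsto (intervalIntegral_tendsto_integral_Ioi x hint tendsto_id) ?_
  filter_upwards [eventually_ge_atTop x] with z hz
  exact hbd z hz

lemma norm_deriv_le_of_decays {K M ℓ ρ : ℝ} (h : IsSol q y y') (hd : Decays y y') (hx : 0 ≤ x)
    (hℓ : 0 < ℓ) (hρ : 0 < ρ) (ha0 : 0 ≤ a) (hb0 : 0 ≤ b)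
    (ha : a ≤ g.re) (hb : ∀ s, x < s → b ≤ (g * q s).re)
    (hM : ∀ s, x < s → s < x + ℓ → ‖q s‖ ≤ M)
    (hK0 : 0 ≤ K) (hK1 : 1 / ℓ + M / ρ ≤ K * a) (hK2 : M * ρ ≤ K * b) :
    ‖y' x‖ ≤ K * ‖g‖ * ‖y x‖ := by
  have h1 := h.sq_deriv_le_right hx hℓ hρ ha (fun s hs _ => hb s hs) hM hK0 hK1 hK2
  have h2 := h.flux_nonpos (g := g) hd (x := x + ℓ) (by linarith) (ha0.trans ha)
    (fun s hs => hb0.trans (hb s (by linarith)))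
  have h3 := (abs_le.1 (abs_flux_le g y y' x)).1
  have h4 : ‖y' x‖ ^ 2 ≤ K * (‖g‖ * ‖y' x‖ * ‖y x‖) :=
    h1.trans (by gcongr; linarith)
  rcases (norm_nonneg (y' x)).eq_or_lt with h0 | h0
  · rw [← h0]; positivity
  · by_contra hcon
    push Not at hcon
    nlinarith

/-- A solution with nonpositive flux decays. -/
lemma decays_of_flux_nonpos {P : ℝ} (h : IsSol q y y') (hx : 0 ≤ x) (hg : ‖g‖ ≤ 1)
    (ha : a ≤ g.re) (ha0 : 0 < a) (hb0 : 0 < b) (hP : 0 ≤ P)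
    (hb : ∀ s, x < s → b ≤ (g * q s).re) (hq : ∀ s, x < s → ‖q s‖ ≤ P * (1 + s) ^ 2)
    (hflux : ∀ s, x ≤ s → flux g y y' s ≤ 0) : Decays y y' := by
  set c := √(a * b)
  have hc0 : 0 < c := Real.sqrt_pos.2 (by positivity)
  have hc : c ^ 2 ≤ a * b := (Real.sq_sqrt (by positivity)).le
  set J0 := Real.exp (2 * c * x) * -flux g y y' x
  have hJ : ∀ s, x ≤ s → -flux g y y' s ≤ J0 * Real.exp (-(2 * c) * s) := by
    intro s hs
    have h1 := h.exp_mul_flux_mono hx hs hg ha ha0.le hb0.le (fun s hs _ => hb s hs) hc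
    have h2 : Real.exp (2 * c * s) * -flux g y y' s ≤ J0 := by
      simp only [J0]; linarith
    rw [neg_mul, Real.exp_neg, ← div_eq_mul_inv, le_div_iff₀ (Real.exp_pos _), mul_comm]
    exact h2
  have hexp : Tendsto (fun s : ℝ => Real.exp (-(2 * c) * s)) atTop (𝓝 0) := by
    have := (Real.tendsto_exp_neg_atTop_nhds_zero).comp
      (tendsto_id.const_mul_atTop (show 0 < 2 * c by positivity))
    refine this.congr fun s => ?_
    simp
  have hpoly : Tendsto (fun s : ℝ => (3 + s) ^ 2 * Real.exp (-(2 * c) * s)) atTop (𝓝 0) := by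
    have h1 := (Real.tendsto_pow_mul_exp_neg_atTop_nhds_zero 2).comp
      ((tendsto_atTop_add_const_left atTop (3 : ℝ) tendsto_id).const_mul_atTop
        (show 0 < 2 * c by positivity))
    have h2 := h1.const_mul (Real.exp (6 * c) / (2 * c) ^ 2)
    rw [mul_zero] at h2
    refine h2.congr fun s => ?_
    simp only [Function.comp, id]
    rw [show -(2 * c * (3 + s)) = -(2 * c) * s - 6 * c by ring, Real.exp_sub]
    field_simp
  have hsq : ∀ {f : ℝ → ℂ}, Tendsto (fun s => ‖f s‖ ^ 2) atTop (𝓝 0) → Tendsto f atTop (𝓝 0) := by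
    intro f hf
    rw [tendsto_zero_iff_norm_tendsto_zero]
    have := hf.sqrt
    simpa using this
  constructor
  · apply hsq
    have hlim := (hexp.const_mul J0).const_mul (1 / a + 2 / b)
    rw [mul_zero, mul_zero] at hlim
    refine squeeze_zero' (Eventually.of_forall fun s => by positivity) ?_ hlim
    filter_upwards [eventually_ge_atTop x] with s hs
    have h1 := h.sq_le_right (hx.trans hs) ha0 hb0 ha (fun t ht _ => hb t (hs.trans_lt ht))
    refine h1.trans ?_
    gcongr
    linarith [hJ s hs, hflux (s + 1) (by linarith)]
  · apply hsq
    have hlim := ((hpoly.const_mul (P * J0 * (1 / a + 1 / b))).add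
      (hexp.const_mul (J0 / a)))
    rw [mul_zero, mul_zero, add_zero] at hlim
    refine squeeze_zero' (Eventually.of_forall fun s => by positivity) ?_ hlim
    filter_upwards [eventually_ge_atTop x] with s hs
    have h0 : 0 ≤ s := hx.trans hs
    set M := P * (3 + s) ^ 2
    have hM0 : 0 ≤ M := by positivity
    have h1 := h.sq_deriv_le_right (K := (1 + M) / a + M / b) (M := M) (ℓ := 1) (ρ := 1)
      h0 one_pos one_pos ha (fun t ht _ => hb t (hs.trans_lt ht))
      (fun t ht ht2 => (hq t (hs.trans_lt ht)).trans 
        (mul_le_mul_of_nonneg_left (pow_le_pow_left₀ (by linarith) (by linarith) 2) hP))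
      (by positivity)
      (by
        have : 0 ≤ M / b * a := by positivity
        have e : (1 + M) / a * a = 1 + M := by field_simp
        rw [add_mul, e]; simpa using this)
      (by
        have : 0 ≤ (1 + M) / a * b := by positivity
        have e : M / b * b = M := by field_simp
        rw [add_mul, e]; simpa using this)
    have h2 : flux g y y' (s + 1) - flux g y y' s ≤ J0 * Real.exp (-(2 * c) * s) := by
      linarith [hJ s hs, hflux (s + 1) (by linarith)]
    calc ‖y' s‖ ^ 2 ≤ _ := h1
      _ ≤ ((1 + M) / a + M / b) * (J0 * Real.exp (-(2 * c) * s)) := by gcongr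
      _ = _ := by simp only [M]; ring

/-- Two decaying solutions have vanishing Wronskian. -/
lemma wronskian_eq_zero_of_decays (hv : IsSol q v v') (hu : IsSol q u u')
    (hdv : Decays v v') (hdu : Decays u u') {x : ℝ} (hx : 0 ≤ x) :
    v x * u' x - v' x * u x = 0 := by
  rw [hv.wronskian_const hu hx]
  have ht : Tendsto (fun s => v s * u' s - v' s * u s) atTop (𝓝 0) := by
    have := (hdv.1.mul hdu.2).sub (hdv.2.mul hdu.1)
    simpa using this
  refine tendsto_nhds_unique (tendsto_const_nhds.congr' ?_) ht
  filter_upwards [eventually_ge_atTop 0] with s hs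
  exact (hv.wronskian_const hu hs).symm

end decaying

end IsSol

lemma flux_parallelogram (g : ℂ) (y₁ y₁' y₂ y₂' : ℝ → ℂ) (s : ℝ) :
    flux g (fun s => y₁ s + y₂ s) (fun s => y₁' s + y₂' s) s
      + flux g (fun s => y₁ s + -1 * y₂ s) (fun s => y₁' s + -1 * y₂' s) s
      = 2 * flux g y₁ y₁' s + 2 * flux g y₂ y₂' s := by
  unfold flux
  rw [← Complex.add_re]
  have : ∀ z w : ℂ, 2 * z.re + 2 * w.re = (2 * z + 2 * w).re := fun z w => by simp
  rw [this]
  congr 1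
  simp only [map_add, map_mul, map_neg, map_one]
  ring

lemma flux_smul (g m : ℂ) (y y' : ℝ → ℂ) (s : ℝ) :
    flux g (fun s => m * y s) (fun s => m * y' s) s = ‖m‖ ^ 2 * flux g y y' s := by
  unfold flux
  rw [map_mul, show g * (m * y' s) * (conj m * conj (y s)) = (m * conj m) * (g * y' s * conj (y s))
    by ring, Complex.mul_conj, Complex.re_ofReal_mul, Complex.normSq_eq_norm_sq]

/-- Weyl's limit point construction: the solution that decays at infinity is a limit of the
solutions vanishing at far away points, with an explicit rate. -/
lemma IsSol.exists_decays {q v v' u u' : ℝ → ℂ} {g : ℂ} {a b c s₀ K M P : ℝ}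
    (hv : IsSol q v v') (hu : IsSol q u u') (hs₀ : 0 ≤ s₀)
    (hv0 : v s₀ = 1) (hv0' : v' s₀ = 0) (hu0 : u s₀ = 0) (hu0' : u' s₀ = 1) (hg : ‖g‖ ≤ 1)
    (ha : a ≤ g.re) (ha0 : 0 < a) (hb0 : 0 < b) (hc0 : 0 < c) (hc : c ^ 2 ≤ a * b)
    (hb : ∀ s, s₀ < s → b ≤ (g * q s).re) (hP : 0 ≤ P)
    (hq : ∀ s, s₀ < s → ‖q s‖ ≤ P * (1 + s) ^ 2) (hM : ∀ s, s₀ < s → s < s₀ + 1 → ‖q s‖ ≤ M)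
    (hK0 : 0 < K) (hK1 : 1 + M ≤ K * a) (hK2 : M ≤ K * b) :
    ∃ m : ℂ, ‖m‖ ≤ K ∧ Decays (fun s => v s + m * u s) (fun s => v' s + m * u' s) ∧
      ∀ k : ℕ, u (s₀ + 1 + k) ≠ 0 ∧
        ‖-(v (s₀ + 1 + k) / u (s₀ + 1 + k)) - m‖ ≤ 2 * K / √(1 + 2 * c * k) := by
  have hY : ∀ m : ℂ, IsSol q (fun s => v s + m * u s) (fun s => v' s + m * u' s) :=
    fun m => hv.add (hu.smul m)
  have hflux_mono : ∀ {y y' : ℝ → ℂ}, IsSol q y y' → ∀ {x z : ℝ}, s₀ ≤ x → x ≤ z →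
      flux g y y' x ≤ flux g y y' z := fun h x z hx hxz =>
    h.flux_mono (hs₀.trans hx) hxz (ha0.le.trans ha)
      (fun s hs _ => hb0.le.trans (hb s (hx.trans_lt hs)))
  have hsq : ∀ {y y' : ℝ → ℂ}, IsSol q y y' →
      ‖y' s₀‖ ^ 2 ≤ K * (flux g y y' (s₀ + 1) - flux g y y' s₀) := fun h =>
    h.sq_deriv_le_right (ρ := 1) hs₀ one_pos one_pos ha (fun s hs _ => hb s hs) hM hK0.le
      (by simpa using hK1) (by simpa using hK2)
  have hfu : ∀ k : ℕ, (1 + 2 * c * k) / K ≤ flux g u u' (s₀ + 1 + k) := by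
    intro k
    have h1 := hsq hu
    have h2 : flux g u u' s₀ = 0 := by simp [flux, hu0]
    rw [hu0', h2, norm_one, one_pow, sub_zero] at h1
    have h3 := hu.exp_mul_flux_mono (c := -c) (x := s₀ + 1) (z := s₀ + 1 + k) (by linarith)
      (by linarith [(Nat.cast_nonneg k : (0 : ℝ) ≤ k)]) hg ha ha0.le hb0.le
      (fun s hs _ => hb s (by linarith)) (by rwa [neg_sq])
    have h4 : Real.exp (2 * c * k) * flux g u u' (s₀ + 1) ≤ flux g u u' (s₀ + 1 + k) := by
      have := mul_le_mul_of_nonneg_left h3 (Real.exp_pos (2 * c * (s₀ + 1 + k))).le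
      rw [← mul_assoc, ← mul_assoc, ← Real.exp_add, ← Real.exp_add,
        show 2 * c * (s₀ + 1 + k) + 2 * -c * (s₀ + 1) = 2 * c * k by ring,
        show 2 * c * (s₀ + 1 + k) + 2 * -c * (s₀ + 1 + k) = 0 by ring, Real.exp_zero,
        one_mul] at this
      exact this
    have h5 := Real.add_one_le_exp (2 * c * k)
    rw [div_le_iff₀ hK0]
    have h6 : 0 ≤ flux g u u' (s₀ + 1) := by
      by_contra hcon
      push Not at hcon
      nlinarith
    calc 1 + 2 * c * k ≤ Real.exp (2 * c * k) * 1 := by linarith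
      _ ≤ Real.exp (2 * c * k) * (K * flux g u u' (s₀ + 1)) := by gcongr
      _ = Real.exp (2 * c * k) * flux g u u' (s₀ + 1) * K := by ring
      _ ≤ _ := by gcongr
  have hpos : ∀ k : ℕ, 0 < 1 + 2 * c * (k : ℝ) := fun k => by positivity
  have hune : ∀ k : ℕ, u (s₀ + 1 + k) ≠ 0 := by
    intro k h0
    have h1 := hfu k
    have h2 : flux g u u' (s₀ + 1 + k) = 0 := by simp [flux, h0]
    rw [h2] at h1
    have := div_pos (hpos k) hK0
    linarith
  set m : ℕ → ℂ := fun k => -(v (s₀ + 1 + k) / u (s₀ + 1 + k)) with hm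
  have hmz : ∀ k, flux g (fun s => v s + m k * u s) (fun s => v' s + m k * u' s)
      (s₀ + 1 + k) = 0 := by
    intro k
    have : v (s₀ + 1 + k) + m k * u (s₀ + 1 + k) = 0 := by
      simp only [hm]; field_simp [hune k]; ring
    simp only [flux, this, map_zero, mul_zero, Complex.zero_re]
  have hmneg : ∀ k : ℕ, ∀ s, s₀ ≤ s → s ≤ s₀ + 1 + k →
      flux g (fun s => v s + m k * u s) (fun s => v' s + m k * u' s) s ≤ 0 := by
    intro k s hs hsk
    rw [← hmz k]
    exact hflux_mono (hY _) hs hsk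
  have hflux0 : ∀ w : ℂ, -‖w‖ ≤ flux g (fun s => v s + w * u s) (fun s => v' s + w * u' s) s₀ := by
    intro w
    have h1 := (abs_le.1 (abs_flux_le g (fun s => v s + w * u s) (fun s => v' s + w * u' s) s₀)).1
    simp only [hv0, hv0', hu0, hu0', mul_zero, mul_one, add_zero, zero_add, norm_one] at h1
    have : ‖g‖ * ‖w‖ ≤ 1 * ‖w‖ := by gcongr
    linarith
  have hmK : ∀ k, ‖m k‖ ≤ K := by
    intro k
    have h1 := hsq (hY (m k))
    have h2 := hmneg k (s₀ + 1) (by linarith) (by linarith [(Nat.cast_nonneg k : (0 : ℝ) ≤ k)])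
    have h3 := hflux0 (m k)
    simp only [hv0', hu0', mul_one, zero_add] at h1
    have h4 : ‖m k‖ ^ 2 ≤ K * ‖m k‖ := h1.trans (by gcongr; linarith)
    by_contra hcon
    push Not at hcon
    nlinarith [norm_nonneg (m k)]
  have hdiff : ∀ k n : ℕ, k ≤ n → ‖m k - m n‖ ≤ 2 * K / √(1 + 2 * c * k) := by
    intro k n hkn
    have hkn' : (k : ℝ) ≤ n := by exact_mod_cast hkn
    have hk0 : (0 : ℝ) ≤ k := Nat.cast_nonneg k
    have hp := flux_parallelogram g (fun s => v s + m k * u s) (fun s => v' s + m k * u' s)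
      (fun s => v s + m n * u s) (fun s => v' s + m n * u' s)
    have h1 := hp (s₀ + 1 + k)
    have h2 := hp s₀
    have e : flux g (fun s => v s + m k * u s + -1 * (v s + m n * u s))
        (fun s => v' s + m k * u' s + -1 * (v' s + m n * u' s)) (s₀ + 1 + k)
        = ‖m k - m n‖ ^ 2 * flux g u u' (s₀ + 1 + k) := by
      rw [← flux_smul]
      congr 1 <;> · ext s; ring
    rw [e, hmz k] at h1
    have h3 := hmneg n (s₀ + 1 + k) (by linarith) (by linarith)
    have h4 := hflux_mono ((hY (m k)).add (hY (m n))) le_rfl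
      (show s₀ ≤ s₀ + 1 + k by linarith)
    have h5 : -(4 * K) ≤ flux g (fun s => v s + m k * u s + (v s + m n * u s))
        (fun s => v' s + m k * u' s + (v' s + m n * u' s)) s₀ := by
      have h6 := (abs_le.1 (abs_flux_le g (fun s => v s + m k * u s + (v s + m n * u s))
        (fun s => v' s + m k * u' s + (v' s + m n * u' s)) s₀)).1
      simp only [hv0, hv0', hu0, hu0', mul_zero, mul_one, add_zero, zero_add] at h6
      have h7 : ‖(1 : ℂ) + 1‖ = 2 := by norm_num
      rw [h7] at h6
      have h8 : ‖g‖ * ‖m k + m n‖ ≤ 1 * (K + K) := by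
        gcongr
        exact (norm_add_le _ _).trans (add_le_add (hmK k) (hmK n))
      linarith
    have h9 : ‖m k - m n‖ ^ 2 * ((1 + 2 * c * k) / K) ≤ 4 * K := by
      calc _ ≤ ‖m k - m n‖ ^ 2 * flux g u u' (s₀ + 1 + k) := by gcongr; exact hfu k
        _ ≤ 4 * K := by linarith
    rw [le_div_iff₀ (Real.sqrt_pos.2 (hpos k))]
    refine le_of_sq_le_sq ?_ (by positivity)
    rw [mul_pow, Real.sq_sqrt (hpos k).le]
    rw [← mul_div_assoc, div_le_iff₀ hK0] at h9
    nlinarith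
  have hlim0 : Tendsto (fun k : ℕ => 2 * K / √(1 + 2 * c * k)) atTop (𝓝 0) := by
    refine Tendsto.const_div_atTop ?_ _
    refine Real.tendsto_sqrt_atTop.comp ?_
    exact tendsto_atTop_add_const_left _ _
      (tendsto_natCast_atTop_atTop.const_mul_atTop (by positivity))
  have hcauchy : CauchySeq m :=
    cauchySeq_of_le_tendsto_0' _ (fun k n hkn => by rw [dist_eq_norm]; exact hdiff k n hkn) hlim0
  obtain ⟨m₀, hm₀⟩ := cauchySeq_tendsto_of_complete hcauchy
  refine ⟨m₀, le_of_tendsto hm₀.norm (Eventually.of_forall hmK), ?_, fun k => ⟨hune k, ?_⟩⟩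
  · refine (hY m₀).decays_of_flux_nonpos hs₀ hg ha ha0 hb0 hP hb hq ?_
    intro s hs
    have ht : Tendsto (fun k => flux g (fun s => v s + m k * u s)
        (fun s => v' s + m k * u' s) s) atTop
        (𝓝 (flux g (fun s => v s + m₀ * u s) (fun s => v' s + m₀ * u' s) s)) := by
      unfold flux
      refine (Complex.continuous_re.tendsto _).comp ?_
      refine Tendsto.mul (tendsto_const_nhds.mul (tendsto_const_nhds.add (hm₀.mul_const _)))
        ((Complex.continuous_conj.tendsto _).comp (tendsto_const_nhds.add (hm₀.mul_const _)))
    refine le_of_tendsto ht ?_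
    obtain ⟨k₀, hk₀⟩ := exists_nat_ge s
    filter_upwards [eventually_ge_atTop k₀] with k hk
    have : (k₀ : ℝ) ≤ k := by exact_mod_cast hk
    exact hmneg k s hs (by linarith)
  · refine le_of_tendsto ((tendsto_const_nhds (x := m k)).sub hm₀).norm ?_
    filter_upwards [eventually_ge_atTop k] with n hn
    exact hdiff k n hn

/-- Exponents of the Frobenius series of `y'' = (i z^α - λ) y` at `0`. -/
noncomputable def frobExp (α : ℝ) (σ : ℕ) (j k : ℕ) : ℝ := σ + (2 + α) * j + 2 * k

/-- Coefficients of the Frobenius series of `y'' = (i z^α - λ) y` at `0`. -/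
noncomputable def frobCoef (α : ℝ) (σ : ℕ) : ℕ → ℕ → ℝ
  | 0, 0 => 1
  | j + 1, 0 => frobCoef α σ j 0 / (frobExp α σ (j + 1) 0 * (frobExp α σ (j + 1) 0 - 1))
  | 0, k + 1 => frobCoef α σ 0 k / (frobExp α σ 0 (k + 1) * (frobExp α σ 0 (k + 1) - 1))
  | j + 1, k + 1 => (frobCoef α σ j (k + 1) + frobCoef α σ (j + 1) k) /
      (frobExp α σ (j + 1) (k + 1) * (frobExp α σ (j + 1) (k + 1) - 1))
  termination_by j k => j + k

section coefficients

variable {α : ℝ} {σ : ℕ}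

lemma two_mul_le_frobExp (hα : 0 ≤ α) (j k : ℕ) : 2 * ((j : ℝ) + k) ≤ frobExp α σ j k := by
  unfold frobExp
  have : 0 ≤ α * j := by positivity
  have : (0 : ℝ) ≤ σ := Nat.cast_nonneg σ
  nlinarith

lemma frobExp_le (hα : α ≤ 2) (hσ : σ ≤ 1) (j k : ℕ) :
    frobExp α σ j k ≤ 4 * 2 ^ j * 2 ^ k := by
  have h1 : (σ : ℝ) ≤ 1 := by exact_mod_cast hσ
  have h2 : ∀ n : ℕ, (1 : ℝ) + n ≤ 2 ^ n := fun n => by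
    have := one_add_mul_le_pow (a := (1 : ℝ)) (by norm_num) n
    norm_num at this
    linarith
  have h3 := h2 (j + k)
  push_cast at h3
  rw [mul_assoc, ← pow_add]
  unfold frobExp
  have : (2 + α) * (j : ℝ) ≤ 4 * j := by gcongr; linarith
  have : (0 : ℝ) ≤ k := Nat.cast_nonneg k
  linarith

lemma frobExp_mul_ge (hα : 0 ≤ α) {j k : ℕ} (h : 0 < j + k) :
    ((j : ℝ) + k) ≤ frobExp α σ j k * (frobExp α σ j k - 1) ∧
      0 < frobExp α σ j k * (frobExp α σ j k - 1) := by
  have h1 := two_mul_le_frobExp (σ := σ) hα j k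
  have h2 : (1 : ℝ) ≤ (j : ℝ) + k := by exact_mod_cast h
  constructor <;> nlinarith

lemma frobCoef_bound (hα : 0 ≤ α) (j k : ℕ) :
    0 ≤ frobCoef α σ j k ∧ frobCoef α σ j k ≤ 1 / (j.factorial * k.factorial) := by
  induction hn : j + k generalizing j k with
  | zero =>
    obtain ⟨rfl, rfl⟩ : j = 0 ∧ k = 0 := by omega
    simp [frobCoef]
  | succ n ih =>
    obtain ⟨h1, h2⟩ := frobExp_mul_ge (σ := σ) hα (j := j) (k := k) (by omega)
    rcases j with _ | j <;> rcases k with _ | k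
    · omega
    · obtain ⟨i1, i2⟩ := ih 0 k (by omega)
      rw [frobCoef]
      refine ⟨by positivity, ?_⟩
      rw [div_le_iff₀ h2]
      refine i2.trans ?_
      calc 1 / ((Nat.factorial 0 : ℝ) * k.factorial)
          = 1 / ((Nat.factorial 0 : ℝ) * (k + 1).factorial) * (((0 : ℕ) : ℝ) + ((k + 1 : ℕ) : ℝ)) := by
            rw [Nat.factorial_succ]; push_cast; field_simp; simp
        _ ≤ _ := by gcongr
    · obtain ⟨i1, i2⟩ := ih j 0 (by omega)
      rw [frobCoef]
      refine ⟨by positivity, ?_⟩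
      rw [div_le_iff₀ h2]
      refine i2.trans ?_
      calc 1 / ((j.factorial : ℝ) * (Nat.factorial 0))
          = 1 / (((j + 1).factorial : ℝ) * (Nat.factorial 0)) * (((j + 1 : ℕ) : ℝ) + ((0 : ℕ) : ℝ)) := by
            rw [Nat.factorial_succ]; push_cast; field_simp; simp
        _ ≤ _ := by gcongr
    · obtain ⟨i1, i2⟩ := ih j (k + 1) (by omega)
      obtain ⟨i3, i4⟩ := ih (j + 1) k (by omega)
      rw [frobCoef]
      refine ⟨by positivity, ?_⟩
      rw [div_le_iff₀ h2]
      refine (add_le_add i2 i4).trans ?_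
      calc 1 / ((j.factorial : ℝ) * (k + 1).factorial) + 1 / (((j + 1).factorial : ℝ) * k.factorial)
          = 1 / (((j + 1).factorial : ℝ) * (k + 1).factorial) *
              (((j + 1 : ℕ) : ℝ) + ((k + 1 : ℕ) : ℝ)) := by
            rw [Nat.factorial_succ, Nat.factorial_succ]; push_cast; field_simp
        _ ≤ _ := by gcongr

end coefficients

/-- Terms of the series, in the logarithmic variable `w = log z`, of the `d`-th
`w`-derivative of the solution with leading behaviour `z ^ σ`. -/
noncomputable def frobTerm (α : ℝ) (σ d : ℕ) (lam w : ℂ) (p : ℕ × ℕ) : ℂ :=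
  ((frobCoef α σ p.1 p.2 * frobExp α σ p.1 p.2 ^ d : ℝ) : ℂ) *
    (Complex.I ^ p.1 * (-lam) ^ p.2 * Complex.exp (frobExp α σ p.1 p.2 * w))

/-- Majorant of `frobTerm`. -/
noncomputable def frobMaj (α : ℝ) (σ d : ℕ) (r x : ℝ) (p : ℕ × ℕ) : ℝ :=
  4 ^ d * Real.exp (σ * x) * ((2 ^ d * Real.exp ((2 + α) * x)) ^ p.1 / p.1.factorial *
    ((2 ^ d * (r * Real.exp (2 * x))) ^ p.2 / p.2.factorial))

/-- The `d`-th `w`-derivative of the solution with leading behaviour `z ^ σ`, `z = exp w`. -/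
noncomputable def frob (α : ℝ) (σ d : ℕ) (lam w : ℂ) : ℂ := ∑' p, frobTerm α σ d lam w p

section series

variable {α : ℝ} {σ d : ℕ} {lam w : ℂ}

lemma norm_exp_frobExp (α : ℝ) (σ j k : ℕ) (w : ℂ) :
    ‖Complex.exp (frobExp α σ j k * w)‖ =
      Real.exp (σ * w.re) * Real.exp ((2 + α) * w.re) ^ j * Real.exp (2 * w.re) ^ k := by
  rw [Complex.norm_exp, Complex.re_ofReal_mul, ← Real.exp_nat_mul, ← Real.exp_nat_mul,
    ← Real.exp_add, ← Real.exp_add]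
  unfold frobExp
  congr 1
  ring

lemma norm_frobTerm_le (hα : 0 ≤ α) (hα2 : α ≤ 2) (hσ : σ ≤ 1) {r x : ℝ} (hr : ‖lam‖ ≤ r)
    (hx : w.re ≤ x) (p : ℕ × ℕ) : ‖frobTerm α σ d lam w p‖ ≤ frobMaj α σ d r x p := by
  obtain ⟨j, k⟩ := p
  unfold frobTerm frobMaj
  obtain ⟨h1, h2⟩ := frobCoef_bound (σ := σ) hα j k
  have h3 := two_mul_le_frobExp (σ := σ) hα j k
  have h3' : 0 ≤ frobExp α σ j k := le_trans (by positivity) h3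
  have h4 := frobExp_le hα2 hσ j k
  have hr0 : 0 ≤ r := (norm_nonneg _).trans hr
  simp only [norm_mul, norm_pow, Complex.norm_I, norm_neg, one_pow, one_mul, Complex.norm_real,
    Real.norm_eq_abs, abs_of_nonneg h1, abs_of_nonneg h3', norm_exp_frobExp]
  calc frobCoef α σ j k * frobExp α σ j k ^ d *
      (‖lam‖ ^ k * (Real.exp (σ * w.re) * Real.exp ((2 + α) * w.re) ^ j * Real.exp (2 * w.re) ^ k))
      ≤ 1 / (j.factorial * k.factorial) * (4 * 2 ^ j * 2 ^ k) ^ d *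
      (r ^ k * (Real.exp (σ * x) * Real.exp ((2 + α) * x) ^ j * Real.exp (2 * x) ^ k)) := by
        gcongr
    _ = _ := by
        rw [mul_pow, mul_pow, mul_pow, mul_pow, mul_pow, ← pow_mul, ← pow_mul, ← pow_mul, ← pow_mul,
          mul_comm j, mul_comm k]
        field_simp

lemma hasSum_frobMaj (α : ℝ) (σ d : ℕ) {r : ℝ} (hr : 0 ≤ r) (x : ℝ) :
    HasSum (frobMaj α σ d r x) (4 ^ d * Real.exp (σ * x) *
      Real.exp (2 ^ d * (Real.exp ((2 + α) * x) + r * Real.exp (2 * x)))) := by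
  have h : ∀ t : ℝ, HasSum (fun n : ℕ => t ^ n / n.factorial) (Real.exp t) := fun t => by
    rw [Real.exp_eq_exp_ℝ]; exact NormedSpace.expSeries_div_hasSum_exp t
  have hnn : ∀ t : ℝ, 0 ≤ t → (0 : ℕ → ℝ) ≤ fun n : ℕ => t ^ n / n.factorial :=
    fun t ht n => div_nonneg (pow_nonneg ht n) (Nat.cast_nonneg _)
  have hA : 0 ≤ 2 ^ d * Real.exp ((2 + α) * x) := by positivity
  have hB : 0 ≤ 2 ^ d * (r * Real.exp (2 * x)) := by positivity
  have hs := (h _).summable.mul_of_nonneg (h _).summable (hnn _ hA) (hnn _ hB)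
  have := (HasSum.mul (h _) (h _) hs).mul_left (4 ^ d * Real.exp (σ * x))
  rw [mul_add, Real.exp_add]
  exact this

lemma summable_frobTerm (hα : 0 ≤ α) (hα2 : α ≤ 2) (hσ : σ ≤ 1) (d : ℕ) (lam w : ℂ) :
    Summable (frobTerm α σ d lam w) :=
  Summable.of_norm_bounded (hasSum_frobMaj α σ d (norm_nonneg lam) w.re).summable
    (norm_frobTerm_le hα hα2 hσ le_rfl le_rfl)

lemma norm_frob_le (hα : 0 ≤ α) (hα2 : α ≤ 2) (hσ : σ ≤ 1) (d : ℕ) (lam w : ℂ) :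
    ‖frob α σ d lam w‖ ≤ 4 ^ d * Real.exp (σ * w.re) *
      Real.exp (2 ^ d * (Real.exp ((2 + α) * w.re) + ‖lam‖ * Real.exp (2 * w.re))) :=
  tsum_of_norm_bounded (hasSum_frobMaj α σ d (norm_nonneg lam) w.re)
    (norm_frobTerm_le hα hα2 hσ le_rfl le_rfl)

lemma norm_frob_sub_le (hα : 0 ≤ α) (hα2 : α ≤ 2) (hσ : σ ≤ 1) (d : ℕ) (lam w : ℂ) :
    ‖frob α σ d lam w - (σ : ℂ) ^ d * Complex.exp (σ * w)‖ ≤ 4 ^ d * Real.exp (σ * w.re) *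
      (Real.exp (2 ^ d * (Real.exp ((2 + α) * w.re) + ‖lam‖ * Real.exp (2 * w.re))) - 1) := by
  have e : (σ : ℂ) ^ d * Complex.exp (σ * w) = frobTerm α σ d lam w (0, 0) := by
    simp [frobTerm, frobCoef, frobExp]
  have h1 := (summable_frobTerm hα hα2 hσ d lam w).hasSum.sub
    (hasSum_ite_eq (0, 0) (frobTerm α σ d lam w (0, 0)))
  have h2 := (hasSum_frobMaj α σ d (norm_nonneg lam) w.re).sub
    (hasSum_ite_eq (0, 0) (frobMaj α σ d ‖lam‖ w.re (0, 0)))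
  have e2 : frobMaj α σ d ‖lam‖ w.re (0, 0) = 4 ^ d * Real.exp (σ * w.re) := by simp [frobMaj]
  rw [e, mul_sub, mul_one]
  nth_rewrite 2 [← e2]
  unfold frob
  rw [← h1.tsum_eq]
  refine tsum_of_norm_bounded h2 ?_
  intro p
  by_cases hp : p = (0, 0)
  · subst hp; simp
  · simp only [hp, if_false, sub_zero]
    exact norm_frobTerm_le hα hα2 hσ le_rfl le_rfl p

lemma hasDerivAt_frobTerm (α : ℝ) (σ d : ℕ) (lam w : ℂ) (p : ℕ × ℕ) :
    HasDerivAt (fun w => frobTerm α σ d lam w p) (frobTerm α σ (d + 1) lam w p) w := by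
  unfold frobTerm
  have h1 := ((hasDerivAt_id w).const_mul (frobExp α σ p.1 p.2 : ℂ)).cexp
  have h2 := (h1.const_mul (Complex.I ^ p.1 * (-lam) ^ p.2)).const_mul
    (((frobCoef α σ p.1 p.2 * frobExp α σ p.1 p.2 ^ d : ℝ) : ℂ))
  refine h2.congr_deriv ?_
  simp only [id, pow_succ]
  push_cast
  ring

lemma hasDerivAt_frob (hα : 0 ≤ α) (hα2 : α ≤ 2) (hσ : σ ≤ 1) (d : ℕ) (lam w : ℂ) :
    HasDerivAt (frob α σ d lam) (frob α σ (d + 1) lam w) w := by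
  have hU : IsOpen {v : ℂ | v.re < w.re + 1} := isOpen_lt Complex.continuous_re continuous_const
  have hw : w ∈ {v : ℂ | v.re < w.re + 1} := by simp
  have hs := (hasSum_frobMaj α σ d (norm_nonneg lam) (w.re + 1)).summable
  have hdiff : ∀ p, DifferentiableOn ℂ (fun v => frobTerm α σ d lam v p) {v : ℂ | v.re < w.re + 1} :=
    fun p v _ => (hasDerivAt_frobTerm α σ d lam v p).differentiableAt.differentiableWithinAt
  have hle : ∀ p, ∀ v ∈ {v : ℂ | v.re < w.re + 1},
      ‖frobTerm α σ d lam v p‖ ≤ frobMaj α σ d ‖lam‖ (w.re + 1) p :=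
    fun p v hv => norm_frobTerm_le hα hα2 hσ le_rfl (le_of_lt hv) p
  have h1 := Complex.differentiableOn_tsum_of_summable_norm hs hdiff hU hle
  have h2 := Complex.hasSum_deriv_of_summable_norm hs hdiff hU hle hw
  have h3 := (h1.differentiableAt (hU.mem_nhds hw)).hasDerivAt
  have h4 : deriv (fun v => ∑' p, frobTerm α σ d lam v p) w = frob α σ (d + 1) lam w := by
    rw [← h2.tsum_eq]
    unfold frob
    congr 1
    ext p
    exact (hasDerivAt_frobTerm α σ d lam w p).deriv
  rw [h4] at h3
  exact h3

lemma differentiable_frob_param (hα : 0 ≤ α) (hα2 : α ≤ 2) (hσ : σ ≤ 1) (d : ℕ) (w : ℂ) :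
    Differentiable ℂ (fun lam => frob α σ d lam w) := by
  intro lam
  have hU : IsOpen (Metric.ball (0 : ℂ) (‖lam‖ + 1)) := Metric.isOpen_ball
  have hw : lam ∈ Metric.ball (0 : ℂ) (‖lam‖ + 1) := by simp
  refine (Complex.differentiableOn_tsum_of_summable_norm
    (hasSum_frobMaj α σ d (r := ‖lam‖ + 1) (by positivity) w.re).summable (fun p => ?_) hU
    (fun p v hv => norm_frobTerm_le hα hα2 hσ
      (le_of_lt (by simpa using hv)) le_rfl p)).differentiableAt (hU.mem_nhds hw)
  unfold frobTerm
  fun_prop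

lemma frob_ode (hα : 0 ≤ α) (hα2 : α ≤ 2) (hσ : σ ≤ 1) (lam w : ℂ) :
    frob α σ 2 lam w - frob α σ 1 lam w =
      (Complex.I * Complex.exp ((2 + α) * w) - lam * Complex.exp (2 * w)) * frob α σ 0 lam w := by
  have h0 := (summable_frobTerm hα hα2 hσ 0 lam w).hasSum
  have h1 := (summable_frobTerm hα hα2 hσ 1 lam w).hasSum
  have h2 := (summable_frobTerm hα hα2 hσ 2 lam w).hasSum
  have h21 := h2.sub h1
  have hA := h0.mul_left (Complex.I * Complex.exp ((2 + α) * w))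
  have hB := h0.mul_left (-lam * Complex.exp (2 * w))
  set fA : ℕ × ℕ → ℂ := fun p => match p with
    | (0, _) => 0
    | (j + 1, k) => Complex.I * Complex.exp ((2 + α) * w) * frobTerm α σ 0 lam w (j, k)
  set fB : ℕ × ℕ → ℂ := fun p => match p with
    | (_, 0) => 0
    | (j, k + 1) => -lam * Complex.exp (2 * w) * frobTerm α σ 0 lam w (j, k)
  have hA' : HasSum fA (Complex.I * Complex.exp ((2 + α) * w) * ∑' p, frobTerm α σ 0 lam w p) := by
    have hinj : Function.Injective (fun p : ℕ × ℕ => (p.1 + 1, p.2)) := by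
      rintro ⟨a, b⟩ ⟨c, d⟩ h; simpa using h
    rw [← hinj.hasSum_iff]
    · exact hA
    · rintro ⟨j, k⟩ hjk
      rcases j with _ | j
      · rfl
      · exact absurd ⟨(j, k), rfl⟩ hjk
  have hB' : HasSum fB (-lam * Complex.exp (2 * w) * ∑' p, frobTerm α σ 0 lam w p) := by
    have hinj : Function.Injective (fun p : ℕ × ℕ => (p.1, p.2 + 1)) := by
      rintro ⟨a, b⟩ ⟨c, d⟩ h; simpa using h
    rw [← hinj.hasSum_iff]
    · exact hB
    · rintro ⟨j, k⟩ hjk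
      rcases k with _ | k
      · rfl
      · exact absurd ⟨(j, k), rfl⟩ hjk
  have key : ∀ p, frobTerm α σ 2 lam w p - frobTerm α σ 1 lam w p = fA p + fB p := by
    rintro ⟨j, k⟩
    have hfac : frobTerm α σ 2 lam w (j, k) - frobTerm α σ 1 lam w (j, k) =
        ((frobCoef α σ j k * (frobExp α σ j k * (frobExp α σ j k - 1)) : ℝ) : ℂ) *
        (Complex.I ^ j * (-lam) ^ k * Complex.exp (frobExp α σ j k * w)) := by
      unfold frobTerm; push_cast; ring
    rw [hfac]
    have eA : ∀ j k, Complex.exp (frobExp α σ (j + 1) k * w) =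
        Complex.exp ((2 + α) * w) * Complex.exp (frobExp α σ j k * w) := fun j k => by
      rw [← Complex.exp_add]; unfold frobExp; push_cast; ring_nf
    have eB : ∀ j k, Complex.exp (frobExp α σ j (k + 1) * w) =
        Complex.exp (2 * w) * Complex.exp (frobExp α σ j k * w) := fun j k => by
      rw [← Complex.exp_add]; unfold frobExp; push_cast; ring_nf
    rcases j with _ | j <;> rcases k with _ | k
    · have : frobExp α σ 0 0 * (frobExp α σ 0 0 - 1) = 0 := by
        unfold frobExp
        interval_cases σ <;> simp
      simp [fA, fB, this]
    · have hne := (frobExp_mul_ge (σ := σ) hα (j := 0) (k := k + 1) (by omega)).2.ne'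
      rw [frobCoef, div_mul_cancel₀ _ hne, eB]
      simp only [fA, fB, frobTerm]
      push_cast
      ring
    · have hne := (frobExp_mul_ge (σ := σ) hα (j := j + 1) (k := 0) (by omega)).2.ne'
      rw [frobCoef, div_mul_cancel₀ _ hne, eA]
      simp only [fA, fB, frobTerm]
      push_cast
      ring
    · have hne := (frobExp_mul_ge (σ := σ) hα (j := j + 1) (k := k + 1) (by omega)).2.ne'
      rw [frobCoef, div_mul_cancel₀ _ hne]
      simp only [fA, fB, frobTerm]
      have e1 := eA j (k + 1)
      have e2 := eB (j + 1) k
      push_cast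
      rw [add_mul]
      congr 1
      · rw [e1]; ring
      · rw [e2]; ring
  have h3 := (hA'.add hB').unique (by simpa only [key] using h21)
  unfold frob
  rw [← h3]
  ring

end series

/-- The potential of `y'' = (i z^α - λ) y` restricted to the ray `z = s e^{-iφ}`. -/
noncomputable def rayQ (α φ : ℝ) (lam : ℂ) (s : ℝ) : ℂ :=
  Complex.I * Complex.exp (-((2 + α) * φ : ℝ) * Complex.I) * (s ^ α : ℝ)
    - lam * Complex.exp (-(2 * φ : ℝ) * Complex.I)

/-- The basic solutions on the ray `z = s e^{-iφ}`. -/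
noncomputable def raySol (α : ℝ) (σ : ℕ) (φ : ℝ) (lam : ℂ) (s : ℝ) : ℂ :=
  if 0 < s then frob α σ 0 lam (Real.log s - φ * Complex.I) else if σ = 0 then 1 else 0

/-- The `s`-derivatives of the basic solutions on the ray `z = s e^{-iφ}`. -/
noncomputable def raySol' (α : ℝ) (σ : ℕ) (φ : ℝ) (lam : ℂ) (s : ℝ) : ℂ :=
  if 0 < s then frob α σ 1 lam (Real.log s - φ * Complex.I) / s
  else if σ = 0 then 0 else Complex.exp (-φ * Complex.I)

/-- The solution `A C + B S` on the ray `z = s e^{-iφ}`. -/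
noncomputable def rayY (α φ : ℝ) (lam A B : ℂ) (s : ℝ) : ℂ :=
  A * raySol α 0 φ lam s + B * raySol α 1 φ lam s

/-- The `s`-derivative of `rayY`. -/
noncomputable def rayY' (α φ : ℝ) (lam A B : ℂ) (s : ℝ) : ℂ :=
  A * raySol' α 0 φ lam s + B * raySol' α 1 φ lam s

section rays

variable {α : ℝ} {σ : ℕ}

lemma log_ray_re (s φ : ℝ) : ((Real.log s : ℂ) - φ * Complex.I).re = Real.log s := by simp

lemma exp_mul_log_ray {s : ℝ} (hs : 0 < s) (e φ : ℝ) :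
    Complex.exp (e * (Real.log s - φ * Complex.I)) =
      (s ^ e : ℝ) * Complex.exp (-(e * φ : ℝ) * Complex.I) := by
  rw [Real.rpow_def_of_pos hs, Complex.ofReal_exp, ← Complex.exp_add]
  push_cast
  ring_nf

lemma frob_ode_ray (hα : 0 ≤ α) (hα2 : α ≤ 2) (hσ : σ ≤ 1) (φ : ℝ) (lam : ℂ) {s : ℝ} (hs : 0 < s) :
    frob α σ 2 lam (Real.log s - φ * Complex.I) - frob α σ 1 lam (Real.log s - φ * Complex.I) =
      s ^ 2 * rayQ α φ lam s * frob α σ 0 lam (Real.log s - φ * Complex.I) := by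
  rw [frob_ode hα hα2 hσ]
  have h1 := exp_mul_log_ray hs (2 + α) φ
  have h2 := exp_mul_log_ray hs 2 φ
  push_cast at h1 h2
  rw [h1, h2]
  unfold rayQ
  have e : (s ^ (2 + α) : ℝ) = s ^ 2 * s ^ α := by
    rw [Real.rpow_add hs]; norm_num
  rw [e]
  have e2 : (s ^ (2 : ℝ) : ℝ) = s ^ 2 := by norm_num
  rw [e2]
  push_cast
  ring

lemma hasDerivAt_log_ray {s : ℝ} (hs : 0 < s) (φ : ℝ) :
    HasDerivAt (fun s : ℝ => (Real.log s : ℂ) - φ * Complex.I) ((s : ℂ)⁻¹) s := by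
  have := ((Real.hasDerivAt_log hs.ne').ofReal_comp).sub_const (φ * Complex.I)
  simpa using this

lemma raySol_eventuallyEq {s : ℝ} (hs : 0 < s) (α : ℝ) (σ : ℕ) (φ : ℝ) (lam : ℂ) :
    raySol α σ φ lam =ᶠ[𝓝 s] fun s => frob α σ 0 lam (Real.log s - φ * Complex.I) := by
  filter_upwards [lt_mem_nhds hs] with t ht
  simp [raySol, ht]

lemma hasDerivAt_raySol (hα : 0 ≤ α) (hα2 : α ≤ 2) (hσ : σ ≤ 1) (φ : ℝ) (lam : ℂ) {s : ℝ}
    (hs : 0 < s) : HasDerivAt (raySol α σ φ lam) (raySol' α σ φ lam s) s := by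
  have h := (hasDerivAt_frob hα hα2 hσ 0 lam (Real.log s - φ * Complex.I)).comp_of_eq s
    (hasDerivAt_log_ray hs φ) rfl
  refine (h.congr_of_eventuallyEq (raySol_eventuallyEq hs α σ φ lam)).congr_deriv ?_
  simp [raySol', hs, div_eq_mul_inv]

lemma hasDerivAt_raySol' (hα : 0 ≤ α) (hα2 : α ≤ 2) (hσ : σ ≤ 1) (φ : ℝ) (lam : ℂ) {s : ℝ}
    (hs : 0 < s) :
    HasDerivAt (raySol' α σ φ lam) (rayQ α φ lam s * raySol α σ φ lam s) s := by
  have h := (hasDerivAt_frob hα hα2 hσ 1 lam (Real.log s - φ * Complex.I)).comp_of_eq s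
    (hasDerivAt_log_ray hs φ) rfl
  have hs' : (s : ℂ) ≠ 0 := by exact_mod_cast hs.ne'
  have h2 := h.div (hasDerivAt_id s).ofReal_comp hs'
  have hev : raySol' α σ φ lam =ᶠ[𝓝 s]
      fun s => frob α σ 1 lam (Real.log s - φ * Complex.I) / s := by
    filter_upwards [lt_mem_nhds hs] with t ht
    simp [raySol', ht]
  refine (h2.congr_of_eventuallyEq hev).congr_deriv ?_
  have hode := frob_ode_ray hα hα2 hσ φ lam hs
  simp only [raySol, hs, if_true, Function.comp, id, one_add_one_eq_two]
  rw [eq_add_of_sub_eq hode]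
  field_simp
  simp

lemma exp_sub_one_le (t : ℝ) : Real.exp t - 1 ≤ t * Real.exp t := by
  have h1 := Real.add_one_le_exp (-t)
  have h2 : Real.exp (-t) * Real.exp t = 1 := by rw [← Real.exp_add]; simp
  nlinarith [Real.exp_pos t]

lemma exp_log_sum {s : ℝ} (hs : 0 < s) (α r : ℝ) :
    Real.exp ((2 + α) * Real.log s) + r * Real.exp (2 * Real.log s) = s ^ 2 * (s ^ α + r) := by
  rw [mul_comm (2 + α), mul_comm 2, ← Real.rpow_def_of_pos hs, ← Real.rpow_def_of_pos hs,
    Real.rpow_add hs]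
  norm_num
  ring

lemma tendsto_raySol_zero (hα : 0 < α) (hα2 : α ≤ 2) (hσ : σ ≤ 1) (φ : ℝ) (lam : ℂ) :
    Tendsto (raySol α σ φ lam) (𝓝[>] 0) (𝓝 (if σ = 0 then 1 else 0)) ∧
    Tendsto (raySol' α σ φ lam) (𝓝[>] 0)
      (𝓝 (if σ = 0 then 0 else Complex.exp (-φ * Complex.I))) := by
  set X : ℝ → ℝ := fun s => s ^ 2 * (s ^ α + ‖lam‖) with hX
  have hcX : Continuous X := by
    have := Real.continuous_rpow_const hα.le
    fun_prop
  have hlim : ∀ F : ℝ → ℝ, Continuous F → F 0 = 0 → Tendsto F (𝓝[>] 0) (𝓝 0) := by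
    intro F hF h0
    have := hF.tendsto 0
    rw [h0] at this
    exact this.mono_left nhdsWithin_le_nhds
  have hX0 : X 0 = 0 := by simp [hX]
  have hb : ∀ d s, 0 < s → ‖frob α σ d lam (Real.log s - φ * Complex.I) -
      (σ : ℂ) ^ d * Complex.exp (σ * (Real.log s - φ * Complex.I))‖ ≤
      4 ^ d * s ^ σ * (Real.exp (2 ^ d * X s) - 1) := by
    intro d s hs
    have h1 := norm_frob_sub_le hα.le hα2 hσ d lam (Real.log s - φ * Complex.I)
    rw [log_ray_re, exp_log_sum hs, mul_comm (σ : ℝ), ← Real.rpow_def_of_pos hs,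
      Real.rpow_natCast] at h1
    exact h1
  have hcont : ContinuousOn (fun s : ℝ => X s) univ := hcX.continuousOn
  interval_cases σ
  · simp only [if_true]
    constructor
    · rw [tendsto_iff_norm_sub_tendsto_zero]
      refine squeeze_zero' (Eventually.of_forall fun s => norm_nonneg _) ?_
        (hlim (fun s => Real.exp (X s) - 1) (by fun_prop) (by simp [hX0]))
      filter_upwards [self_mem_nhdsWithin] with s hs
      have := hb 0 s hs
      simp only [mem_Ioi] at hs
      simpa [raySol, hs] using this
    · rw [tendsto_iff_norm_sub_tendsto_zero]
      have hc2 : Continuous (fun s : ℝ => 8 * (s * (s ^ α + ‖lam‖)) * Real.exp (2 * X s)) := by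
        have := Real.continuous_rpow_const hα.le
        fun_prop
      refine squeeze_zero' (Eventually.of_forall fun s => norm_nonneg _) ?_
        (hlim _ hc2 (by simp))
      filter_upwards [self_mem_nhdsWithin] with s hs
      have := hb 1 s hs
      simp only [mem_Ioi] at hs
      simp only [raySol', hs, if_true, sub_zero, norm_div, Complex.norm_real, Real.norm_eq_abs,
        abs_of_pos hs]
      rw [div_le_iff₀ hs]
      have h3 := exp_sub_one_le (2 * X s)
      have e : 8 * (s * (s ^ α + ‖lam‖)) * Real.exp (2 * X s) * s =
          4 * (2 * X s * Real.exp (2 * X s)) := by simp only [hX]; ring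
      rw [e]
      simp at this
      linarith
  · simp only [one_ne_zero, if_false]
    constructor
    · rw [tendsto_zero_iff_norm_tendsto_zero]
      have hc2 : Continuous (fun s : ℝ => s * (Real.exp (X s) - 1) + s) := by fun_prop
      refine squeeze_zero' (Eventually.of_forall fun s => norm_nonneg _) ?_
        (hlim _ hc2 (by simp))
      filter_upwards [self_mem_nhdsWithin] with s hs
      have h1 := hb 0 s hs
      simp only [mem_Ioi] at hs
      have h2 := exp_mul_log_ray hs 1 φ
      have h3 : ‖Complex.exp (((1 : ℕ) : ℂ) * (Real.log s - φ * Complex.I))‖ = s := by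
        rw [Complex.norm_exp, Nat.cast_one, one_mul, log_ray_re, Real.exp_log hs]
      simp only [raySol, hs, if_true]
      refine (norm_le_norm_sub_add _ (Complex.exp (((1 : ℕ) : ℂ) *
        (Real.log s - φ * Complex.I)))).trans ?_
      rw [h3]
      simpa using h1
    · rw [tendsto_iff_norm_sub_tendsto_zero]
      refine squeeze_zero' (Eventually.of_forall fun s => norm_nonneg _) ?_
        (hlim (fun s => 4 * (Real.exp (2 * X s) - 1)) (by fun_prop) (by simp [hX0]))
      filter_upwards [self_mem_nhdsWithin] with s hs
      have h1 := hb 1 s hs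
      simp only [mem_Ioi] at hs
      have hs' : (s : ℂ) ≠ 0 := by exact_mod_cast hs.ne'
      have h2 := exp_mul_log_ray hs 1 φ
      simp only [raySol', hs, if_true]
      have e : frob α 1 1 lam (Real.log s - φ * Complex.I) / s - Complex.exp (-φ * Complex.I) =
          (frob α 1 1 lam (Real.log s - φ * Complex.I) - s * Complex.exp (-φ * Complex.I)) / s := by
        field_simp
      rw [e, norm_div, Complex.norm_real, Real.norm_eq_abs, abs_of_pos hs, div_le_iff₀ hs]
      simp only [Nat.cast_one, one_mul, pow_one] at h1 h2
      rw [Complex.ofReal_one, one_mul] at h2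
      rw [h2, Real.rpow_one] at h1
      linarith

lemma isSol_raySol (hα : 0 < α) (hα2 : α ≤ 2) (hσ : σ ≤ 1) (φ : ℝ) (lam : ℂ) :
    IsSol (rayQ α φ lam) (raySol α σ φ lam) (raySol' α σ φ lam) where
  deriv s hs := hasDerivAt_raySol hα.le hα2 hσ φ lam hs
  deriv' s hs := hasDerivAt_raySol' hα.le hα2 hσ φ lam hs
  cont s hs := by
    rcases (show (0 : ℝ) ≤ s from hs).eq_or_lt with rfl | h
    · rw [← continuousWithinAt_Ioi_iff_Ici]
      have := (tendsto_raySol_zero hα hα2 hσ φ lam).1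
      unfold ContinuousWithinAt
      convert this using 2
      simp [raySol]
    · exact (hasDerivAt_raySol hα.le hα2 hσ φ lam h).continuousAt.continuousWithinAt
  cont' s hs := by
    rcases (show (0 : ℝ) ≤ s from hs).eq_or_lt with rfl | h
    · rw [← continuousWithinAt_Ioi_iff_Ici]
      have := (tendsto_raySol_zero hα hα2 hσ φ lam).2
      unfold ContinuousWithinAt
      convert this using 2
      simp [raySol']
    · exact (hasDerivAt_raySol' hα.le hα2 hσ φ lam h).continuousAt.continuousWithinAt

lemma isSol_rayY (hα : 0 < α) (hα2 : α ≤ 2) (φ : ℝ) (lam A B : ℂ) :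
    IsSol (rayQ α φ lam) (rayY α φ lam A B) (rayY' α φ lam A B) :=
  ((isSol_raySol hα hα2 zero_le_one φ lam).smul A).add
    ((isSol_raySol hα hα2 le_rfl φ lam).smul B)

lemma rayY_zero (α φ : ℝ) (lam A B : ℂ) : rayY α φ lam A B 0 = A := by simp [rayY, raySol]

lemma rayY'_zero (α φ : ℝ) (lam A B : ℂ) :
    rayY' α φ lam A B 0 = B * Complex.exp (-φ * Complex.I) := by simp [rayY', raySol']

lemma norm_rayY'_zero (α φ : ℝ) (lam A B : ℂ) : ‖rayY' α φ lam A B 0‖ = ‖B‖ := by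
  rw [rayY'_zero, norm_mul, ← Complex.ofReal_neg, Complex.norm_exp_ofReal_mul_I, mul_one]

lemma norm_rayQ_le (α φ : ℝ) (lam : ℂ) {s : ℝ} (hs : 0 ≤ s) :
    ‖rayQ α φ lam s‖ ≤ s ^ α + ‖lam‖ := by
  unfold rayQ
  refine (norm_sub_le _ _).trans ?_
  simp only [norm_mul, Complex.norm_I, ← Complex.ofReal_neg, Complex.norm_exp_ofReal_mul_I,
    Complex.norm_real, Real.norm_eq_abs, abs_of_nonneg (Real.rpow_nonneg hs α), one_mul, mul_one]
  exact le_rfl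

lemma hasDerivAt_rayY_angle (hα : 0 < α) (hα2 : α ≤ 2) (lam A B : ℂ) {s : ℝ} (hs : 0 < s) (φ : ℝ) :
    HasDerivAt (fun φ : ℝ => rayY α φ lam A B s) (-Complex.I * s * rayY' α φ lam A B s) φ ∧
    HasDerivAt (fun φ : ℝ => rayY' α φ lam A B s)
      (-Complex.I * rayY' α φ lam A B s
        - Complex.I * s * (rayQ α φ lam s * rayY α φ lam A B s)) φ := by
  have hlin : HasDerivAt (fun φ : ℝ => (Real.log s : ℂ) - φ * Complex.I) (-Complex.I) φ := by
    have := (((hasDerivAt_id φ).ofReal_comp).mul_const Complex.I).const_sub (Real.log s : ℂ)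
    simpa using this
  have hs' : (s : ℂ) ≠ 0 := by exact_mod_cast hs.ne'
  have h : ∀ σ, σ ≤ 1 → ∀ d, HasDerivAt (fun φ : ℝ => frob α σ d lam (Real.log s - φ * Complex.I))
      (frob α σ (d + 1) lam (Real.log s - φ * Complex.I) * -Complex.I) φ := fun σ hσ d =>
    (hasDerivAt_frob hα.le hα2 hσ d lam (Real.log s - φ * Complex.I)).comp_of_eq φ hlin rfl
  unfold rayY rayY' raySol raySol'
  simp only [hs, if_true]
  constructor
  · refine (((h 0 zero_le_one 0).const_mul A).add ((h 1 le_rfl 0).const_mul B)).congr_deriv ?_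
    field_simp
    ring
  · refine ((((h 0 zero_le_one 1).div_const (s : ℂ)).const_mul A).add
      (((h 1 le_rfl 1).div_const (s : ℂ)).const_mul B)).congr_deriv ?_
    have e0 := frob_ode_ray hα.le hα2 zero_le_one φ lam hs (σ := 0)
    have e1 := frob_ode_ray hα.le hα2 le_rfl φ lam hs (σ := 1)
    simp only [one_add_one_eq_two]
    rw [eq_add_of_sub_eq e0, eq_add_of_sub_eq e1]
    field_simp
    ring

lemma differentiable_raySol_param (hα : 0 < α) (hα2 : α ≤ 2) (hσ : σ ≤ 1) (φ s : ℝ) :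
    Differentiable ℂ (fun lam => raySol α σ φ lam s) := by
  unfold raySol
  by_cases hs : 0 < s
  · simp only [hs, if_true]; exact differentiable_frob_param hα.le hα2 hσ 0 _
  · simp only [hs, if_false]; exact differentiable_const _

lemma differentiable_raySol'_param (hα : 0 < α) (hα2 : α ≤ 2) (hσ : σ ≤ 1) (φ s : ℝ) :
    Differentiable ℂ (fun lam => raySol' α σ φ lam s) := by
  unfold raySol'
  by_cases hs : 0 < s
  · simp only [hs, if_true]; exact (differentiable_frob_param hα.le hα2 hσ 1 _).div_const _
  · simp only [hs, if_false]; exact differentiable_const _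

lemma norm_raySol_le (hα : 0 < α) (hα2 : α ≤ 2) (hσ : σ ≤ 1) (φ : ℝ) (lam : ℂ) {s x : ℝ}
    (hs : 0 ≤ s) (hsx : s ≤ x) :
    ‖raySol α σ φ lam s‖ ≤ (1 + x) * Real.exp (x ^ 2 * (x ^ α + ‖lam‖)) := by
  have hx : 0 ≤ x := hs.trans hsx
  have h1 : 1 ≤ Real.exp (x ^ 2 * (x ^ α + ‖lam‖)) := Real.one_le_exp (by positivity)
  rcases hs.eq_or_lt with rfl | hs
  · have : ‖raySol α σ φ lam 0‖ ≤ 1 := by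
      simp only [raySol, lt_irrefl, if_false]; split_ifs <;> simp
    nlinarith
  · simp only [raySol, hs, if_true]
    have h2 := norm_frob_le hα.le hα2 hσ 0 lam (Real.log s - φ * Complex.I)
    rw [log_ray_re, exp_log_sum hs, mul_comm (σ : ℝ), ← Real.rpow_def_of_pos hs,
      Real.rpow_natCast, pow_zero, pow_zero, one_mul, one_mul] at h2
    refine h2.trans ?_
    have h3 : s ^ σ ≤ 1 + x := by interval_cases σ <;> simp <;> linarith
    gcongr

end rays

/-- Two-sided Gronwall inequality. -/
lemma gronwall_of_abs_deriv_le {f f' : ℝ → ℝ} {κ x z : ℝ} (hxz : x ≤ z)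
    (hc : ContinuousOn f (Icc x z)) (hd : ∀ s ∈ Ioo x z, HasDerivAt f (f' s) s)
    (hf : ∀ s ∈ Ioo x z, |f' s| ≤ κ * f s) :
    f z ≤ Real.exp (κ * (z - x)) * f x ∧ f x ≤ Real.exp (κ * (z - x)) * f z := by
  have h1 := le_of_hasDerivAt_nonneg (f := fun s => -(Real.exp (-κ * s) * f s)) hxz
    (((Continuous.continuousOn (by fun_prop)).mul hc).neg)
    (fun s hs => ((((hasDerivAt_id s).const_mul (-κ)).exp).mul (hd s hs)).neg) (fun s hs => by
      have h := (abs_le.1 (hf s hs)).2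
      have := mul_nonneg (Real.exp_pos (-κ * s)).le (sub_nonneg.2 h)
      simp only [id]
      nlinarith)
  have h2 := le_of_hasDerivAt_nonneg (f := fun s => Real.exp (κ * s) * f s) hxz
    ((Continuous.continuousOn (by fun_prop)).mul hc)
    (fun s hs => (((hasDerivAt_id s).const_mul κ).exp).mul (hd s hs)) (fun s hs => by
      have h := (abs_le.1 (hf s hs)).1
      have := mul_nonneg (Real.exp_pos (κ * s)).le (neg_le_iff_add_nonneg.1 h)
      simp only [id]
      nlinarith)
  constructor
  · have := mul_le_mul_of_nonneg_left (neg_le_neg h1) (Real.exp_pos (κ * z)).le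
    simp only [neg_neg, ← mul_assoc, ← Real.exp_add] at this
    rw [show κ * z + -κ * z = 0 by ring, show κ * z + -κ * x = κ * (z - x) by ring,
      Real.exp_zero, one_mul] at this
    exact this
  · have := mul_le_mul_of_nonneg_left h2 (Real.exp_pos (-κ * x)).le
    simp only [← mul_assoc, ← Real.exp_add] at this
    rw [show -κ * x + κ * z = κ * (z - x) by ring, show -κ * x + κ * x = 0 by ring,
      Real.exp_zero, one_mul] at this
    exact this

/-- The energy `μ² |y|² + |y'|²`. -/
noncomputable def energy (μ : ℝ) (y y' : ℂ) : ℝ := μ ^ 2 * ‖y‖ ^ 2 + ‖y'‖ ^ 2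

lemma energy_nonneg (μ : ℝ) (y y' : ℂ) : 0 ≤ energy μ y y' := by unfold energy; positivity

lemma two_mul_le_energy {μ : ℝ} (y y' : ℂ) :
    2 * (μ * (‖y‖ * ‖y'‖)) ≤ energy μ y y' := by
  unfold energy
  nlinarith [sq_nonneg (μ * ‖y‖ - ‖y'‖)]

lemma IsSol.energy_le {q y y' : ℝ → ℂ} {μ x z : ℝ} (h : IsSol q y y') (hx : 0 ≤ x) (hxz : x ≤ z)
    (hμ : 0 ≤ μ) (hq : ∀ s ∈ Ioo x z, ‖q s‖ ≤ μ ^ 2) :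
    energy μ (y z) (y' z) ≤ Real.exp (2 * μ * (z - x)) * energy μ (y x) (y' x) := by
  have hsub : Icc x z ⊆ Ici 0 := fun s hs => hx.trans hs.1
  refine (gronwall_of_abs_deriv_le (f := fun s => energy μ (y s) (y' s)) hxz
    (((continuousOn_const.mul h.norm_sq_cont).add h.norm_sq_cont').mono hsub)
    (fun s hs => ((hasDerivAt_norm_sq_complex (h.deriv s (hx.trans_lt hs.1))).const_mul (μ ^ 2)).add
      (hasDerivAt_norm_sq_complex (h.deriv' s (hx.trans_lt hs.1)))) ?_).1
  intro s hs
  have h1 : |(y' s * conj (y s)).re| ≤ ‖y s‖ * ‖y' s‖ :=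
    (Complex.abs_re_le_norm _).trans (by simp [mul_comm])
  have h2 : |(q s * y s * conj (y' s)).re| ≤ μ ^ 2 * (‖y s‖ * ‖y' s‖) := by
    refine (Complex.abs_re_le_norm _).trans ?_
    simp only [norm_mul, Complex.norm_conj, mul_assoc]
    gcongr
    exact hq s hs
  have h3 := two_mul_le_energy (μ := μ) (y s) (y' s)
  calc |μ ^ 2 * (2 * (y' s * conj (y s)).re) + 2 * (q s * y s * conj (y' s)).re|
      ≤ |μ ^ 2 * (2 * (y' s * conj (y s)).re)| + |2 * (q s * y s * conj (y' s)).re| :=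
        abs_add_le _ _
    _ = μ ^ 2 * (2 * |(y' s * conj (y s)).re|) + 2 * |(q s * y s * conj (y' s)).re| := by
        rw [abs_mul, abs_mul, abs_mul, abs_two, abs_of_nonneg (sq_nonneg μ)]
    _ ≤ μ ^ 2 * (2 * (‖y s‖ * ‖y' s‖)) + 2 * (μ ^ 2 * (‖y s‖ * ‖y' s‖)) := by gcongr
    _ = 2 * μ * (2 * (μ * (‖y s‖ * ‖y' s‖))) := by ring
    _ ≤ _ := by gcongr

/-- Comparison of a solution on two rays, at equal distance from the origin. -/
lemma energy_arc_le {α μ s : ℝ} (hα : 0 < α) (hα2 : α ≤ 2) {lam : ℂ} (A B : ℂ) (hs : 0 < s)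
    (hμ : 0 ≤ μ) (hq : s ^ α + ‖lam‖ ≤ μ ^ 2) {φ₁ φ₂ : ℝ} (hφ : φ₁ ≤ φ₂) :
    energy μ (rayY α φ₂ lam A B s) (rayY' α φ₂ lam A B s) ≤ Real.exp (2 * s * μ * (φ₂ - φ₁)) *
        energy μ (rayY α φ₁ lam A B s) (rayY' α φ₁ lam A B s) ∧
    energy μ (rayY α φ₁ lam A B s) (rayY' α φ₁ lam A B s) ≤ Real.exp (2 * s * μ * (φ₂ - φ₁)) *
        energy μ (rayY α φ₂ lam A B s) (rayY' α φ₂ lam A B s) := by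
  have hd : ∀ φ : ℝ, HasDerivAt
      (fun φ : ℝ => energy μ (rayY α φ lam A B s) (rayY' α φ lam A B s))
      (μ ^ 2 * (2 * (-Complex.I * s * rayY' α φ lam A B s * conj (rayY α φ lam A B s)).re) +
        2 * ((-Complex.I * rayY' α φ lam A B s
        - Complex.I * s * (rayQ α φ lam s * rayY α φ lam A B s)) *
          conj (rayY' α φ lam A B s)).re) φ := fun φ =>
    ((hasDerivAt_norm_sq_complex (hasDerivAt_rayY_angle hα hα2 lam A B hs φ).1).const_mul
      (μ ^ 2)).add (hasDerivAt_norm_sq_complex (hasDerivAt_rayY_angle hα hα2 lam A B hs φ).2)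
  refine gronwall_of_abs_deriv_le
    (f := fun φ : ℝ => energy μ (rayY α φ lam A B s) (rayY' α φ lam A B s)) hφ
    (fun φ _ => (hd φ).continuousAt.continuousWithinAt) (fun φ _ => hd φ) ?_
  intro φ _
  set y := rayY α φ lam A B s
  set y' := rayY' α φ lam A B s
  set q := rayQ α φ lam s
  have hq' : ‖q‖ ≤ μ ^ 2 := (norm_rayQ_le α φ lam hs.le).trans hq
  have h1 : |(-Complex.I * s * y' * conj y).re| ≤ s * (‖y‖ * ‖y'‖) := by
    refine (Complex.abs_re_le_norm _).trans ?_
    simp [abs_of_pos hs]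
    exact le_of_eq (by ring)
  have e : ((-Complex.I * y' - Complex.I * s * (q * y)) * conj y').re
      = (-Complex.I * s * (q * y) * conj y').re := by
    have : (-Complex.I * y' - Complex.I * s * (q * y)) * conj y' =
        -Complex.I * (y' * conj y') + -Complex.I * s * (q * y) * conj y' := by ring
    rw [this, Complex.mul_conj, Complex.add_re]
    simp
  have h2 : |((-Complex.I * y' - Complex.I * s * (q * y)) * conj y').re|
      ≤ s * (μ ^ 2 * (‖y‖ * ‖y'‖)) := by
    rw [e]
    refine (Complex.abs_re_le_norm _).trans ?_
    simp only [norm_mul, norm_neg, Complex.norm_I, one_mul, Complex.norm_conj, Complex.norm_real,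
      Real.norm_eq_abs, abs_of_pos hs, mul_assoc]
    gcongr
  have h3 := two_mul_le_energy (μ := μ) y y'
  refine (abs_add_le _ _).trans ?_
  rw [abs_mul, abs_mul, abs_mul 2, abs_two, abs_of_nonneg (sq_nonneg μ)]
  calc μ ^ 2 * (2 * |(-Complex.I * s * y' * conj y).re|) +
        2 * |((-Complex.I * y' - Complex.I * s * (q * y)) * conj y').re|
      ≤ μ ^ 2 * (2 * (s * (‖y‖ * ‖y'‖))) + 2 * (s * (μ ^ 2 * (‖y‖ * ‖y'‖))) := by gcongr
    _ = 2 * s * μ * (2 * (μ * (‖y‖ * ‖y'‖))) := by ring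
    _ ≤ _ := by gcongr

/-- The unit complex number `e^{-iχ}`. -/
noncomputable def unitDir (χ : ℝ) : ℂ := Complex.exp (-χ * Complex.I)

lemma norm_unitDir (χ : ℝ) : ‖unitDir χ‖ = 1 := by
  rw [unitDir, ← Complex.ofReal_neg, Complex.norm_exp_ofReal_mul_I]

lemma unitDir_re (χ : ℝ) : (unitDir χ).re = Real.cos χ := by
  rw [unitDir, ← Complex.ofReal_neg, Complex.exp_ofReal_mul_I_re, Real.cos_neg]

lemma unitDir_im (χ : ℝ) : (unitDir χ).im = -Real.sin χ := by
  rw [unitDir, ← Complex.ofReal_neg, Complex.exp_ofReal_mul_I_im, Real.sin_neg]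

lemma unitDir_add (χ ψ : ℝ) : unitDir (χ + ψ) = unitDir χ * unitDir ψ := by
  simp only [unitDir, ← Complex.exp_add]
  push_cast
  ring_nf

lemma rayQ_eq (α φ : ℝ) (lam : ℂ) (s : ℝ) :
    rayQ α φ lam s = Complex.I * unitDir ((2 + α) * φ) * (s ^ α : ℝ) - lam * unitDir (2 * φ) := by
  simp only [rayQ, unitDir]

lemma unitDir_mul_rayQ_re (χ α φ : ℝ) (lam : ℂ) (s : ℝ) :
    (unitDir χ * rayQ α φ lam s).re =
      Real.sin (χ + (2 + α) * φ) * s ^ α - (lam * unitDir (χ + 2 * φ)).re := by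
  rw [rayQ_eq, unitDir_add χ (2 * φ), mul_sub, Complex.sub_re]
  have e1 : unitDir χ * (Complex.I * unitDir ((2 + α) * φ) * (s ^ α : ℝ)) =
      Complex.I * unitDir (χ + (2 + α) * φ) * (s ^ α : ℝ) := by
    rw [unitDir_add]; ring
  rw [e1, Complex.re_mul_ofReal, Complex.I_mul_re, unitDir_im]
  simp only [neg_neg]
  congr 2
  ring

lemma re_mul_unitDir_le (lam : ℂ) (χ : ℝ) : (lam * unitDir χ).re ≤ ‖lam‖ := by
  refine (Complex.re_le_norm _).trans ?_
  rw [norm_mul, norm_unitDir, mul_one]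

lemma seven_tenths_le_cos_pi_div_four : (7 : ℝ) / 10 ≤ Real.cos (Real.pi / 4) := by
  rw [Real.cos_pi_div_four]
  have : (7 : ℝ) / 5 ≤ √2 := Real.le_sqrt_of_sq_le (by norm_num)
  linarith

lemma unitDir_mul_rayQ_re_ge {α φ : ℝ} (hα : 0 < α) (hφ : 0 ≤ φ) (hφ2 : φ ≤ Real.pi / (2 * (2 + α)))
    (lam : ℂ) {s : ℝ} (hs : 0 ≤ s) :
    7 / 10 * s ^ α - ‖lam‖ ≤ (unitDir (Real.pi / 4) * rayQ α φ lam s).re := by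
  rw [unitDir_mul_rayQ_re]
  have h1 := re_mul_unitDir_le lam (Real.pi / 4 + 2 * φ)
  have h2 : (2 + α) * φ ≤ Real.pi / 2 := by
    rw [le_div_iff₀ (by linarith)] at hφ2
    linarith
  have h3 : 0 ≤ (2 + α) * φ := by positivity
  have h4 : (7 : ℝ) / 10 ≤ Real.sin (Real.pi / 4 + (2 + α) * φ) := by
    rw [← Real.cos_pi_div_two_sub, ← Real.cos_abs]
    refine seven_tenths_le_cos_pi_div_four.trans ?_
    have hpi := Real.pi_pos
    refine Real.cos_le_cos_of_nonneg_of_le_pi (abs_nonneg _) (by linarith) ?_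
    rw [abs_le]
    constructor <;> linarith
  have h5 : 7 / 10 * s ^ α ≤ Real.sin (Real.pi / 4 + (2 + α) * φ) * s ^ α := by
    gcongr
  linarith

lemma seven_tenths_le_unitDir_re : (7 : ℝ) / 10 ≤ (unitDir (Real.pi / 4)).re := by
  rw [unitDir_re]; exact seven_tenths_le_cos_pi_div_four

lemma rpow_le_one_add_sq {α s : ℝ} (hα : 0 ≤ α) (hα2 : α ≤ 2) (hs : 0 ≤ s) :
    s ^ α ≤ (1 + s) ^ 2 := by
  calc s ^ α ≤ (1 + s) ^ α := Real.rpow_le_rpow hs (by linarith) hα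
    _ ≤ (1 + s) ^ (2 : ℝ) := Real.rpow_le_rpow_of_exponent_le (by linarith) hα2
    _ = (1 + s) ^ 2 := by norm_num

lemma norm_rayQ_le_sq {α : ℝ} (hα : 0 ≤ α) (hα2 : α ≤ 2) (φ : ℝ) (lam : ℂ) {s : ℝ} (hs : 0 ≤ s) :
    ‖rayQ α φ lam s‖ ≤ (1 + ‖lam‖) * (1 + s) ^ 2 := by
  refine (norm_rayQ_le α φ lam hs).trans ?_
  have h1 := rpow_le_one_add_sq hα hα2 hs
  have h2 : 1 ≤ (1 + s) ^ 2 := one_le_pow₀ (by linarith)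
  nlinarith [norm_nonneg lam]

lemma unitDir_mul_rayQ_re_ge_half {α φ : ℝ} (hα : 0 < α) (hφ : 0 ≤ φ)
    (hφ2 : φ ≤ Real.pi / (2 * (2 + α))) {lam : ℂ} {x s : ℝ} (hx : 0 ≤ x) (hxs : x ≤ s)
    (hlam : 5 * ‖lam‖ ≤ x ^ α) : x ^ α / 2 ≤ (unitDir (Real.pi / 4) * rayQ α φ lam s).re := by
  have h1 := unitDir_mul_rayQ_re_ge hα hφ hφ2 lam (hx.trans hxs)
  have h2 : x ^ α ≤ s ^ α := Real.rpow_le_rpow hx hxs hα.le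
  linarith [norm_nonneg lam]

/-- Along a ray in the sector of decay, a decaying solution is superexponentially small. -/
lemma energy_le_of_decays {α φ : ℝ} (hα : 0 < α) (hα2 : α ≤ 2) (hφ : 0 ≤ φ)
    (hφ2 : φ ≤ Real.pi / (2 * (2 + α))) {lam A B : ℂ}
    (hd : Decays (rayY α φ lam A B) (rayY' α φ lam A B)) {x : ℝ} (hx : 1 ≤ x)
    (hlam : 5 * ‖lam‖ ≤ x ^ α) {s : ℝ} (hs : 2 * x ≤ s) :
    energy (2 * s ^ (α / 2)) (rayY α φ lam A B s) (rayY' α φ lam A B s) ≤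
      36 * s ^ 2 * (Real.exp (-(s * s ^ (α / 2) / 4)) *
        -flux (unitDir (Real.pi / 4)) (rayY α φ lam A B) (rayY' α φ lam A B) x) := by
  have hsol := isSol_rayY hα hα2 φ lam A B
  set y := rayY α φ lam A B
  set y' := rayY' α φ lam A B
  set g := unitDir (Real.pi / 4)
  have hg : ‖g‖ ≤ 1 := (norm_unitDir _).le
  have ha : (1 / 2 : ℝ) ≤ g.re := by
    have := seven_tenths_le_unitDir_re
    change 7 / 10 ≤ g.re at this; linarith
  have hs1 : 1 ≤ s := by linarith
  have hs0 : 0 < s := by linarith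
  have hlow : ∀ x', x ≤ x' → ∀ s', x' ≤ s' → x' ^ α / 2 ≤ (g * rayQ α φ lam s').re := by
    intro x' hx' s' hs'
    refine unitDir_mul_rayQ_re_ge_half hα hφ hφ2 (by linarith) hs' (hlam.trans ?_)
    exact Real.rpow_le_rpow (by linarith) hx' hα.le
  have hone : ∀ x', x ≤ x' → 1 ≤ x' ^ α := fun x' h => Real.one_le_rpow (by linarith) hα.le
  have hpos : ∀ s', x < s' → 0 ≤ (g * rayQ α φ lam s').re := by
    intro s' hs'
    have h1 := hlow s' hs'.le s' le_rfl
    have h2 := hone s' hs'.le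
    linarith
  have hneg : ∀ s', x ≤ s' → flux g y y' s' ≤ 0 := fun s' hs' =>
    hsol.flux_nonpos hd (by linarith) (by linarith) fun t ht => hpos t (by linarith)
  have hJ : flux g y y' x ≤ flux g y y' (s / 2) :=
    hsol.flux_mono (by linarith) (by linarith) (by linarith) fun t ht _ => hpos t ht
  have hexp : Real.exp (s * s ^ (α / 2) / 4) * -flux g y y' s ≤ -flux g y y' x := by
    have hc : ((s / 2) ^ (α / 2) / 2) ^ 2 ≤ 1 / 2 * ((s / 2) ^ α / 2) := by
      have : ((s / 2) ^ (α / 2)) ^ 2 = (s / 2) ^ α := by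
        rw [← Real.rpow_natCast, ← Real.rpow_mul (by positivity)]; congr 1; push_cast; ring
      rw [div_pow, this]; apply le_of_eq; ring
    have h1 := hsol.exp_mul_flux_mono (x := s / 2) (z := s) (by linarith) (by linarith) hg ha
      (by norm_num) (by positivity) (fun t ht _ => hlow (s / 2) (by linarith) t ht.le) hc
    set c := (s / 2) ^ (α / 2) / 2
    have h2 : Real.exp (2 * c * (s / 2)) * -flux g y y' s ≤ -flux g y y' (s / 2) := by
      have h3 : Real.exp (2 * c * s) = Real.exp (2 * c * (s / 2)) * Real.exp (2 * c * (s / 2)) := by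
        rw [← Real.exp_add]; ring_nf
      rw [h3, mul_assoc (Real.exp (2 * c * (s / 2))) (Real.exp _)] at h1
      have := le_of_mul_le_mul_left h1 (Real.exp_pos _)
      linarith
    have h4 : s * s ^ (α / 2) / 4 ≤ 2 * c * (s / 2) := by
      have h5 : s ^ (α / 2) / 2 ≤ (s / 2) ^ (α / 2) := by
        rw [Real.div_rpow hs0.le (by norm_num)]
        apply div_le_div_of_nonneg_left (by positivity) (by positivity)
        calc (2 : ℝ) ^ (α / 2) ≤ 2 ^ (1 : ℝ) :=
              Real.rpow_le_rpow_of_exponent_le (by norm_num) (by linarith)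
          _ = 2 := by norm_num
      have : 2 * c * (s / 2) = s * ((s / 2) ^ (α / 2)) / 2 := by simp only [c]; ring
      rw [this]
      nlinarith
    have h6 : 0 ≤ -flux g y y' s := by linarith [hneg s (by linarith)]
    calc _ ≤ Real.exp (2 * c * (s / 2)) * -flux g y y' s := by gcongr
      _ ≤ _ := by linarith
  have hJs : -flux g y y' s ≤ Real.exp (-(s * s ^ (α / 2) / 4)) * -flux g y y' x := by
    rw [Real.exp_neg, ← div_eq_inv_mul, le_div_iff₀ (Real.exp_pos _)]; linarith
  have hJ1 := hneg (s + 1) (by linarith)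
  have hb : ∀ t, s < t → t < s + 1 → (1 / 2 : ℝ) ≤ (g * rayQ α φ lam t).re := by
    intro t ht _
    have h1 := hlow s (by linarith) t ht.le
    have h2 := hone s (by linarith)
    linarith
  have hsq : ‖y s‖ ^ 2 ≤ 6 * -flux g y y' s := by
    have := hsol.sq_le_right (x := s) hs0.le (by norm_num) (by norm_num) ha hb
    norm_num at this
    linarith
  have hsq' : ‖y' s‖ ^ 2 ≤ 12 * s ^ 2 * -flux g y y' s := by
    have hM : ∀ t, s < t → t < s + 1 → ‖rayQ α φ lam t‖ ≤ 5 * s ^ 2 := by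
      intro t ht ht1
      have h1 := norm_rayQ_le α φ lam (s := t) (by linarith)
      have h2 : x ^ α ≤ t ^ α := Real.rpow_le_rpow (by linarith) (by linarith) hα.le
      have h3 : t ^ α ≤ t ^ (2 : ℝ) := Real.rpow_le_rpow_of_exponent_le (by linarith) hα2
      rw [Real.rpow_two] at h3
      nlinarith
    have hs2 : 1 ≤ s ^ 2 := one_le_pow₀ hs1
    have := hsol.sq_deriv_le_right (x := s) (ℓ := 1) (ρ := 1) (K := 12 * s ^ 2) hs0.le one_pos
      one_pos ha hb hM (by positivity) (by norm_num; linarith) (by norm_num; linarith)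
    nlinarith
  have hJ0 : 0 ≤ -flux g y y' s := by linarith [hneg s (by linarith)]
  have hsα : (2 * s ^ (α / 2)) ^ 2 ≤ 4 * s ^ 2 := by
    have h1 : s ^ (α / 2) ≤ s := by
      calc s ^ (α / 2) ≤ s ^ (1 : ℝ) := Real.rpow_le_rpow_of_exponent_le hs1 (by linarith)
        _ = s := Real.rpow_one s
    have h0 : 0 ≤ s ^ (α / 2) := by positivity
    nlinarith
  calc energy (2 * s ^ (α / 2)) (y s) (y' s)
      ≤ 4 * s ^ 2 * (6 * -flux g y y' s) + 12 * s ^ 2 * -flux g y y' s := by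
        unfold energy; gcongr
    _ = 36 * s ^ 2 * -flux g y y' s := by ring
    _ ≤ _ := by gcongr

lemma decays_of_decays_near {α φ₁ φ₂ : ℝ} (hα : 0 < α) (hα2 : α ≤ 2) (hφ : 0 ≤ φ₁)
    (hφ2 : φ₁ ≤ Real.pi / (2 * (2 + α))) (hφ12 : |φ₂ - φ₁| ≤ 1 / 20) {lam A B : ℂ}
    (hd : Decays (rayY α φ₁ lam A B) (rayY' α φ₁ lam A B)) :
    Decays (rayY α φ₂ lam A B) (rayY' α φ₂ lam A B) := by
  obtain ⟨x, hx1, hx2⟩ : ∃ x : ℝ, 1 ≤ x ∧ 5 * ‖lam‖ ≤ x ^ α := by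
    have := (tendsto_rpow_atTop hα).eventually_ge_atTop (5 * ‖lam‖)
    obtain ⟨x, h1, h2⟩ := (this.and (eventually_ge_atTop 1)).exists
    exact ⟨x, h2, h1⟩
  set J := -flux (unitDir (Real.pi / 4)) (rayY α φ₁ lam A B) (rayY' α φ₁ lam A B) x with hJ
  have hJ0 : 0 ≤ J := by
    have := (isSol_rayY hα hα2 φ₁ lam A B).flux_nonpos hd (x := x) (by linarith)
      (g := unitDir (Real.pi / 4)) (by linarith [seven_tenths_le_unitDir_re]) fun t ht => by
        have h1 := unitDir_mul_rayQ_re_ge_half hα hφ hφ2 (by linarith) ht.le hx2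
        have : 0 ≤ x ^ α := by positivity
        linarith
    linarith
  have key : ∀ s, 2 * x ≤ s → energy (2 * s ^ (α / 2)) (rayY α φ₂ lam A B s)
      (rayY' α φ₂ lam A B s) ≤ 36 * J * (s ^ 2 * Real.exp (-(1 / 20) * s)) := by
    intro s hs
    have h1 := energy_le_of_decays hα hα2 hφ hφ2 hd hx1 hx2 hs
    rw [← hJ] at h1
    have hs0 : 0 < s := by linarith
    have hsq : (s ^ (α / 2)) ^ 2 = s ^ α := by
      rw [← Real.rpow_natCast, ← Real.rpow_mul hs0.le]; congr 1; push_cast; ring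
    have hq : s ^ α + ‖lam‖ ≤ (2 * s ^ (α / 2)) ^ 2 := by
      have : x ^ α ≤ s ^ α := Real.rpow_le_rpow (by linarith) (by linarith) hα.le
      rw [mul_pow, hsq]; linarith [norm_nonneg lam]
    have h2 : energy (2 * s ^ (α / 2)) (rayY α φ₂ lam A B s) (rayY' α φ₂ lam A B s) ≤
        Real.exp (2 * s * (2 * s ^ (α / 2)) * |φ₂ - φ₁|) *
          energy (2 * s ^ (α / 2)) (rayY α φ₁ lam A B s) (rayY' α φ₁ lam A B s) := by
      rcases le_total φ₁ φ₂ with h | h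
      · rw [abs_of_nonneg (by linarith)]
        exact (energy_arc_le hα hα2 A B hs0 (by positivity) hq h).1
      · rw [abs_of_nonpos (by linarith), neg_sub]
        exact (energy_arc_le hα hα2 A B hs0 (by positivity) hq h).2
    have hE : 1 ≤ s ^ (α / 2) := Real.one_le_rpow (by linarith) (by linarith)
    calc _ ≤ _ := h2
      _ ≤ Real.exp (2 * s * (2 * s ^ (α / 2)) * (1 / 20)) *
          (36 * s ^ 2 * (Real.exp (-(s * s ^ (α / 2) / 4)) * J)) := by
          gcongr
          exact energy_nonneg _ _ _
      _ = 36 * J * (s ^ 2 * Real.exp (-(1 / 20) * (s * s ^ (α / 2)))) := by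
          have : Real.exp (-(1 / 20) * (s * s ^ (α / 2))) =
            Real.exp (2 * s * (2 * s ^ (α / 2)) * (1 / 20)) *
              Real.exp (-(s * s ^ (α / 2) / 4)) := by rw [← Real.exp_add]; ring_nf
          rw [this]; ring
      _ ≤ _ := by
          gcongr ?_ * (_ * Real.exp ?_)
          nlinarith
  have hlim : Tendsto (fun s : ℝ => 36 * J * (s ^ 2 * Real.exp (-(1 / 20) * s))) atTop (𝓝 0) := by
    have := (tendsto_rpow_mul_exp_neg_mul_atTop_nhds_zero 2 (1 / 20) (by norm_num)).const_mul
      (36 * J)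
    simpa [Real.rpow_two] using this
  have hfin : ∀ f : ℝ → ℂ, (∀ s, 2 * x ≤ s → ‖f s‖ ^ 2 ≤ energy (2 * s ^ (α / 2))
      (rayY α φ₂ lam A B s) (rayY' α φ₂ lam A B s)) → Tendsto f atTop (𝓝 0) := by
    intro f hf
    rw [tendsto_zero_iff_norm_tendsto_zero]
    have h1 : Tendsto (fun s => ‖f s‖ ^ 2) atTop (𝓝 0) := by
      refine squeeze_zero' (Eventually.of_forall fun s => by positivity) ?_ hlim
      filter_upwards [eventually_ge_atTop (2 * x)] with s hs using (hf s hs).trans (key s hs)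
    have h2 := h1.sqrt
    simpa using h2
  constructor
  · refine hfin _ fun s hs => ?_
    have hE : 1 ≤ s ^ (α / 2) := Real.one_le_rpow (by linarith) (by linarith)
    have : 1 ≤ (2 * s ^ (α / 2)) ^ 2 := one_le_pow₀ (by linarith)
    unfold energy
    nlinarith [sq_nonneg ‖rayY α φ₂ lam A B s‖, sq_nonneg ‖rayY' α φ₂ lam A B s‖]
  · refine hfin _ fun s hs => ?_
    unfold energy
    nlinarith [sq_nonneg (2 * s ^ (α / 2) * ‖rayY α φ₂ lam A B s‖)]

/-- A solution decaying on the positive half line decays on every ray of the sector. -/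
lemma decays_ray {α φ : ℝ} (hα : 0 < α) (hα2 : α ≤ 2) (hφ : 0 ≤ φ)
    (hφ2 : φ ≤ Real.pi / (2 * (2 + α))) {lam A B : ℂ}
    (hd : Decays (rayY α 0 lam A B) (rayY' α 0 lam A B)) :
    Decays (rayY α φ lam A B) (rayY' α φ lam A B) := by
  have hstep : ∀ n : ℕ, ∀ ψ : ℝ, 0 ≤ ψ → ψ ≤ n / 20 → ψ ≤ Real.pi / (2 * (2 + α)) →
      Decays (rayY α ψ lam A B) (rayY' α ψ lam A B) := by
    intro n
    induction n with
    | zero =>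
      intro ψ h0 h1 _
      have : ψ = 0 := by norm_num at h1; linarith
      rwa [this]
    | succ n ih =>
      intro ψ h0 h1 h2
      push_cast at h1
      rcases le_total ψ (1 / 20) with h | h
      · exact decays_of_decays_near hα hα2 le_rfl (h0.trans h2)
          (by rw [sub_zero, abs_of_nonneg h0]; exact h) hd
      · refine decays_of_decays_near hα hα2 (φ₁ := ψ - 1 / 20) (by linarith) (by linarith)
          (by norm_num) (ih _ (by linarith) (by linarith) (by linarith))
  obtain ⟨n, hn⟩ := exists_nat_ge (φ * 20)
  exact hstep n φ hφ (by linarith) hφ2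

lemma rayY_add_mul (α φ : ℝ) (lam A B A₁ B₁ m : ℂ) (s : ℝ) :
    rayY α φ lam A B s + m * rayY α φ lam A₁ B₁ s = rayY α φ lam (A + m * A₁) (B + m * B₁) s := by
  simp only [rayY]; ring

lemma rayY'_add_mul (α φ : ℝ) (lam A B A₁ B₁ m : ℂ) (s : ℝ) :
    rayY' α φ lam A B s + m * rayY' α φ lam A₁ B₁ s =
      rayY' α φ lam (A + m * A₁) (B + m * B₁) s := by
  simp only [rayY']; ring

lemma raySol_wronskian {α : ℝ} (hα : 0 < α) (hα2 : α ≤ 2) (lam : ℂ) {x : ℝ} (hx : 0 ≤ x) :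
    raySol α 0 0 lam x * raySol' α 1 0 lam x - raySol' α 0 0 lam x * raySol α 1 0 lam x = 1 := by
  rw [(isSol_raySol hα hα2 zero_le_one 0 lam).wronskian_const
    (isSol_raySol hα hα2 le_rfl 0 lam) hx]
  simp [raySol', raySol]

/-- Holomorphic families `(A, B)` of initial data whose solution is recessive at infinity. -/
structure DecayFamily (α Λ : ℝ) (A B : ℂ → ℂ) (T : ℕ → ℝ) : Prop where
  diffA : DifferentiableOn ℂ A (Metric.ball 0 Λ)
  diffB : DifferentiableOn ℂ B (Metric.ball 0 Λ)
  ne : ∀ lam ∈ Metric.ball (0 : ℂ) Λ, A lam ≠ 0 ∨ B lam ≠ 0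
  decays : ∀ lam ∈ Metric.ball (0 : ℂ) Λ,
    Decays (rayY α 0 lam (A lam) (B lam)) (rayY' α 0 lam (A lam) (B lam))
  lim : Tendsto T atTop (𝓝 0)
  tail : ∀ᶠ n : ℕ in atTop, ∀ lam ∈ Metric.ball (0 : ℂ) Λ,
    IntegrableOn (fun s => ‖rayY α 0 lam (A lam) (B lam) s‖ ^ 2) (Ioi (n : ℝ)) ∧
      ∫ s in Ioi (n : ℝ), ‖rayY α 0 lam (A lam) (B lam) s‖ ^ 2 ≤ T n

lemma exists_decayFamily {α : ℝ} (hα : 0 < α) (hα2 : α ≤ 2) {Λ : ℝ} (hΛ : 0 ≤ Λ) :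
    ∃ A B T, DecayFamily α Λ A B T := by
  obtain ⟨s₀, hs1, hs2⟩ : ∃ x : ℝ, 1 ≤ x ∧ (1 + Λ) * (10 / 7) ≤ x ^ α := by
    have := (tendsto_rpow_atTop hα).eventually_ge_atTop ((1 + Λ) * (10 / 7))
    obtain ⟨x, h1, h2⟩ := (this.and (eventually_ge_atTop 1)).exists
    exact ⟨x, h2, h1⟩
  have hs0 : 0 ≤ s₀ := by linarith
  set g := unitDir (Real.pi / 4) with hg
  have hg1 : ‖g‖ ≤ 1 := (norm_unitDir _).le
  have ha : (1 / 2 : ℝ) ≤ g.re := by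
    have := seven_tenths_le_unitDir_re
    change 7 / 10 ≤ g.re at this; linarith
  have hball : ∀ {lam : ℂ}, lam ∈ Metric.ball (0 : ℂ) Λ → ‖lam‖ ≤ Λ := fun h =>
    (mem_ball_zero_iff.1 h).le
  have hβ : (0 : ℝ) ≤ Real.pi / (2 * (2 + α)) := by positivity
  have hbx : ∀ lam ∈ Metric.ball (0 : ℂ) Λ, ∀ x s, 0 ≤ x → x < s →
      7 / 10 * x ^ α - Λ ≤ (g * rayQ α 0 lam s).re := by
    intro lam hlam x s hx hxs
    have h1 := unitDir_mul_rayQ_re_ge hα le_rfl hβ lam (hx.trans hxs.le)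
    have h2 : x ^ α ≤ s ^ α := Real.rpow_le_rpow hx hxs.le hα.le
    have := hball hlam
    linarith
  have hb : ∀ lam ∈ Metric.ball (0 : ℂ) Λ, ∀ s, s₀ < s → 1 ≤ (g * rayQ α 0 lam s).re := by
    intro lam hlam s hs
    have := hbx lam hlam s₀ s hs0 hs
    linarith
  set M := (s₀ + 1) ^ α + Λ with hM
  have hM0 : 0 ≤ M := by positivity
  set v := fun lam => rayY α 0 lam (raySol' α 1 0 lam s₀) (-raySol' α 0 0 lam s₀)
  set v' := fun lam => rayY' α 0 lam (raySol' α 1 0 lam s₀) (-raySol' α 0 0 lam s₀)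
  set u := fun lam => rayY α 0 lam (-raySol α 1 0 lam s₀) (raySol α 0 0 lam s₀)
  set u' := fun lam => rayY' α 0 lam (-raySol α 1 0 lam s₀) (raySol α 0 0 lam s₀)
  have hW := fun lam => raySol_wronskian hα hα2 lam hs0
  have hex : ∀ lam, ∃ m : ℂ, lam ∈ Metric.ball (0 : ℂ) Λ → ‖m‖ ≤ 2 * (1 + M) ∧
      Decays (fun s => v lam s + m * u lam s) (fun s => v' lam s + m * u' lam s) ∧
      ∀ k : ℕ, u lam (s₀ + 1 + k) ≠ 0 ∧ ‖-(v lam (s₀ + 1 + k) / u lam (s₀ + 1 + k)) - m‖ ≤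
        2 * (2 * (1 + M)) / √(1 + 2 * (1 / 2) * k) := by
    intro lam
    by_cases hlam : lam ∈ Metric.ball (0 : ℂ) Λ
    · obtain ⟨m, hm⟩ := IsSol.exists_decays (a := 1 / 2) (b := 1) (c := 1 / 2) (K := 2 * (1 + M))
        (M := M) (P := 1 + ‖lam‖)
        (isSol_rayY hα hα2 0 lam (raySol' α 1 0 lam s₀) (-raySol' α 0 0 lam s₀))
        (isSol_rayY hα hα2 0 lam (-raySol α 1 0 lam s₀) (raySol α 0 0 lam s₀)) hs0
        (by rw [← hW lam]; simp only [rayY]; ring) (by simp only [rayY']; ring)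
        (by simp only [rayY]; ring) (by rw [← hW lam]; simp only [rayY']; ring) hg1 ha
        (by norm_num) one_pos (by norm_num) (by norm_num) (hb lam hlam) (by positivity)
        (fun s hs => norm_rayQ_le_sq hα.le hα2 0 lam (by linarith))
        (fun s hs hs1 => (norm_rayQ_le α 0 lam (by linarith)).trans
          (add_le_add (Real.rpow_le_rpow (by linarith) hs1.le hα.le) (hball hlam)))
        (by positivity) (by linarith) (by linarith)
      exact ⟨m, fun _ => hm⟩
    · exact ⟨0, fun h => absurd h hlam⟩
  choose m hm using hex
  have hmdiff : DifferentiableOn ℂ m (Metric.ball 0 Λ) := by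
    have hunif : TendstoUniformlyOn
        (fun (k : ℕ) lam => -(v lam (s₀ + 1 + k) / u lam (s₀ + 1 + k))) m atTop
        (Metric.ball 0 Λ) := by
      rw [Metric.tendstoUniformlyOn_iff]
      intro ε hε
      have hlim : Tendsto (fun k : ℕ => 2 * (2 * (1 + M)) / √(1 + 2 * (1 / 2) * k)) atTop (𝓝 0) := by
        refine Tendsto.div_atTop tendsto_const_nhds ?_
        refine Real.tendsto_sqrt_atTop.comp (tendsto_atTop_add_const_left _ _ ?_)
        exact Tendsto.const_mul_atTop (by norm_num) tendsto_natCast_atTop_atTop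
      filter_upwards [hlim.eventually_lt_const hε] with k hk lam hlam
      rw [dist_comm, dist_eq_norm]
      exact (((hm lam hlam).2.2 k).2).trans_lt hk
    refine hunif.tendstoLocallyUniformlyOn.differentiableOn (Eventually.of_forall fun k => ?_)
      Metric.isOpen_ball
    refine DifferentiableOn.neg (DifferentiableOn.div ?_ ?_ fun lam hlam =>
      ((hm lam hlam).2.2 k).1)
    · refine Differentiable.differentiableOn ?_
      exact ((differentiable_raySol'_param hα hα2 le_rfl 0 s₀).mul
        (differentiable_raySol_param hα hα2 zero_le_one 0 _)).add
        ((differentiable_raySol'_param hα hα2 zero_le_one 0 s₀).neg.mul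
        (differentiable_raySol_param hα hα2 le_rfl 0 _))
    · refine Differentiable.differentiableOn ?_
      exact ((differentiable_raySol_param hα hα2 le_rfl 0 s₀).neg.mul
        (differentiable_raySol_param hα hα2 zero_le_one 0 _)).add
        ((differentiable_raySol_param hα hα2 zero_le_one 0 s₀).mul
        (differentiable_raySol_param hα hα2 le_rfl 0 _))
  set A := fun lam => raySol' α 1 0 lam s₀ + m lam * -raySol α 1 0 lam s₀ with hA
  set B := fun lam => -raySol' α 0 0 lam s₀ + m lam * raySol α 0 0 lam s₀ with hB
  have hY0 : ∀ lam, rayY α 0 lam (A lam) (B lam) s₀ = 1 := by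
    intro lam; rw [← hW lam]; simp only [rayY, hA, hB]; ring
  have hY0' : ∀ lam, rayY' α 0 lam (A lam) (B lam) s₀ = m lam := by
    intro lam
    calc _ = m lam * (raySol α 0 0 lam s₀ * raySol' α 1 0 lam s₀
          - raySol' α 0 0 lam s₀ * raySol α 1 0 lam s₀) := by simp only [rayY', hA, hB]; ring
      _ = _ := by rw [hW lam, mul_one]
  have hdec : ∀ lam ∈ Metric.ball (0 : ℂ) Λ,
      Decays (rayY α 0 lam (A lam) (B lam)) (rayY' α 0 lam (A lam) (B lam)) := by
    intro lam hlam
    have := (hm lam hlam).2.1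
    simp only [v, u, v', u', rayY_add_mul, rayY'_add_mul] at this
    exact this
  refine ⟨A, B, fun n => 2 * (1 + M) / (7 / 10 * (n : ℝ) ^ α - Λ), ?_, ?_, ?_, hdec, ?_, ?_⟩
  · exact (differentiable_raySol'_param hα hα2 le_rfl 0 s₀).differentiableOn.add
      (hmdiff.mul (differentiable_raySol_param hα hα2 le_rfl 0 s₀).neg.differentiableOn)
  · exact (differentiable_raySol'_param hα hα2 zero_le_one 0 s₀).neg.differentiableOn.add
      (hmdiff.mul (differentiable_raySol_param hα hα2 zero_le_one 0 s₀).differentiableOn)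
  · intro lam _
    by_contra! h
    have := hY0 lam
    rw [h.1, h.2] at this
    simp [rayY] at this
  · refine Tendsto.div_atTop tendsto_const_nhds ?_
    refine tendsto_atTop_add_const_right _ _ (Tendsto.const_mul_atTop (by norm_num) ?_)
    exact (tendsto_rpow_atTop hα).comp tendsto_natCast_atTop_atTop
  · filter_upwards [eventually_ge_atTop ⌈s₀⌉₊] with n hn lam hlam
    have hn' : s₀ ≤ n := Nat.ceil_le.1 hn
    have hnα : s₀ ^ α ≤ (n : ℝ) ^ α := Real.rpow_le_rpow hs0 hn' hα.le
    have hb0 : 0 < 7 / 10 * (n : ℝ) ^ α - Λ := by linarith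
    have hsol := isSol_rayY hα hα2 0 lam (A lam) (B lam)
    have h := hsol.integral_norm_sq_le_of_decays (hdec lam hlam) (x := n) (g := g) (by positivity)
      hb0 (by linarith) (fun s hs => hbx lam hlam n s (by positivity) hs)
    refine ⟨h.1, h.2.trans ?_⟩
    gcongr
    have h1 := hsol.flux_mono (g := g) hs0 hn' (by linarith)
      (fun s hs _ => by linarith [hb lam hlam s hs])
    have h2 := abs_flux_le g (rayY α 0 lam (A lam) (B lam)) (rayY' α 0 lam (A lam) (B lam)) s₀
    rw [hY0, hY0', norm_one, mul_one, hg, norm_unitDir, one_mul, ← hg] at h2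
    have := (hm lam hlam).1
    linarith [neg_abs_le (flux g (rayY α 0 lam (A lam) (B lam)) (rayY' α 0 lam (A lam) (B lam)) s₀)]

lemma polar_mul_unitDir_re (r θ χ : ℝ) :
    ((r : ℂ) * unitDir (-θ) * unitDir χ).re = r * Real.cos (χ - θ) := by
  rw [mul_assoc, ← unitDir_add, Complex.re_ofReal_mul, unitDir_re]
  congr 2; ring

lemma norm_polar {r : ℝ} (hr : 0 ≤ r) (θ : ℝ) : ‖(r : ℂ) * unitDir (-θ)‖ = r := by
  rw [norm_mul, norm_unitDir, mul_one, Complex.norm_real, Real.norm_of_nonneg hr]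

lemma norm_rayQ_le_two_mul {α φ s R : ℝ} (hα : 0 < α) {lam : ℂ} (hs : 0 ≤ s) (hs1 : s ≤ 1)
    (hR : 1 ≤ R) (hlam : ‖lam‖ ≤ R) : ‖rayQ α φ lam s‖ ≤ 2 * R := by
  have h1 := norm_rayQ_le α φ lam hs
  have h2 : s ^ α ≤ 1 := Real.rpow_le_one hs hs1 hα.le
  linarith

lemma inv_sqrt_le_one {r : ℝ} (hr : 1 ≤ r) : 1 / √r ≤ 1 := by
  rw [div_le_one (by positivity)]
  exact Real.one_le_sqrt.2 hr

/-- Bounds for the recessive solution when `λ` lies in the cone where the rotated numerical range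
is separated from `λ`. -/
lemma cone_bounds {α χ κ : ℝ} (hα : 0 < α) (hα2 : α ≤ 2) {lam A B : ℂ}
    (hd : Decays (rayY α 0 lam A B) (rayY' α 0 lam A B)) (hr : 1 ≤ ‖lam‖) (hκ : 0 < κ)
    (hcos : κ ≤ Real.cos χ) (hsin : 0 ≤ Real.sin χ)
    (hsep : κ * ‖lam‖ ≤ -(lam * unitDir χ).re) :
    ‖B‖ ≤ 3 * √‖lam‖ / κ * ‖A‖ ∧ IntegrableOn (fun s => ‖rayY α 0 lam A B s‖ ^ 2) (Ioi 0) ∧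
      ∫ s in Ioi (0 : ℝ), ‖rayY α 0 lam A B s‖ ^ 2 ≤ 3 / κ ^ 2 / √‖lam‖ * ‖A‖ ^ 2 := by
  have hsol := isSol_rayY hα hα2 0 lam A B
  set r := ‖lam‖
  have hr0 : 0 < r := by linarith
  have hq0 : 0 < √r := Real.sqrt_pos.2 hr0
  have hq2 : √r * √r = r := Real.mul_self_sqrt hr0.le
  have ha : κ ≤ (unitDir χ).re := by rwa [unitDir_re]
  have hb : ∀ s : ℝ, 0 < s → κ * r ≤ (unitDir χ * rayQ α 0 lam s).re := by
    intro s hs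
    rw [unitDir_mul_rayQ_re]
    simp only [mul_zero, add_zero]
    have : 0 ≤ Real.sin χ * s ^ α := by positivity
    linarith
  have hB : ‖B‖ ≤ 3 * √r / κ * ‖A‖ := by
    have := hsol.norm_deriv_le_of_decays hd le_rfl (ℓ := 1 / √r) (ρ := √r) (M := 2 * r)
      (K := 3 * √r / κ) (by positivity) hq0 hκ.le (by positivity) ha hb
      (fun s hs hs1 => norm_rayQ_le_two_mul hα hs.le
        (by linarith [inv_sqrt_le_one hr]) hr le_rfl)
      (by positivity)
      (by
        have : 2 * r / √r = 2 * √r := by field_simp; linarith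
        rw [this]; field_simp; norm_num)
      (by
        have : 3 * √r / κ * (κ * r) = 3 * (r * √r) := by field_simp
        rw [this]; nlinarith [mul_pos hr0 hq0])
    rwa [norm_rayY'_zero, rayY_zero, norm_unitDir, mul_one] at this
  refine ⟨hB, ?_⟩
  have h := hsol.integral_norm_sq_le_of_decays hd le_rfl (g := unitDir χ) (b := κ * r)
    (by positivity) (hκ.le.trans ha) hb
  refine ⟨h.1, h.2.trans ?_⟩
  have h1 := abs_flux_le (unitDir χ) (rayY α 0 lam A B) (rayY' α 0 lam A B) 0
  rw [norm_rayY'_zero, rayY_zero, norm_unitDir, one_mul] at h1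
  have h2 := neg_abs_le (flux (unitDir χ) (rayY α 0 lam A B) (rayY' α 0 lam A B) 0)
  have h3 : ‖B‖ * ‖A‖ ≤ 3 * √r / κ * ‖A‖ * ‖A‖ := by gcongr
  rw [div_le_iff₀ (by positivity)]
  have h4 : 3 / κ ^ 2 / √r * ‖A‖ ^ 2 * (κ * r) = 3 * √r / κ * ‖A‖ * ‖A‖ := by
    field_simp
    rw [Real.sq_sqrt hr0.le]; ring
  linarith

/-- Bound for the `L²` norm of a recessive solution beyond the turning point. -/
lemma tail_bound {α R S μ : ℝ} (hα : 0 < α) (hα2 : α ≤ 2) {lam A B : ℂ}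
    (hd : Decays (rayY α 0 lam A B) (rayY' α 0 lam A B)) (hR : 1 ≤ R) (hlam : ‖lam‖ ≤ R)
    (hS : 0 ≤ S) (hSα : S ^ α = 2 * R) (hμ : 1 ≤ μ) :
    IntegrableOn (fun s => ‖rayY α 0 lam A B s‖ ^ 2) (Ioi S) ∧
      ∫ s in Ioi S, ‖rayY α 0 lam A B s‖ ^ 2 ≤
        2 * energy μ (rayY α 0 lam A B S) (rayY' α 0 lam A B S) / R := by
  have hsol := isSol_rayY hα hα2 0 lam A B
  have hb : ∀ s : ℝ, S < s → 2 / 5 * R ≤ (unitDir (Real.pi / 4) * rayQ α 0 lam s).re := by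
    intro s hs
    have h1 := unitDir_mul_rayQ_re_ge hα le_rfl (by positivity) lam (hS.trans hs.le)
    have h2 : S ^ α ≤ s ^ α := Real.rpow_le_rpow hS hs.le hα.le
    linarith
  have h := hsol.integral_norm_sq_le_of_decays hd hS (g := unitDir (Real.pi / 4))
    (b := 2 / 5 * R) (by positivity) (by linarith [seven_tenths_le_unitDir_re]) hb
  refine ⟨h.1, h.2.trans ?_⟩
  have h1 := abs_flux_le (unitDir (Real.pi / 4)) (rayY α 0 lam A B) (rayY' α 0 lam A B) S
  rw [norm_unitDir, one_mul] at h1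
  have h2 := neg_abs_le (flux (unitDir (Real.pi / 4)) (rayY α 0 lam A B) (rayY' α 0 lam A B) S)
  have h3 := two_mul_le_energy (μ := μ) (rayY α 0 lam A B S) (rayY' α 0 lam A B S)
  rw [div_le_div_iff₀ (by positivity) (by positivity)]
  have h4 : 0 ≤ ‖rayY α 0 lam A B S‖ * ‖rayY' α 0 lam A B S‖ := by positivity
  have h5 : -flux (unitDir (Real.pi / 4)) (rayY α 0 lam A B) (rayY' α 0 lam A B) S ≤
      4 / 5 * energy μ (rayY α 0 lam A B S) (rayY' α 0 lam A B S) := by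
    nlinarith [energy_nonneg μ (rayY α 0 lam A B S) (rayY' α 0 lam A B S)]
  nlinarith

lemma integral_norm_sq_split {α S T : ℝ} (hα : 0 < α) (hα2 : α ≤ 2) {lam A B : ℂ} {h : ℝ → ℝ}
    (hS : 0 ≤ S) (hh : IntegrableOn h (Ioc 0 S))
    (hle : ∀ s ∈ Ioc 0 S, ‖rayY α 0 lam A B s‖ ^ 2 ≤ h s)
    (htail : IntegrableOn (fun s => ‖rayY α 0 lam A B s‖ ^ 2) (Ioi S) ∧
      ∫ s in Ioi S, ‖rayY α 0 lam A B s‖ ^ 2 ≤ T) :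
    IntegrableOn (fun s => ‖rayY α 0 lam A B s‖ ^ 2) (Ioi 0) ∧
      ∫ s in Ioi (0 : ℝ), ‖rayY α 0 lam A B s‖ ^ 2 ≤ (∫ s in Ioc 0 S, h s) + T := by
  have hsol := isSol_rayY hα hα2 0 lam A B
  have hint : IntegrableOn (fun s => ‖rayY α 0 lam A B s‖ ^ 2) (Ioc 0 S) :=
    ((hsol.norm_sq_cont.mono Icc_subset_Ici_self).integrableOn_Icc).mono_set Ioc_subset_Icc_self
  have hun : Ioi (0 : ℝ) = Ioc 0 S ∪ Ioi S := (Ioc_union_Ioi_eq_Ioi hS).symm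
  rw [hun]
  refine ⟨hint.union htail.1, ?_⟩
  rw [setIntegral_union (Ioc_disjoint_Ioi le_rfl) measurableSet_Ioi hint htail.1]
  exact add_le_add (setIntegral_mono_on hint hh measurableSet_Ioc hle) htail.2

lemma exists_rpow_eq {α R : ℝ} (hα : 0 < α) (hR : 0 ≤ R) :
    (R ^ (1 / α)) ^ α = R := by
  rw [← Real.rpow_mul hR, one_div_mul_cancel hα.ne', Real.rpow_one]

/-- Bound on the ray `arg λ = π/2 - 1/80`, obtained by rotating the independent variable. -/
lemma slanted_bound {α r : ℝ} (hα : 133 / 200 < α) (hα2 : α ≤ 2) (hr : 1 ≤ r) {A B : ℂ}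
    (hd : Decays (rayY α 0 ((r : ℂ) * unitDir (-(Real.pi / 2 - 1 / 80))) A B)
      (rayY' α 0 ((r : ℂ) * unitDir (-(Real.pi / 2 - 1 / 80))) A B)) :
    IntegrableOn
      (fun s => ‖rayY α 0 ((r : ℂ) * unitDir (-(Real.pi / 2 - 1 / 80))) A B s‖ ^ 2) (Ioi 0) ∧
    ∫ s in Ioi (0 : ℝ), ‖rayY α 0 ((r : ℂ) * unitDir (-(Real.pi / 2 - 1 / 80))) A B s‖ ^ 2 ≤
      10 ^ 12 * ‖A‖ ^ 2 ∧ ‖B‖ ≤ 450 * √r * ‖A‖ := by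
  have hα0 : 0 < α := by linarith
  set lam := (r : ℂ) * unitDir (-(Real.pi / 2 - 1 / 80)) with hlam
  have hr0 : 0 < r := by linarith
  have hnorm : ‖lam‖ = r := norm_polar hr0.le _
  have hq0 : 0 < √r := Real.sqrt_pos.2 hr0
  have hq1 : 1 ≤ √r := Real.one_le_sqrt.2 hr
  have hq2 : √r ^ 2 = r := Real.sq_sqrt hr0.le
  have hβ : (1 / 20 : ℝ) ≤ Real.pi / (2 * (2 + α)) := by
    rw [le_div_iff₀ (by positivity)]; linarith [Real.pi_gt_three]
  have hdγ := decays_ray hα0 hα2 (by norm_num) hβ hd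
  have hsolγ := isSol_rayY hα0 hα2 (1 / 20) lam A B
  set g := unitDir (-((2 + α) * (1 / 20))) with hg
  have hg1 : ‖g‖ = 1 := norm_unitDir _
  have ha : (9 / 10 : ℝ) ≤ g.re := by
    rw [hg, unitDir_re, Real.cos_neg]
    have := Real.one_sub_sq_div_two_le_cos (x := (2 + α) * (1 / 20))
    nlinarith
  have hb : ∀ s : ℝ, r / 50 ≤ (g * rayQ α (1 / 20) lam s).re := by
    intro s
    have h1 : Real.cos (-((2 + α) * (1 / 20)) + 2 * (1 / 20) - (Real.pi / 2 - 1 / 80)) =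
        -Real.sin (α * (1 / 20) - 1 / 80) := by
      rw [← Real.cos_add_pi_div_two, ← Real.cos_neg]; congr 1; ring
    rw [unitDir_mul_rayQ_re, neg_add_cancel, Real.sin_zero, zero_mul, hlam, polar_mul_unitDir_re,
      h1]
    have h2 := Real.sin_gt_sub_cube (x := α * (1 / 20) - 1 / 80) (by linarith)
    have h3 : (1 / 50 : ℝ) ≤ Real.sin (α * (1 / 20) - 1 / 80) := by
      set x := α * (1 / 20) - 1 / 80 with hx
      have hx1 : (83 / 4000 : ℝ) ≤ x := by rw [hx]; linarith
      have hx2 : x ≤ 7 / 80 := by rw [hx]; linarith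
      nlinarith [mul_nonneg (sub_nonneg.2 hx1) (sub_nonneg.2 hx2), sq_nonneg x]
    nlinarith
  set S := (2 * r) ^ (1 / α) with hS
  have hSα : S ^ α = 2 * r := exists_rpow_eq hα0 (by positivity)
  have hS1 : 1 ≤ S := Real.one_le_rpow (by linarith) (by positivity)
  have hderiv : ∀ s, 0 ≤ s → s ≤ S →
      ‖rayY' α (1 / 20) lam A B s‖ ≤ 450 * √r * ‖rayY α (1 / 20) lam A B s‖ := by
    intro s hs hsS
    have hM : ∀ t, s < t → t < s + 1 / √r → ‖rayQ α (1 / 20) lam t‖ ≤ 9 * r := by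
      intro t ht ht1
      have h1 := norm_rayQ_le α (1 / 20) lam (s := t) (by linarith)
      have h2 : t ^ α ≤ (2 * S) ^ α := by
        refine Real.rpow_le_rpow (by linarith) ?_ hα0.le
        linarith [inv_sqrt_le_one hr]
      have h3 : (2 : ℝ) ^ α ≤ 2 ^ (2 : ℝ) := Real.rpow_le_rpow_of_exponent_le (by norm_num) hα2
      rw [Real.mul_rpow (by norm_num) (by linarith), hSα] at h2
      norm_num at h3
      nlinarith
    have := hsolγ.norm_deriv_le_of_decays hdγ hs (ℓ := 1 / √r) (ρ := √r) (M := 9 * r)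
      (K := 450 * √r) (by positivity) hq0 (by norm_num) (by positivity) ha (fun t _ => hb t) hM
      (by positivity)
      (by
        have : 9 * r / √r = 9 * √r := by rw [div_eq_iff hq0.ne']; linarith
        rw [this, one_div_one_div]; linarith)
      (by linarith)
    rwa [hg1, mul_one] at this
  have hJ0 : -flux g (rayY α (1 / 20) lam A B) (rayY' α (1 / 20) lam A B) 0 ≤
      450 * √r * ‖A‖ ^ 2 := by
    have h1 := abs_flux_le g (rayY α (1 / 20) lam A B) (rayY' α (1 / 20) lam A B) 0
    have h2 := hderiv 0 le_rfl (by linarith)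
    rw [rayY_zero] at h1 h2
    rw [hg1, one_mul] at h1
    have h3 := neg_abs_le (flux g (rayY α (1 / 20) lam A B) (rayY' α (1 / 20) lam A B) 0)
    nlinarith [norm_nonneg A]
  have hE : ∀ s, 0 < s → s ≤ S → energy (7 / 4 * √r) (rayY α 0 lam A B s) (rayY' α 0 lam A B s) ≤
      10 ^ 9 * r * ‖A‖ ^ 2 * Real.exp (-(3 / 40 * √r) * s) := by
    intro s hs hsS
    have hc : (√r / 8) ^ 2 ≤ 9 / 10 * (r / 50) := by rw [div_pow, hq2]; linarith
    have h1 := hsolγ.exp_mul_flux_mono (x := 0) (z := s) le_rfl hs.le hg1.le ha (by norm_num)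
      (by positivity) (fun t _ _ => hb t) hc
    have h2 := hsolγ.flux_add_sq_nonpos hdγ hs.le ha (by norm_num) (by positivity)
      (fun t _ => hb t) hc
    set fl := flux g (rayY α (1 / 20) lam A B) (rayY' α (1 / 20) lam A B) s
    rw [mul_zero, Real.exp_zero, one_mul] at h1
    have h3 : √r / 8 * ‖rayY α (1 / 20) lam A B s‖ ^ 2 ≤
        450 * √r * ‖A‖ ^ 2 * Real.exp (-(2 * (√r / 8) * s)) := by
      have : Real.exp (2 * (√r / 8) * s) * -fl ≤ 450 * √r * ‖A‖ ^ 2 := by linarith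
      rw [Real.exp_neg, ← div_eq_mul_inv]
      refine le_trans (by linarith : _ ≤ -fl) ?_
      rw [le_div_iff₀ (Real.exp_pos _)]; linarith
    have h4 : ‖rayY α (1 / 20) lam A B s‖ ^ 2 ≤
        3600 * ‖A‖ ^ 2 * Real.exp (-(2 * (√r / 8) * s)) := by
      have : √r / 8 * (3600 * ‖A‖ ^ 2 * Real.exp (-(2 * (√r / 8) * s))) =
        450 * √r * ‖A‖ ^ 2 * Real.exp (-(2 * (√r / 8) * s)) := by ring
      rw [← this] at h3
      exact le_of_mul_le_mul_left h3 (by positivity)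
    have h5 : ‖rayY' α (1 / 20) lam A B s‖ ^ 2 ≤
        202500 * r * ‖rayY α (1 / 20) lam A B s‖ ^ 2 := by
      calc _ ≤ (450 * √r * ‖rayY α (1 / 20) lam A B s‖) ^ 2 :=
            pow_le_pow_left₀ (norm_nonneg _) (hderiv s hs.le hsS) 2
        _ = _ := by rw [mul_pow, mul_pow, hq2]; norm_num
    have h6 : energy (7 / 4 * √r) (rayY α (1 / 20) lam A B s) (rayY' α (1 / 20) lam A B s) ≤
        10 ^ 9 * r * ‖A‖ ^ 2 * Real.exp (-(2 * (√r / 8) * s)) := by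
      have h7 := mul_le_mul_of_nonneg_left h4 hr0.le
      have h8 : 0 ≤ r * (‖A‖ ^ 2 * Real.exp (-(2 * (√r / 8) * s))) := by positivity
      unfold energy
      rw [mul_pow, hq2]
      linarith
    have hsα : s ^ α ≤ 2 * r := by rw [← hSα]; exact Real.rpow_le_rpow hs.le hsS hα0.le
    have h9 := (energy_arc_le hα0 hα2 A B hs (by positivity) (lam := lam) (μ := 7 / 4 * √r)
      (by rw [mul_pow, hq2, hnorm]; linarith) (φ₁ := 0) (φ₂ := 1 / 20) (by norm_num)).2
    refine h9.trans ?_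
    calc _ ≤ Real.exp (2 * s * (7 / 4 * √r) * (1 / 20 - 0)) *
          (10 ^ 9 * r * ‖A‖ ^ 2 * Real.exp (-(2 * (√r / 8) * s))) := by gcongr
      _ = 10 ^ 9 * r * ‖A‖ ^ 2 * (Real.exp (2 * s * (7 / 4 * √r) * (1 / 20 - 0)) *
          Real.exp (-(2 * (√r / 8) * s))) := by ring
      _ = _ := by rw [← Real.exp_add]; ring_nf
  have htail := tail_bound (μ := 7 / 4 * √r) hα0 hα2 hd hr hnorm.le (by linarith) hSα (by linarith)
  have hT : 2 * energy (7 / 4 * √r) (rayY α 0 lam A B S) (rayY' α 0 lam A B S) / r ≤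
      2 * 10 ^ 9 * ‖A‖ ^ 2 := by
    rw [div_le_iff₀ hr0]
    have h1 := hE S (by linarith) le_rfl
    have h2 : Real.exp (-(3 / 40 * √r) * S) ≤ 1 := by
      rw [Real.exp_le_one_iff]; nlinarith
    have : 0 ≤ 10 ^ 9 * r * ‖A‖ ^ 2 := by positivity
    nlinarith
  have hexp : IntegrableOn (fun s => Real.exp (-(3 / 40 * √r) * s)) (Ioi 0) :=
    integrableOn_exp_mul_Ioi (by linarith) 0
  have hmain := integral_norm_sq_split (S := S) hα0 hα2 (lam := lam) (A := A) (B := B)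
    (h := fun s => 10 ^ 9 * ‖A‖ ^ 2 * Real.exp (-(3 / 40 * √r) * s)) (by linarith)
    ((hexp.mono_set Ioc_subset_Ioi_self).const_mul _)
    (fun s hs => by
      have h1 := hE s hs.1 hs.2
      unfold energy at h1
      rw [mul_pow, hq2] at h1
      refine le_of_mul_le_mul_left ?_ hr0
      nlinarith [sq_nonneg ‖rayY α 0 lam A B s‖, sq_nonneg ‖rayY' α 0 lam A B s‖])
    ⟨htail.1, htail.2.trans hT⟩
  refine ⟨hmain.1, hmain.2.trans ?_, ?_⟩
  swap
  · have := hderiv 0 le_rfl (by linarith)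
    rwa [norm_rayY'_zero, rayY_zero] at this
  rw [integral_const_mul]
  have hint : ∫ s in Ioc 0 S, Real.exp (-(3 / 40 * √r) * s) ≤ 40 / 3 := by
    calc _ ≤ ∫ s in Ioi (0 : ℝ), Real.exp (-(3 / 40 * √r) * s) :=
          setIntegral_mono_set hexp (ae_of_all _ fun s => (Real.exp_pos _).le)
            (Ioc_subset_Ioi_self.eventuallyLE)
      _ = 1 / (3 / 40 * √r) := by
          rw [integral_exp_mul_Ioi (by linarith)]; simp [neg_div]
      _ ≤ 40 / 3 := by rw [div_le_iff₀ (by positivity)]; linarith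
  have : 0 ≤ ‖A‖ ^ 2 := by positivity
  nlinarith

/-- The spectral parameter rotated so that the eigenvalues become real. -/
noncomputable def rot (α : ℝ) (lam : ℂ) : ℂ := lam * unitDir (Real.pi / (2 + α))

lemma norm_rot (α : ℝ) (lam : ℂ) : ‖rot α lam‖ = ‖lam‖ := by
  rw [rot, norm_mul, norm_unitDir, mul_one]

lemma rayQ_rot {α : ℝ} (hα : 0 < α) (lam : ℂ) (s : ℝ) :
    rayQ α (Real.pi / (2 * (2 + α))) lam s = (s ^ α : ℝ) - rot α lam := by
  have h1 : (2 + α) * (Real.pi / (2 * (2 + α))) = Real.pi / 2 := by field_simp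
  have h2 : 2 * (Real.pi / (2 * (2 + α))) = Real.pi / (2 + α) := by field_simp
  have h3 : unitDir (Real.pi / 2) = -Complex.I := by
    apply Complex.ext <;> simp [unitDir_re, unitDir_im]
  rw [rayQ_eq, h1, h2, h3, rot]
  simp

/-- Herglotz-type bound for the logarithmic derivative at the origin of a recessive solution. -/
lemma abs_im_rot_mul_le {α R : ℝ} (hα : 0 < α) (hα2 : α ≤ 2) {lam A B : ℂ}
    (hd : Decays (rayY α 0 lam A B) (rayY' α 0 lam A B)) (hR : 1 ≤ R) (hlam : ‖lam‖ ≤ R) :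
    |(rot α lam).im| * ‖B‖ ≤ 12 * R ^ 2 * ‖A‖ := by
  set τ := (rot α lam).im with hτ
  rcases eq_or_ne τ 0 with h0 | h0
  · rw [h0, abs_zero, zero_mul]; positivity
  have hτ0 : 0 < |τ| := abs_pos.2 h0
  have hτR : |τ| ≤ R := (Complex.abs_im_le_norm _).trans ((norm_rot α lam).le.trans hlam)
  have hR0 : 0 < R := by linarith
  have hdβ := decays_ray hα hα2 (φ := Real.pi / (2 * (2 + α))) (by positivity) le_rfl hd
  have hsol := isSol_rayY hα hα2 (Real.pi / (2 * (2 + α))) lam A B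
  set g : ℂ := ⟨|τ| / (2 * R), SignType.sign τ⟩ with hg
  have hgn : ‖g‖ ≤ 2 := by
    refine (Complex.norm_le_abs_re_add_abs_im g).trans ?_
    have h1 : |g.re| ≤ 1 := by
      rw [hg, abs_of_nonneg (by positivity), div_le_one (by positivity)]; linarith
    have h2 : |g.im| ≤ 1 := by
      rcases lt_or_gt_of_ne h0 with h | h <;> simp [hg, h]
    linarith
  have hb : ∀ s : ℝ, 0 < s → |τ| / 2 ≤ (g * rayQ α (Real.pi / (2 * (2 + α))) lam s).re := by
    intro s hs
    have hre : (rot α lam).re ≤ R :=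
      (Complex.re_le_norm _).trans ((norm_rot α lam).le.trans hlam)
    have hsα : 0 ≤ s ^ α := by positivity
    rw [rayQ_rot hα, Complex.mul_re, Complex.sub_re, Complex.sub_im, Complex.ofReal_re,
      Complex.ofReal_im, ← hτ]
    have h1 : (SignType.sign τ : ℝ) * τ = |τ| := sign_mul_self τ
    have h2 : |τ| / (2 * R) * (-R) ≤ |τ| / (2 * R) * (s ^ α - (rot α lam).re) := by
      gcongr; linarith
    have h3 : |τ| / (2 * R) * (-R) = -(|τ| / 2) := by field_simp
    change |τ| / 2 ≤ |τ| / (2 * R) * (s ^ α - (rot α lam).re) - (SignType.sign τ : ℝ) * (0 - τ)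
    linarith
  have := hsol.norm_deriv_le_of_decays hdβ le_rfl (ℓ := 1) (ρ := 1) (M := 2 * R)
    (K := 6 * R ^ 2 / |τ|) (a := |τ| / (2 * R)) (g := g) one_pos one_pos (by positivity)
    (by positivity) le_rfl hb
    (fun s hs hs1 => norm_rayQ_le_two_mul hα hs.le (by linarith) hR hlam) (by positivity)
    (by
      have : 6 * R ^ 2 / |τ| * (|τ| / (2 * R)) = 3 * R := by field_simp; norm_num
      rw [this]; linarith)
    (by
      have : 6 * R ^ 2 / |τ| * (|τ| / 2) = 3 * R ^ 2 := by field_simp; norm_num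
      rw [this]; nlinarith)
  rw [norm_rayY'_zero, rayY_zero] at this
  have h2 : 6 * R ^ 2 / |τ| * ‖g‖ * ‖A‖ ≤ 6 * R ^ 2 / |τ| * 2 * ‖A‖ := by gcongr
  have h3 : ‖B‖ ≤ 12 * R ^ 2 * ‖A‖ / |τ| := by
    refine (this.trans h2).trans (le_of_eq ?_); ring
  rw [le_div_iff₀ hτ0] at h3
  linarith

/-- A priori growth bound for the recessive solution in terms of its value at the origin. -/
lemma growth_bound {α : ℝ} (hα : 133 / 200 < α) (hα2 : α ≤ 2) {lam A B : ℂ}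
    (hd : Decays (rayY α 0 lam A B) (rayY' α 0 lam A B)) (hr : 1 ≤ ‖lam‖) :
    IntegrableOn (fun s => ‖rayY α 0 lam A B s‖ ^ 2) (Ioi 0) ∧
    (rot α lam).im ^ 2 * ∫ s in Ioi (0 : ℝ), ‖rayY α 0 lam A B s‖ ^ 2 ≤
      Real.exp (40 * ‖lam‖ ^ (1 / 2 + 1 / α)) * ‖A‖ ^ 2 := by
  have hα0 : 0 < α := by linarith
  have hB := abs_im_rot_mul_le hα0 hα2 hd hr le_rfl
  set r := ‖lam‖ with hrdef
  have hr0 : 0 < r := by linarith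
  set τ := (rot α lam).im
  have hτr : |τ| ≤ r := (Complex.abs_im_le_norm _).trans (norm_rot α lam).le
  have hτ2 : τ ^ 2 ≤ r ^ 2 := by rw [← sq_abs]; gcongr
  have hsol := isSol_rayY hα0 hα2 0 lam A B
  set S := (2 * r) ^ (1 / α) with hS
  have hSα : S ^ α = 2 * r := exists_rpow_eq hα0 (by positivity)
  have hS1 : 1 ≤ S := Real.one_le_rpow (by linarith) (by positivity)
  have hμ2 : √(3 * r) ^ 2 = 3 * r := Real.sq_sqrt (by positivity)
  set μ := √(3 * r) with hμ
  have hμ0 : 0 ≤ μ := Real.sqrt_nonneg _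
  have hμ1 : 1 ≤ μ := Real.one_le_sqrt.2 (by linarith)
  set D := Real.exp (2 * μ * S) * (3 * r * ‖A‖ ^ 2 + ‖B‖ ^ 2) with hD
  have hE : ∀ s, 0 ≤ s → s ≤ S → energy μ (rayY α 0 lam A B s) (rayY' α 0 lam A B s) ≤ D := by
    intro s hs hsS
    have h1 := hsol.energy_le (μ := μ) le_rfl hs hμ0 (fun t ht => by
      have h2 := norm_rayQ_le α 0 lam ht.1.le
      have h3 : t ^ α ≤ S ^ α := Real.rpow_le_rpow ht.1.le (ht.2.le.trans hsS) hα0.le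
      rw [hμ2]; linarith)
    have h4 : energy μ (rayY α 0 lam A B 0) (rayY' α 0 lam A B 0) = 3 * r * ‖A‖ ^ 2 + ‖B‖ ^ 2 := by
      rw [energy, norm_rayY'_zero, rayY_zero, hμ2]
    rw [h4, sub_zero] at h1
    exact h1.trans (by rw [hD]; gcongr)
  have hD0 : 0 ≤ D := by positivity
  have htail := tail_bound (μ := μ) hα0 hα2 hd hr le_rfl (by linarith) hSα hμ1
  have hT : 2 * energy μ (rayY α 0 lam A B S) (rayY' α 0 lam A B S) / r ≤ 2 * D := by
    rw [div_le_iff₀ hr0]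
    nlinarith [hE S (by linarith) le_rfl]
  have hmain := integral_norm_sq_split (S := S) hα0 hα2 (lam := lam) (A := A) (B := B)
    (h := fun _ => D) (by linarith) (by simp)
    (fun s hs => by
      have h1 := hE s hs.1.le hs.2
      unfold energy at h1
      rw [hμ2] at h1
      nlinarith [sq_nonneg ‖rayY α 0 lam A B s‖, sq_nonneg ‖rayY' α 0 lam A B s‖])
    ⟨htail.1, htail.2.trans hT⟩
  refine ⟨hmain.1, (mul_le_mul_of_nonneg_left hmain.2 (sq_nonneg τ)).trans ?_⟩
  rw [setIntegral_const, measureReal_def, Real.volume_Ioc, sub_zero,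
    ENNReal.toReal_ofReal (by linarith), smul_eq_mul]
  set N := r ^ (1 / 2 + 1 / α) with hN
  have hα1 : 1 / 2 ≤ 1 / α := by
    rw [div_le_div_iff₀ (by norm_num) hα0]; linarith
  have hrN : r ≤ N := by
    calc r = r ^ (1 : ℝ) := (Real.rpow_one r).symm
      _ ≤ N := Real.rpow_le_rpow_of_exponent_le hr (by linarith)
  have h2α : (2 : ℝ) ^ (1 / α) ≤ 4 := by
    calc (2 : ℝ) ^ (1 / α) ≤ 2 ^ (2 : ℝ) := by
          refine Real.rpow_le_rpow_of_exponent_le (by norm_num) ?_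
          rw [div_le_iff₀ hα0]; linarith
      _ = 4 := by norm_num
  have hSr : √r * S ≤ 4 * N := by
    have : √r * S = 2 ^ (1 / α) * N := by
      rw [hS, hN, Real.mul_rpow (by norm_num) hr0.le, Real.rpow_add hr0, Real.sqrt_eq_rpow]; ring
    rw [this]; gcongr
  have hSN : S ≤ 4 * N := by
    have : 1 ≤ √r := Real.one_le_sqrt.2 hr
    nlinarith
  have hμS : 2 * μ * S ≤ 16 * N := by
    have h1 : μ ≤ 2 * √r := by
      rw [hμ]
      refine Real.sqrt_le_sqrt (by linarith : 3 * r ≤ 2 ^ 2 * r) |>.trans (le_of_eq ?_)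
      rw [Real.sqrt_mul (by norm_num), Real.sqrt_sq (by norm_num)]
    nlinarith
  have hexpN : N ≤ Real.exp N := by linarith [Real.add_one_le_exp N]
  have hN1 : 1 ≤ N := hr.trans hrN
  have hpoly : τ ^ 2 * (3 * r * ‖A‖ ^ 2 + ‖B‖ ^ 2) ≤ 147 * N ^ 4 * ‖A‖ ^ 2 := by
    have h1 : τ ^ 2 * ‖B‖ ^ 2 ≤ (12 * r ^ 2 * ‖A‖) ^ 2 := by
      rw [← sq_abs τ, ← mul_pow]
      exact pow_le_pow_left₀ (by positivity) hB 2
    have h2 : τ ^ 2 * (3 * r * ‖A‖ ^ 2) ≤ r ^ 2 * (3 * r * ‖A‖ ^ 2) := by gcongr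
    have h3 : r ^ 3 ≤ r ^ 4 := pow_le_pow_right₀ hr (by norm_num)
    have h4 : r ^ 4 ≤ N ^ 4 := by gcongr
    have hA : 0 ≤ ‖A‖ ^ 2 := by positivity
    have h5 : r ^ 3 * ‖A‖ ^ 2 ≤ N ^ 4 * ‖A‖ ^ 2 := by gcongr; linarith
    have h6 : r ^ 4 * ‖A‖ ^ 2 ≤ N ^ 4 * ‖A‖ ^ 2 := by gcongr
    nlinarith
  have hsum : S + 2 ≤ 6 * N := by linarith
  calc τ ^ 2 * (S * D + 2 * D)
      = (S + 2) * (Real.exp (2 * μ * S) * (τ ^ 2 * (3 * r * ‖A‖ ^ 2 + ‖B‖ ^ 2))) := by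
        rw [hD]; ring
    _ ≤ (6 * N) * (Real.exp (16 * N) * (147 * N ^ 4 * ‖A‖ ^ 2)) := by gcongr
    _ = 882 * N ^ 5 * Real.exp (16 * N) * ‖A‖ ^ 2 := by ring
    _ ≤ (Real.exp N) ^ 10 * (Real.exp N) ^ 5 * Real.exp (16 * N) * ‖A‖ ^ 2 := by
        gcongr
        calc (882 : ℝ) ≤ 2 ^ 10 := by norm_num
          _ ≤ Real.exp N ^ 10 := by
            gcongr
            linarith [Real.add_one_le_exp N]
    _ = Real.exp (31 * N) * ‖A‖ ^ 2 := by
        rw [← pow_add, ← Real.exp_nat_mul, ← Real.exp_add]; push_cast; ring_nf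
    _ ≤ _ := by gcongr; norm_num

lemma exp_log_add_angle {r : ℝ} (hr : 0 < r) (θ : ℝ) :
    Complex.exp (Real.log r + θ * Complex.I) = r * unitDir (-θ) := by
  rw [Complex.exp_add, ← Complex.ofReal_exp, Real.exp_log hr, unitDir]
  push_cast; ring_nf

lemma exists_bound_closedBall {F : ℂ → ℂ} (hF : Continuous F) (R : ℝ) :
    ∃ M, 0 ≤ M ∧ ∀ z, ‖z‖ ≤ R → ‖F z‖ ≤ M := by
  obtain ⟨M, hM⟩ := (isCompact_closedBall (0 : ℂ) R).exists_bound_of_continuousOn hF.continuousOn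
  exact ⟨max M 0, le_max_right _ _, fun z hz =>
    (hM z (mem_closedBall_zero_iff.2 hz)).trans (le_max_left _ _)⟩

/-- Phragmén–Lindelöf principle in a sector, for entire functions. -/
lemma sector_bound {F : ℂ → ℂ} (hF : Differentiable ℂ F) {a b p C M : ℝ}
    (hp : p < Real.pi / (b - a)) (hC : 0 ≤ C)
    (hgrow : ∀ z, 1 ≤ ‖z‖ → ‖F z‖ ≤ Real.exp (C * ‖z‖ ^ p))
    (ha : ∀ r : ℝ, 1 ≤ r → ‖F (r * unitDir (-a))‖ ≤ M)
    (hb : ∀ r : ℝ, 1 ≤ r → ‖F (r * unitDir (-b))‖ ≤ M) :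
    ∃ M', ∀ r : ℝ, 1 ≤ r → ∀ θ, a ≤ θ → θ ≤ b → ‖F (r * unitDir (-θ))‖ ≤ M' := by
  obtain ⟨M₀, hM₀, hM₀'⟩ := exists_bound_closedBall hF.continuous 1
  have hbdry : ∀ θ, (∀ r : ℝ, 1 ≤ r → ‖F (r * unitDir (-θ))‖ ≤ M) → ∀ z : ℂ, z.im = θ →
      ‖F (Complex.exp z)‖ ≤ max M M₀ := by
    intro θ hθ z hz
    have hexp : Complex.exp z = (Real.exp z.re : ℝ) * unitDir (-θ) := by
      rw [← exp_log_add_angle (Real.exp_pos _), Real.log_exp, ← hz, Complex.re_add_im]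
    rcases le_total 1 (Real.exp z.re) with h | h
    · rw [hexp]; exact (hθ _ h).trans (le_max_left _ _)
    · refine (hM₀' _ ?_).trans (le_max_right _ _)
      rwa [Complex.norm_exp]
  refine ⟨max M M₀, fun r hr θ h1 h2 => ?_⟩
  have key := PhragmenLindelof.horizontal_strip (f := fun w => F (Complex.exp w)) (a := a) (b := b)
    (C := max M M₀) (z := Real.log r + θ * Complex.I)
    (hF.comp Complex.differentiable_exp).diffContOnCl ?_ (hbdry a ha) (hbdry b hb) (by simpa)
    (by simpa)
  · simpa only [exp_log_add_angle (by linarith : 0 < r)] using key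
  · refine ⟨p, hp, C, Asymptotics.IsBigO.of_bound (max 1 M₀) (Eventually.of_forall fun w => ?_)⟩
    rw [Real.norm_of_nonneg (Real.exp_pos _).le]
    have h1 : 1 ≤ Real.exp (C * Real.exp (p * |w.re|)) := Real.one_le_exp (by positivity)
    rcases le_total 0 w.re with h | h
    · have h2 := hgrow (Complex.exp w) (by rw [Complex.norm_exp]; exact Real.one_le_exp h)
      rw [Complex.norm_exp, ← Real.exp_mul, mul_comm w.re p] at h2
      rw [abs_of_nonneg h]
      rw [abs_of_nonneg h] at h1
      nlinarith [le_max_left 1 M₀]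
    · have h2 := hM₀' (Complex.exp w) (by rw [Complex.norm_exp]; exact Real.exp_le_one_iff.2 h)
      nlinarith [le_max_right 1 M₀, le_max_left 1 M₀]

lemma exists_polar (z : ℂ) : ∃ θ, -(1 / 160) ≤ θ ∧ θ ≤ 2 * Real.pi - 1 / 160 ∧
    z = (‖z‖ : ℝ) * unitDir (-θ) := by
  have h1 := Complex.neg_pi_lt_arg z
  have h2 := Complex.arg_le_pi z
  have hpi := Real.pi_gt_three
  have hz : z = (‖z‖ : ℝ) * unitDir (-z.arg) := by
    conv_lhs => rw [← Complex.norm_mul_exp_arg_mul_I z]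
    simp [unitDir]
  rcases le_total (-(1 / 160)) z.arg with h | h
  · exact ⟨z.arg, h, by linarith, hz⟩
  · refine ⟨z.arg + 2 * Real.pi, by linarith, by linarith, ?_⟩
    have : unitDir (-(z.arg + 2 * Real.pi)) = unitDir (-z.arg) := by
      rw [neg_add, unitDir_add]
      have : unitDir (-(2 * Real.pi)) = 1 := by
        apply Complex.ext <;> simp [unitDir_re, unitDir_im]
      rw [this, mul_one]
    rw [this]; exact hz

/-- An entire function that decays in a large cone and is bounded in the complementary sector
vanishes. -/
lemma entire_eq_zero {F : ℂ → ℂ} (hF : Differentiable ℂ F) {M M' : ℝ}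
    (hcone : ∀ r : ℝ, 1 ≤ r → ∀ θ, 3 * Real.pi / 4 ≤ θ → θ ≤ 2 * Real.pi - 1 / 160 →
      ‖F (r * unitDir (-θ))‖ ≤ M * r ^ (-(1 / 4) : ℝ))
    (hsec : ∀ r : ℝ, 1 ≤ r → ∀ θ, -(1 / 160) ≤ θ → θ ≤ 3 * Real.pi / 4 →
      ‖F (r * unitDir (-θ))‖ ≤ M') (z : ℂ) : F z = 0 := by
  obtain ⟨M₀, hM₀, hM₀'⟩ := exists_bound_closedBall hF.continuous 1
  have hpi := Real.pi_gt_three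
  have hM : 0 ≤ M := by
    have := (norm_nonneg _).trans (hcone 1 le_rfl Real.pi (by linarith) (by linarith))
    simpa using this
  have hbdd : Bornology.IsBounded (range F) := by
    rw [isBounded_iff_forall_norm_le]
    refine ⟨max M₀ (max M M'), ?_⟩
    rintro _ ⟨w, rfl⟩
    rcases le_total ‖w‖ 1 with h | h
    · exact (hM₀' w h).trans (le_max_left _ _)
    refine le_trans ?_ (le_max_right _ _)
    obtain ⟨θ, h1, h2, h3⟩ := exists_polar w
    rw [h3]
    rcases le_total θ (3 * Real.pi / 4) with h4 | h4
    · exact (hsec _ h θ h1 h4).trans (le_max_right _ _)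
    · refine (hcone _ h θ h4 h2).trans (le_trans ?_ (le_max_left _ _))
      have : ‖w‖ ^ (-(1 / 4) : ℝ) ≤ 1 := Real.rpow_le_one_of_one_le_of_nonpos h (by norm_num)
      nlinarith
  have hconst : ∀ w, F w = F z := fun w => hF.apply_eq_apply_of_bounded hbdd w z
  have hlim : Tendsto (fun r : ℝ => M * r ^ (-(1 / 4) : ℝ)) atTop (𝓝 0) := by
    simpa using (tendsto_rpow_neg_atTop (by norm_num : (0 : ℝ) < 1 / 4)).const_mul M
  have : ‖F z‖ ≤ 0 := by
    refine ge_of_tendsto hlim ?_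
    filter_upwards [eventually_ge_atTop 1] with r hr
    rw [← hconst (r * unitDir (-Real.pi))]
    exact hcone r hr Real.pi (by linarith) (by linarith)
  exact norm_le_zero_iff.1 this

/-- Removing the singular factor `1 / |Im t|` from a growth bound by the maximum principle. -/
lemma growth_of_im_mul_growth {H : ℂ → ℂ} (hH : Differentiable ℂ H) {C p : ℝ} (hC : 0 ≤ C)
    (hp : 0 ≤ p) (hb : ∀ t, 1 ≤ ‖t‖ → |t.im| * ‖H t‖ ≤ Real.exp (C * ‖t‖ ^ p)) :
    ∃ C', 0 ≤ C' ∧ ∀ t, 1 ≤ ‖t‖ → ‖H t‖ ≤ Real.exp (C' * ‖t‖ ^ p) := by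
  obtain ⟨M₀, hM₀, hM₀'⟩ := exists_bound_closedBall hH.continuous 3
  have h3p : (1 : ℝ) ≤ 3 ^ p := Real.one_le_rpow (by norm_num) hp
  refine ⟨C * 3 ^ p + 1 + M₀, by positivity, fun t ht => ?_⟩
  have htp : 1 ≤ ‖t‖ ^ p := Real.one_le_rpow ht hp
  rcases le_total ‖t‖ 3 with h3 | h3
  · calc ‖H t‖ ≤ M₀ := hM₀' t h3
      _ ≤ Real.exp M₀ := by linarith [Real.add_one_le_exp M₀]
      _ ≤ _ := by
        gcongr
        nlinarith [mul_nonneg hC (by linarith : (0 : ℝ) ≤ 3 ^ p)]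
  have hmain : ‖H t‖ ≤ 2 * Real.exp (C * (3 * ‖t‖) ^ p) := by
    rcases le_or_gt 1 |t.im| with h1 | h1
    · have h2 := hb t ht
      have h4 : Real.exp (C * ‖t‖ ^ p) ≤ Real.exp (C * (3 * ‖t‖) ^ p) := by
        gcongr; linarith
      nlinarith [norm_nonneg (H t), Real.exp_pos (C * (3 * ‖t‖) ^ p)]
    · have hre : |t.re| ≤ ‖t‖ := Complex.abs_re_le_norm t
      have hre2 : 2 ≤ |t.re| := by
        have := Complex.norm_le_abs_re_add_abs_im t
        linarith
      have hmax := Complex.norm_le_of_forall_mem_frontier_norm_le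
        (f := fun z => ((z - t.re) ^ 2 - 1) * H z) (U := Metric.ball (t.re : ℂ) 1)
        (C := 2 * Real.exp (C * (3 * ‖t‖) ^ p)) Metric.isBounded_ball
        ((((differentiable_id.sub_const _).pow 2).sub_const 1).mul hH).diffContOnCl
        (by
          intro z hz
          rw [frontier_ball _ one_ne_zero, mem_sphere_iff_norm] at hz
          set w := z - t.re with hw
          have hwim : w.im = z.im := by simp [hw]
          have hw2 : w.re * w.re + w.im * w.im = 1 := by
            rw [← Complex.normSq_apply, Complex.normSq_eq_norm_sq, hz]; norm_num
          have hP : ‖w ^ 2 - 1‖ = 2 * |z.im| := by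
            rw [← sq_eq_sq₀ (norm_nonneg _) (by positivity), ← Complex.normSq_eq_norm_sq,
              Complex.normSq_apply, mul_pow, sq_abs, ← hwim]
            simp only [sq, Complex.sub_re, Complex.sub_im, Complex.mul_re, Complex.mul_im,
              Complex.one_re, Complex.one_im]
            have : w.re * w.re = 1 - w.im * w.im := by linarith
            nlinarith
          have hz1 : ‖z‖ ≤ 3 * ‖t‖ := by
            have : z = w + t.re := by simp [hw]
            rw [this]
            refine (norm_add_le _ _).trans ?_
            rw [hz, Complex.norm_real, Real.norm_eq_abs]; linarith
          have hz2 : 1 ≤ ‖z‖ := by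
            have h5 := norm_sub_norm_le (t.re : ℂ) (-w)
            have h6 : (t.re : ℂ) - -w = z := by simp [hw]
            rw [h6, norm_neg, hz, Complex.norm_real, Real.norm_eq_abs] at h5
            linarith
          rw [norm_mul, hP, mul_assoc]
          gcongr
          refine (hb z hz2).trans ?_
          gcongr)
        (z := t) (subset_closure (by
          rw [Metric.mem_ball, dist_eq_norm]
          have : t - t.re = t.im * Complex.I := by
            apply Complex.ext <;> simp
          rw [this, norm_mul, Complex.norm_I, mul_one, Complex.norm_real]
          exact h1))
      refine le_trans ?_ hmax
      rw [norm_mul]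
      have hP : 1 ≤ ‖(t - t.re) ^ 2 - 1‖ := by
        have : (t - t.re) ^ 2 - 1 = ((-(t.im ^ 2 + 1) : ℝ) : ℂ) := by
          apply Complex.ext <;> simp [sq]; ring
        rw [this, Complex.norm_real, Real.norm_eq_abs, abs_neg, abs_of_nonneg (by positivity)]
        nlinarith [sq_nonneg t.im]
      nlinarith [norm_nonneg (H t)]
  refine hmain.trans ?_
  have h2e : (2 : ℝ) ≤ Real.exp 1 := by linarith [Real.add_one_le_exp (1 : ℝ)]
  calc 2 * Real.exp (C * (3 * ‖t‖) ^ p) ≤ Real.exp 1 * Real.exp (C * (3 * ‖t‖) ^ p) := by gcongr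
    _ = Real.exp (1 + C * 3 ^ p * ‖t‖ ^ p) := by
      rw [← Real.exp_add, Real.mul_rpow (by norm_num) (norm_nonneg _)]; ring_nf
    _ ≤ _ := by gcongr; nlinarith

lemma cauchy_schwarz_setIntegral {f y : ℝ → ℂ} {s t : Set ℝ} (hst : s ⊆ t)
    (hf : MemLp f 2 (volume.restrict t)) (hy : AEStronglyMeasurable y (volume.restrict s))
    (hy2 : IntegrableOn (fun x => ‖y x‖ ^ 2) s) :
    IntegrableOn (fun x => y x * f x) s ∧
      ‖∫ x in s, y x * f x‖ ≤ √(∫ x in s, ‖y x‖ ^ 2) * √(∫ x in t, ‖f x‖ ^ 2) := by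
  have hfs : MemLp f 2 (volume.restrict s) := hf.mono_measure (Measure.restrict_mono hst le_rfl)
  have hys : MemLp y 2 (volume.restrict s) := (memLp_two_iff_integrable_sq_norm hy).2 hy2
  have hint : IntegrableOn (fun x => y x * f x) s := hys.integrable_mul hfs
  refine ⟨hint, ?_⟩
  have h1 := integral_mul_norm_le_Lp_mul_Lq (μ := volume.restrict s) (f := y) (g := f)
    Real.HolderConjugate.two_two (by simpa using hys) (by simpa using hfs)
  simp only [Real.rpow_two, ← Real.sqrt_eq_rpow] at h1
  have hf2 : IntegrableOn (fun x => ‖f x‖ ^ 2) t := (memLp_two_iff_integrable_sq_norm hf.1).1 hf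
  calc ‖∫ x in s, y x * f x‖ ≤ ∫ x in s, ‖y x * f x‖ := norm_integral_le_integral_norm _
    _ = ∫ x in s, ‖y x‖ * ‖f x‖ := by simp only [norm_mul]
    _ ≤ _ := h1
    _ ≤ _ := mul_le_mul_of_nonneg_left (Real.sqrt_le_sqrt
      (setIntegral_mono_set hf2 (ae_of_all _ fun x => by positivity) hst.eventuallyLE))
      (Real.sqrt_nonneg _)

/-- Holomorphic dependence of an integral on a parameter, for locally bounded kernels. -/
lemma differentiable_integral_mul {μ : Measure ℝ} {K : ℂ → ℝ → ℂ} {f : ℝ → ℂ}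
    (hK : ∀ s, Differentiable ℂ fun lam => K lam s)
    (hm : ∀ lam, AEStronglyMeasurable (K lam) μ)
    (hb : ∀ R : ℝ, ∃ M, ∀ᵐ s ∂μ, ∀ lam, ‖lam‖ ≤ R → ‖K lam s‖ ≤ M) (hf : Integrable f μ) :
    Differentiable ℂ fun lam => ∫ s, K lam s * f s ∂μ := by
  intro lam₀
  obtain ⟨M, hM⟩ := hb (‖lam₀‖ + 2)
  have hder : AEStronglyMeasurable (fun s => deriv (fun lam => K lam s) lam₀) μ := by
    refine aestronglyMeasurable_of_tendsto_ae atTop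
      (f := fun (n : ℕ) s => ((n : ℂ) + 1) * (K (lam₀ + ((n : ℂ) + 1)⁻¹) s - K lam₀ s))
      (fun n => ((hm _).sub (hm _)).const_mul _) (ae_of_all _ fun s => ?_)
    have h1 := ((hK s) lam₀).hasDerivAt.tendsto_slope_zero
    have h2 : Tendsto (fun n : ℕ => ((n : ℂ) + 1)⁻¹) atTop (𝓝[≠] 0) := by
      refine tendsto_nhdsWithin_iff.2 ⟨?_, Eventually.of_forall fun n => ?_⟩
      · simpa [one_div] using tendsto_one_div_add_atTop_nhds_zero_nat (𝕜 := ℂ)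
      · exact inv_ne_zero (Nat.cast_add_one_ne_zero n)
    have h3 := h1.comp h2
    simpa [Function.comp_def] using h3
  have key := hasDerivAt_integral_of_dominated_loc_of_deriv_le (μ := μ) (𝕜 := ℂ)
    (F := fun lam s => K lam s * f s) (F' := fun lam s => deriv (fun lam => K lam s) lam * f s)
    (x₀ := lam₀) (bound := fun s => M * ‖f s‖) (Metric.ball_mem_nhds lam₀ one_pos)
    (Eventually.of_forall fun lam => (hm lam).mul hf.1)
    (hf.bdd_mul (hm lam₀) (by
      filter_upwards [hM] with s hs using hs lam₀ (by linarith)))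
    (hder.mul hf.1)
    (by
      filter_upwards [hM] with s hs lam hlam
      rw [norm_mul]
      gcongr
      have hlam' : ‖lam‖ ≤ ‖lam₀‖ + 1 := by
        have h1 : ‖lam - lam₀‖ < 1 := by rwa [Metric.mem_ball, dist_eq_norm] at hlam
        have h2 := norm_le_norm_add_norm_sub' lam lam₀
        linarith
      have := Complex.norm_deriv_le_of_forall_mem_sphere_norm_le (f := fun lam => K lam s)
        (c := lam) (R := 1) (C := M) one_pos (hK s).diffContOnCl (fun z hz => hs z (by
          rw [mem_sphere_iff_norm] at hz
          have h2 := norm_le_norm_add_norm_sub' z lam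
          linarith))
      simpa using this)
    (hf.norm.const_mul M)
    (ae_of_all _ fun s lam _ => ((hK s) lam).hasDerivAt.mul_const (f s))
  exact key.2.differentiableAt

/-- Partial integrals of `f` against the basic solutions. -/
noncomputable def partInt (α : ℝ) (f : ℝ → ℂ) (σ : ℕ) (x : ℝ) (lam : ℂ) : ℂ :=
  ∫ s in Ioc 0 x, raySol α σ 0 lam s * f s

section

variable {α : ℝ} {f : ℝ → ℂ}

lemma integrableOn_of_memLp (hf : MemLp f 2 (volume.restrict (Ioi 0))) (x : ℝ) :
    IntegrableOn f (Ioc 0 x) := by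
  have h1 : MemLp f 2 (volume.restrict (Ioc 0 x)) :=
    hf.mono_measure (Measure.restrict_mono Ioc_subset_Ioi_self le_rfl)
  exact h1.integrable (by norm_num)

lemma aestronglyMeasurable_raySol (hα : 0 < α) (hα2 : α ≤ 2) {σ : ℕ} (hσ : σ ≤ 1) (φ : ℝ)
    (lam : ℂ) : AEStronglyMeasurable (raySol α σ φ lam) (volume.restrict (Ioi 0)) :=
  ((isSol_raySol hα hα2 hσ φ lam).cont.mono Ioi_subset_Ici_self).aestronglyMeasurable
    measurableSet_Ioi

lemma integrableOn_raySol_mul (hα : 0 < α) (hα2 : α ≤ 2) {σ : ℕ} (hσ : σ ≤ 1)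
    (hf : MemLp f 2 (volume.restrict (Ioi 0))) (lam : ℂ) (x : ℝ) :
    IntegrableOn (fun s => raySol α σ 0 lam s * f s) (Ioc 0 x) := by
  refine (integrableOn_of_memLp hf x).bdd_mul (c := (1 + x) * Real.exp (x ^ 2 * (x ^ α + ‖lam‖)))
    ((aestronglyMeasurable_raySol hα hα2 hσ 0 lam).mono_measure
      (Measure.restrict_mono Ioc_subset_Ioi_self le_rfl)) ?_
  filter_upwards [ae_restrict_mem measurableSet_Ioc] with s hs
  exact norm_raySol_le hα hα2 hσ 0 lam hs.1.le hs.2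

lemma differentiable_partInt (hα : 0 < α) (hα2 : α ≤ 2) {σ : ℕ} (hσ : σ ≤ 1)
    (hf : MemLp f 2 (volume.restrict (Ioi 0))) (x : ℝ) :
    Differentiable ℂ (partInt α f σ x) := by
  refine differentiable_integral_mul (fun s => differentiable_raySol_param hα hα2 hσ 0 s)
    (fun lam => (aestronglyMeasurable_raySol hα hα2 hσ 0 lam).mono_measure
      (Measure.restrict_mono Ioc_subset_Ioi_self le_rfl))
    (fun R => ⟨(1 + x) * Real.exp (x ^ 2 * (x ^ α + R)), ?_⟩) (integrableOn_of_memLp hf x)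
  filter_upwards [ae_restrict_mem measurableSet_Ioc] with s hs lam hlam
  have hx : 0 < x := hs.1.trans_le hs.2
  refine (norm_raySol_le hα hα2 hσ 0 lam hs.1.le hs.2).trans ?_
  gcongr

/-- The pairing `∫ Y f` of `f` against the solution with data `(A, B)`. -/
noncomputable def pairing (α : ℝ) (f : ℝ → ℂ) (lam A B : ℂ) : ℂ :=
  ∫ s in Ioi (0 : ℝ), rayY α 0 lam A B s * f s

lemma rayY_smul (φ : ℝ) (lam A B m : ℂ) (s : ℝ) :
    rayY α φ lam (m * A) (m * B) s = m * rayY α φ lam A B s := by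
  simp only [rayY]; ring

lemma pairing_smul (lam A B m : ℂ) : pairing α f lam (m * A) (m * B) = m * pairing α f lam A B := by
  simp only [pairing, rayY_smul, mul_assoc, integral_const_mul]

lemma integral_rayY_mul_Ioc (hα : 0 < α) (hα2 : α ≤ 2)
    (hf : MemLp f 2 (volume.restrict (Ioi 0))) (lam A B : ℂ) (x : ℝ) :
    IntegrableOn (fun s => rayY α 0 lam A B s * f s) (Ioc 0 x) ∧
    ∫ s in Ioc 0 x, rayY α 0 lam A B s * f s =
      A * partInt α f 0 x lam + B * partInt α f 1 x lam := by
  have h0 := (integrableOn_raySol_mul hα hα2 zero_le_one hf lam x).const_mul A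
  have h1 := (integrableOn_raySol_mul hα hα2 le_rfl hf lam x).const_mul B
  have heq : (fun s => rayY α 0 lam A B s * f s) =
      fun s => A * (raySol α 0 0 lam s * f s) + B * (raySol α 1 0 lam s * f s) := by
    funext s; simp only [rayY]; ring
  rw [heq]
  refine ⟨h0.add h1, ?_⟩
  rw [integral_add h0 h1, integral_const_mul, integral_const_mul]
  rfl

lemma aestronglyMeasurable_rayY (hα : 0 < α) (hα2 : α ≤ 2) (lam A B : ℂ) {x : ℝ} (hx : 0 ≤ x) :
    AEStronglyMeasurable (rayY α 0 lam A B) (volume.restrict (Ioi x)) :=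
  ((isSol_rayY hα hα2 0 lam A B).cont.mono
    (fun _ h => hx.trans (le_of_lt h))).aestronglyMeasurable measurableSet_Ioi

lemma norm_pairing_sub_le (hα : 0 < α) (hα2 : α ≤ 2)
    (hf : MemLp f 2 (volume.restrict (Ioi 0))) {lam A B : ℂ} {x T : ℝ} (hx : 0 ≤ x)
    (hint : IntegrableOn (fun s => ‖rayY α 0 lam A B s‖ ^ 2) (Ioi x))
    (hT : ∫ s in Ioi x, ‖rayY α 0 lam A B s‖ ^ 2 ≤ T) :
    ‖pairing α f lam A B - (A * partInt α f 0 x lam + B * partInt α f 1 x lam)‖ ≤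
      √T * √(∫ s in Ioi (0 : ℝ), ‖f s‖ ^ 2) := by
  have hcs := cauchy_schwarz_setIntegral (Ioi_subset_Ioi hx) hf
    (aestronglyMeasurable_rayY hα hα2 lam A B hx) hint
  have h1 := integral_rayY_mul_Ioc hα hα2 hf lam A B x
  have : pairing α f lam A B - (A * partInt α f 0 x lam + B * partInt α f 1 x lam) =
      ∫ s in Ioi x, rayY α 0 lam A B s * f s := by
    rw [← h1.2, pairing, ← Ioc_union_Ioi_eq_Ioi hx,
      setIntegral_union (Ioc_disjoint_Ioi le_rfl) measurableSet_Ioi h1.1 hcs.1]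
    ring
  rw [this]
  exact hcs.2.trans (by gcongr)

lemma DecayFamily.differentiableOn_pairing (hα : 0 < α) (hα2 : α ≤ 2) {Λ : ℝ} {A B : ℂ → ℂ}
    {T : ℕ → ℝ} (h : DecayFamily α Λ A B T) (hf : MemLp f 2 (volume.restrict (Ioi 0))) :
    DifferentiableOn ℂ (fun lam => pairing α f lam (A lam) (B lam)) (Metric.ball 0 Λ) := by
  have hunif : TendstoUniformlyOn
      (fun (n : ℕ) lam => A lam * partInt α f 0 n lam + B lam * partInt α f 1 n lam)
      (fun lam => pairing α f lam (A lam) (B lam)) atTop (Metric.ball 0 Λ) := by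
    rw [Metric.tendstoUniformlyOn_iff]
    intro ε hε
    have hlim : Tendsto (fun n => √(T n) * √(∫ s in Ioi (0 : ℝ), ‖f s‖ ^ 2)) atTop (𝓝 0) := by
      simpa using h.lim.sqrt.mul_const _
    filter_upwards [hlim.eventually_lt_const hε, h.tail] with n hn htail lam hlam
    rw [dist_eq_norm]
    exact (norm_pairing_sub_le hα hα2 hf n.cast_nonneg (htail lam hlam).1
      (htail lam hlam).2).trans_lt hn
  refine hunif.tendstoLocallyUniformlyOn.differentiableOn (Eventually.of_forall fun n => ?_)
    Metric.isOpen_ball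
  exact (h.diffA.mul (differentiable_partInt hα hα2 zero_le_one hf n).differentiableOn).add
    (h.diffB.mul (differentiable_partInt hα hα2 le_rfl hf n).differentiableOn)

end

/-- Division of holomorphic functions when the divisor has only simple zeros, all of which are
zeros of the dividend. -/
lemma exists_holomorphic_quotient {U : Set ℂ} (hU : IsOpen U) {A G : ℂ → ℂ}
    (hA : DifferentiableOn ℂ A U) (hG : DifferentiableOn ℂ G U)
    (hz : ∀ z ∈ U, A z = 0 → G z = 0 ∧ deriv A z ≠ 0) :
    ∃ F : ℂ → ℂ, DifferentiableOn ℂ F U ∧ (∀ z ∈ U, G z = F z * A z) ∧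
      ∀ z ∈ U, ∀ᶠ w in 𝓝[≠] z, A w ≠ 0 := by
  classical
  have key : ∀ z ∈ U, A z = 0 → ∀ᶠ w in 𝓝 z, dslope A z w ≠ 0 := by
    intro z hzU h0
    have hc : ContinuousAt (dslope A z) z :=
      continuousAt_dslope_same.2 (hA.differentiableAt (hU.mem_nhds hzU))
    exact hc.eventually_ne (by rw [dslope_same]; exact (hz z hzU h0).2)
  have keyA : ∀ z w, A z = 0 → A w = (w - z) * dslope A z w := fun z w h0 => by
    have := sub_smul_dslope A z w; rw [h0, sub_zero, smul_eq_mul] at this; exact this.symm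
  refine ⟨fun z => if A z = 0 then deriv G z / deriv A z else G z / A z, ?_, ?_, ?_⟩
  · intro z hzU
    have hAz := hA.differentiableAt (hU.mem_nhds hzU)
    have hGz := hG.differentiableAt (hU.mem_nhds hzU)
    by_cases h0 : A z = 0
    · have hd : DifferentiableAt ℂ (fun w => dslope G z w / dslope A z w) z := by
        refine DifferentiableAt.div ?_ ?_ (key z hzU h0).self_of_nhds
        · exact ((Complex.differentiableOn_dslope (hU.mem_nhds hzU)).2 hG).differentiableAt
            (hU.mem_nhds hzU)
        · exact ((Complex.differentiableOn_dslope (hU.mem_nhds hzU)).2 hA).differentiableAt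
            (hU.mem_nhds hzU)
      refine (hd.congr_of_eventuallyEq ?_).differentiableWithinAt
      filter_upwards [key z hzU h0] with w hw
      rcases eq_or_ne w z with rfl | hwz
      · rw [if_pos h0, dslope_same, dslope_same]
      · have h1 := keyA z w h0
        have h2 : G w = (w - z) * dslope G z w := by
          have := sub_smul_dslope G z w
          rw [(hz z hzU h0).1, sub_zero, smul_eq_mul] at this; exact this.symm
        have h3 : w - z ≠ 0 := sub_ne_zero.2 hwz
        rw [if_neg (by rw [h1]; exact mul_ne_zero h3 hw), h1, h2, mul_div_mul_left _ _ h3]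
    · refine ((hGz.div hAz h0).congr_of_eventuallyEq ?_).differentiableWithinAt
      filter_upwards [hAz.continuousAt.eventually_ne h0] with w hw
      rw [if_neg hw]; rfl
  · intro z hzU
    by_cases h0 : A z = 0
    · rw [(hz z hzU h0).1, h0, mul_zero]
    · simp only [if_neg h0, div_mul_cancel₀ _ h0]
  · intro z hzU
    by_cases h0 : A z = 0
    · filter_upwards [(key z hzU h0).filter_mono nhdsWithin_le_nhds, self_mem_nhdsWithin] with w hw hwz
      rw [keyA z w h0]
      exact mul_ne_zero (sub_ne_zero.2 hwz) hw
    · exact ((hA.differentiableAt (hU.mem_nhds hzU)).continuousAt.eventually_ne h0).filter_mono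
        nhdsWithin_le_nhds

section

variable {α : ℝ} {f : ℝ → ℂ}

lemma DecayFamily.integrableOn (hα : 0 < α) (hα2 : α ≤ 2) {Λ : ℝ} {A B : ℂ → ℂ} {T : ℕ → ℝ}
    (h : DecayFamily α Λ A B T) {lam : ℂ} (hlam : lam ∈ Metric.ball (0 : ℂ) Λ) :
    IntegrableOn (fun s => ‖rayY α 0 lam (A lam) (B lam) s‖ ^ 2) (Ioi 0) := by
  obtain ⟨n, hn⟩ := h.tail.exists
  rw [← Ioc_union_Ioi_eq_Ioi (Nat.cast_nonneg n : (0 : ℝ) ≤ n)]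
  refine IntegrableOn.union ?_ (hn lam hlam).1
  exact (((isSol_rayY hα hα2 0 lam _ _).norm_sq_cont.mono Icc_subset_Ici_self).integrableOn_Icc
    ).mono_set Ioc_subset_Icc_self

lemma isEigenfunction_rayY (hα : 0 < α) (hα2 : α ≤ 2) {lam B : ℂ} (hB : B ≠ 0)
    (hint : IntegrableOn (fun s => ‖rayY α 0 lam 0 B s‖ ^ 2) (Ioi 0)) :
    IsEigenfunction α Complex.I lam (rayY α 0 lam 0 B) := by
  have hsol := isSol_rayY hα hα2 0 lam 0 B
  refine ⟨hsol.cont, rayY_zero _ _ _ _ _, ?_, ⟨rayY' α 0 lam 0 B, fun x hx => hsol.deriv x hx,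
    fun x hx => ?_⟩, hint⟩
  · by_contra! h
    have h1 : ∀ x ∈ Ioi (0 : ℝ), rayY' α 0 lam 0 B x = 0 := by
      intro x hx
      refine (hsol.deriv x hx).unique ((hasDerivAt_const x (0 : ℂ)).congr_of_eventuallyEq ?_)
      filter_upwards [Ioi_mem_nhds hx] with s hs using h s (le_of_lt hs)
    have h2 : rayY' α 0 lam 0 B 0 = 0 := by
      have hc := (hsol.cont' 0 self_mem_Ici).mono Ioi_subset_Ici_self
      exact tendsto_nhds_unique hc (tendsto_const_nhds.congr' (by
        filter_upwards [self_mem_nhdsWithin] with s hs using (h1 s hs).symm))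
    have h3 := norm_rayY'_zero α 0 lam 0 B
    rw [h2, norm_zero] at h3
    exact hB (norm_eq_zero.1 h3.symm)
  · have := hsol.deriv' x hx
    rwa [show rayQ α 0 lam x = Complex.I * ((x ^ α : ℝ) : ℂ) - lam by simp [rayQ]] at this

lemma rot_add_mul (α ε : ℝ) (lam : ℂ) :
    (rot α (lam + ε * (Complex.I * unitDir (-(Real.pi / (2 + α)))))).im = (rot α lam).im + ε := by
  have h : unitDir (-(Real.pi / (2 + α))) * unitDir (Real.pi / (2 + α)) = 1 := by
    rw [← unitDir_add]; simp [unitDir]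
  have : rot α (lam + ε * (Complex.I * unitDir (-(Real.pi / (2 + α))))) =
      rot α lam + ε * Complex.I := by
    simp only [rot]
    linear_combination (ε * Complex.I) * h
  rw [this]; simp

/-- The zeros of the characteristic function are simple. -/
lemma DecayFamily.deriv_ne_zero (hα : 0 < α) (hα2 : α ≤ 2) {Λ : ℝ} {A B : ℂ → ℂ} {T : ℕ → ℝ}
    (h : DecayFamily α Λ A B T) {lam : ℂ} (hlam : lam ∈ Metric.ball (0 : ℂ) Λ) (hA : A lam = 0) :
    deriv A lam ≠ 0 := by
  intro hd0
  have hB : B lam ≠ 0 := (h.ne lam hlam).resolve_left (by simp [hA])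
  have hR : (1 : ℝ) ≤ 1 + Λ := by
    have := (norm_nonneg _).trans_lt (mem_ball_zero_iff.1 hlam); linarith
  have hle : ∀ w ∈ Metric.ball (0 : ℂ) Λ, |(rot α w).im| * ‖B w‖ ≤ 12 * (1 + Λ) ^ 2 * ‖A w‖ :=
    fun w hw => abs_im_rot_mul_le hα hα2 (h.decays w hw) hR
      (by have := mem_ball_zero_iff.1 hw; linarith)
  have him : (rot α lam).im = 0 := by
    have := hle lam hlam
    rw [hA, norm_zero, mul_zero] at this
    have h2 : 0 < ‖B lam‖ := norm_pos_iff.2 hB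
    have h3 : |(rot α lam).im| ≤ 0 := by
      by_contra! h4
      nlinarith
    exact abs_nonpos_iff.1 h3
  have hnhds : Metric.ball (0 : ℂ) Λ ∈ 𝓝 lam := Metric.isOpen_ball.mem_nhds hlam
  set u : ℂ := Complex.I * unitDir (-(Real.pi / (2 + α)))
  have hu : ‖u‖ = 1 := by simp [u, norm_unitDir]
  have hline : HasDerivAt (fun ε : ℝ => lam + ε * u) u 0 := by
    simpa using ((Complex.ofRealCLM.hasDerivAt (x := 0)).mul_const u).const_add lam
  have hline0 : (fun ε : ℝ => lam + ε * u) 0 = lam := by simp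
  have hderA : HasDerivAt (fun ε : ℝ => A (lam + ε * u)) 0 0 := by
    have h1 := (h.diffA.differentiableAt hnhds).hasDerivAt
    rw [hd0, ← hline0] at h1
    have h2 := h1.comp_of_eq (h := fun ε : ℝ => lam + ε * u) (0 : ℝ) hline rfl
    rw [zero_mul] at h2
    exact h2
  have hBc : Tendsto (fun ε : ℝ => ‖B (lam + ε * u)‖) (𝓝[>] 0) (𝓝 ‖B lam‖) := by
    have h1 : ContinuousAt (fun ε : ℝ => B (lam + ε * u)) 0 := by
      refine ContinuousAt.comp_of_eq (h.diffB.differentiableAt hnhds).continuousAt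
        hline.continuousAt hline0
    have h2 := h1.tendsto
    simp only [Complex.ofReal_zero, zero_mul, add_zero] at h2
    exact (h2.norm).mono_left nhdsWithin_le_nhds
  have hAc : Tendsto (fun ε : ℝ => 12 * (1 + Λ) ^ 2 * ‖ε⁻¹ • A (lam + ε * u)‖) (𝓝[>] 0) (𝓝 0) := by
    have h1 := (hderA.tendsto_slope_zero_right).norm.const_mul (12 * (1 + Λ) ^ 2)
    simpa [hA] using h1
  have hfin := le_of_tendsto_of_tendsto hBc hAc (by
    have hmem : ∀ᶠ ε : ℝ in 𝓝[>] 0, lam + ε * u ∈ Metric.ball (0 : ℂ) Λ := by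
      refine (hline.continuousAt.eventually ?_).filter_mono nhdsWithin_le_nhds
      rw [hline0]; exact hnhds
    filter_upwards [hmem, self_mem_nhdsWithin] with ε hε hpos
    have hpos' : (0 : ℝ) < ε := hpos
    have h1 := hle _ hε
    rw [rot_add_mul, him, zero_add, abs_of_pos hpos'] at h1
    rw [norm_smul, norm_inv, Real.norm_of_nonneg hpos'.le]
    calc ‖B (lam + ε * u)‖ = ε⁻¹ * (ε * ‖B (lam + ε * u)‖) := by field_simp
      _ ≤ ε⁻¹ * (12 * (1 + Λ) ^ 2 * ‖A (lam + ε * u)‖) := by gcongr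
      _ = _ := by ring)
  exact hB (norm_le_zero_iff.1 hfin)

lemma mul_pairing_comm (hα : 0 < α) (hα2 : α ≤ 2) {lam A₁ B₁ A₂ B₂ : ℂ}
    (h₁ : Decays (rayY α 0 lam A₁ B₁) (rayY' α 0 lam A₁ B₁))
    (h₂ : Decays (rayY α 0 lam A₂ B₂) (rayY' α 0 lam A₂ B₂)) :
    A₂ * pairing α f lam A₁ B₁ = A₁ * pairing α f lam A₂ B₂ := by
  have hw := (isSol_rayY hα hα2 0 lam A₁ B₁).wronskian_eq_zero_of_decays
    (isSol_rayY hα hα2 0 lam A₂ B₂) h₁ h₂ le_rfl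
  simp only [rayY_zero, rayY'_zero, Complex.ofReal_zero, neg_zero, zero_mul, Complex.exp_zero,
    mul_one] at hw
  rw [← pairing_smul, ← pairing_smul, mul_comm A₂ A₁, mul_comm A₂ B₁, sub_eq_zero.1 hw]

/-- If `f` annihilates all eigenfunctions, its pairing with the recessive solution is an entire
multiple of the characteristic function. -/
lemma exists_entire_quotient (hα : 0 < α) (hα2 : α ≤ 2)
    (hf : MemLp f 2 (volume.restrict (Ioi 0)))
    (horth : ∀ lam y, IsEigenfunction α Complex.I lam y → ∫ s in Ioi (0 : ℝ), y s * f s = 0) :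
    ∃ F : ℂ → ℂ, Differentiable ℂ F ∧ ∀ lam, ∃ A B : ℂ, (A ≠ 0 ∨ B ≠ 0) ∧
      Decays (rayY α 0 lam A B) (rayY' α 0 lam A B) ∧ pairing α f lam A B = F lam * A := by
  choose A B T hfam using fun n : ℕ => exists_decayFamily hα hα2 (Λ := n) n.cast_nonneg
  have hmem : ∀ lam : ℂ, ∃ n : ℕ, lam ∈ Metric.ball (0 : ℂ) n := fun lam => by
    obtain ⟨n, hn⟩ := exists_nat_gt ‖lam‖; exact ⟨n, mem_ball_zero_iff.2 hn⟩
  choose N hN using hmem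
  choose F hF hFeq hne using fun n : ℕ => exists_holomorphic_quotient Metric.isOpen_ball
    (hfam n).diffA ((hfam n).differentiableOn_pairing hα hα2 hf) (fun z hz h0 =>
      ⟨by
        have hBz : B n z ≠ 0 := ((hfam n).ne z hz).resolve_left (by simp [h0])
        have hint := (hfam n).integrableOn hα hα2 hz
        rw [h0] at hint
        simp only [h0]
        exact horth z _ (isEigenfunction_rayY hα hα2 hBz hint),
      (hfam n).deriv_ne_zero hα hα2 hz h0⟩)
  have hagree : ∀ (m n : ℕ) (lam : ℂ), lam ∈ Metric.ball (0 : ℂ) m → lam ∈ Metric.ball (0 : ℂ) n →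
      F m lam = F n lam := by
    intro m n lam hm hn
    have h1 : ∀ᶠ w in 𝓝[≠] lam, F m w = F n w := by
      filter_upwards [hne m lam hm, hne n lam hn,
        mem_nhdsWithin_of_mem_nhds (Metric.isOpen_ball.mem_nhds hm),
        mem_nhdsWithin_of_mem_nhds (Metric.isOpen_ball.mem_nhds hn)] with w h1 h2 h3 h4
      have h5 := mul_pairing_comm (f := f) hα hα2 ((hfam m).decays w h3) ((hfam n).decays w h4)
      rw [hFeq m w h3, hFeq n w h4] at h5
      have h6 : A m w * A n w ≠ 0 := mul_ne_zero h1 h2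
      exact mul_right_cancel₀ h6 (by linear_combination h5)
    have hc : ∀ k : ℕ, lam ∈ Metric.ball (0 : ℂ) k → Tendsto (F k) (𝓝[≠] lam) (𝓝 (F k lam)) :=
      fun k hk => ((hF k).differentiableAt (Metric.isOpen_ball.mem_nhds hk)).continuousAt.tendsto.mono_left
        nhdsWithin_le_nhds
    exact tendsto_nhds_unique ((hc m hm).congr' h1) (hc n hn)
  refine ⟨fun lam => F (N lam) lam, fun lam => ?_, fun lam => ⟨A (N lam) lam, B (N lam) lam,
    (hfam _).ne lam (hN lam), (hfam _).decays lam (hN lam), hFeq _ lam (hN lam)⟩⟩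
  refine ((hF (N lam)).differentiableAt (Metric.isOpen_ball.mem_nhds (hN lam))).congr_of_eventuallyEq ?_
  filter_upwards [Metric.isOpen_ball.mem_nhds (hN lam)] with w hw
  exact hagree _ _ w (hN w) hw

end

lemma sin_le_sin_of_mem {δ x : ℝ} (hδ : 0 ≤ δ) (h1 : δ ≤ x) (h2 : x ≤ Real.pi - δ) :
    Real.sin δ ≤ Real.sin x := by
  rcases le_total x (Real.pi / 2) with h | h
  · exact Real.sin_le_sin_of_le_of_le_pi_div_two (by linarith) h h1
  · rw [← Real.sin_pi_sub x]
    exact Real.sin_le_sin_of_le_of_le_pi_div_two (by linarith) (by linarith) (by linarith)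

lemma sin_inv_pos : 0 < Real.sin (1 / 320) :=
  Real.sin_pos_of_pos_of_lt_pi (by norm_num) (by linarith [Real.pi_gt_three])

/-- A rotation separating the ray of angle `θ` from the numerical range. -/
lemma exists_cone_angle {θ : ℝ} (h1 : 3 * Real.pi / 4 ≤ θ) (h2 : θ ≤ 2 * Real.pi - 1 / 160) :
    ∃ χ, Real.sin (1 / 320) ≤ Real.cos χ ∧ 0 ≤ Real.sin χ ∧ ∀ r : ℝ, 0 ≤ r →
      Real.sin (1 / 320) * r ≤ -((r : ℂ) * unitDir (-θ) * unitDir χ).re := by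
  have hpi := Real.pi_gt_three
  have key : ∀ χ, Real.pi / 2 + 1 / 320 ≤ θ - χ → θ - χ ≤ 3 * Real.pi / 2 - 1 / 320 →
      ∀ r : ℝ, 0 ≤ r → Real.sin (1 / 320) * r ≤ -((r : ℂ) * unitDir (-θ) * unitDir χ).re := by
    intro χ hχ1 hχ2 r hr
    have h := sin_le_sin_of_mem (δ := 1 / 320) (x := θ - χ - Real.pi / 2) (by norm_num)
      (by linarith) (by linarith)
    rw [Real.sin_sub_pi_div_two, ← Real.cos_neg, neg_sub] at h
    rw [polar_mul_unitDir_re]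
    nlinarith
  rcases le_total θ Real.pi with h | h
  · refine ⟨Real.pi / 8, ?_, ?_, key _ (by linarith) (by linarith)⟩
    · rw [← Real.sin_pi_div_two_sub]
      exact sin_le_sin_of_mem (by norm_num) (by linarith) (by linarith)
    · exact Real.sin_nonneg_of_nonneg_of_le_pi (by linarith) (by linarith)
  · refine ⟨Real.pi / 2 - 1 / 320, ?_, ?_, key _ (by linarith) (by linarith)⟩
    · rw [Real.cos_pi_div_two_sub]
    · exact Real.sin_nonneg_of_nonneg_of_le_pi (by linarith) (by linarith)

section

variable {α : ℝ} {f : ℝ → ℂ}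

lemma norm_pairing_le (hα : 0 < α) (hα2 : α ≤ 2) (hf : MemLp f 2 (volume.restrict (Ioi 0)))
    {lam A B : ℂ} (hint : IntegrableOn (fun s => ‖rayY α 0 lam A B s‖ ^ 2) (Ioi 0)) :
    ‖pairing α f lam A B‖ ≤ √(∫ s in Ioi (0 : ℝ), ‖rayY α 0 lam A B s‖ ^ 2) *
      √(∫ s in Ioi (0 : ℝ), ‖f s‖ ^ 2) :=
  (cauchy_schwarz_setIntegral subset_rfl hf (aestronglyMeasurable_rayY hα hα2 lam A B le_rfl)
    hint).2

lemma norm_quotient_le (hα : 0 < α) (hα2 : α ≤ 2) (hf : MemLp f 2 (volume.restrict (Ioi 0)))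
    {lam A B w : ℂ} {D : ℝ} (hA : A ≠ 0)
    (hint : IntegrableOn (fun s => ‖rayY α 0 lam A B s‖ ^ 2) (Ioi 0))
    (hD : ∫ s in Ioi (0 : ℝ), ‖rayY α 0 lam A B s‖ ^ 2 ≤ D * ‖A‖ ^ 2)
    (hw : pairing α f lam A B = w * A) :
    ‖w‖ ≤ √D * √(∫ s in Ioi (0 : ℝ), ‖f s‖ ^ 2) := by
  have h1 := norm_pairing_le hα hα2 hf hint
  have h2 : √(∫ s in Ioi (0 : ℝ), ‖rayY α 0 lam A B s‖ ^ 2) ≤ √D * ‖A‖ := by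
    refine (Real.sqrt_le_sqrt hD).trans ?_
    rw [Real.sqrt_mul' _ (by positivity), Real.sqrt_sq (norm_nonneg _)]
  rw [hw, norm_mul] at h1
  have hA0 : 0 < ‖A‖ := norm_pos_iff.2 hA
  refine le_of_mul_le_mul_right ?_ hA0
  calc ‖w‖ * ‖A‖ ≤ _ := h1
    _ ≤ √D * ‖A‖ * √(∫ s in Ioi (0 : ℝ), ‖f s‖ ^ 2) := by gcongr
    _ = _ := by ring

lemma rot_mul_unitDir (α : ℝ) (t : ℂ) : rot α (t * unitDir (-(Real.pi / (2 + α)))) = t := by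
  rw [rot, mul_assoc, ← unitDir_add]; simp [unitDir]

lemma sqrt_inv_sqrt_eq {r : ℝ} (hr : 0 ≤ r) : √((√r)⁻¹) = r ^ (-(1 / 4) : ℝ) := by
  rw [Real.sqrt_inv, Real.rpow_neg hr, Real.sqrt_eq_rpow, Real.sqrt_eq_rpow, ← Real.rpow_mul hr]
  norm_num

/-- A function annihilating all eigenfunctions annihilates all recessive solutions. -/
lemma pairing_eq_zero (hα : 133 / 200 < α) (hα2 : α ≤ 2)
    (hf : MemLp f 2 (volume.restrict (Ioi 0)))
    (horth : ∀ lam y, IsEigenfunction α Complex.I lam y → ∫ s in Ioi (0 : ℝ), y s * f s = 0)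
    (lam : ℂ) : ∃ A B : ℂ, (A ≠ 0 ∨ B ≠ 0) ∧
      Decays (rayY α 0 lam A B) (rayY' α 0 lam A B) ∧ pairing α f lam A B = 0 := by
  have hα0 : 0 < α := by linarith
  have hpi := Real.pi_gt_three
  have hpi' := Real.pi_lt_d2
  obtain ⟨F, hF, hFA⟩ := exists_entire_quotient hα0 hα2 hf horth
  set Φ := √(∫ s in Ioi (0 : ℝ), ‖f s‖ ^ 2) with hΦ
  have hΦ0 : 0 ≤ Φ := Real.sqrt_nonneg _
  set κ := Real.sin (1 / 320)
  have hκ : 0 < κ := sin_inv_pos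
  have hcone : ∀ r : ℝ, 1 ≤ r → ∀ θ, 3 * Real.pi / 4 ≤ θ → θ ≤ 2 * Real.pi - 1 / 160 →
      ‖F (r * unitDir (-θ))‖ ≤ √(3 / κ ^ 2) * Φ * r ^ (-(1 / 4) : ℝ) := by
    intro r hr θ hθ1 hθ2
    have hr0 : 0 ≤ r := by linarith
    obtain ⟨χ, hc, hs, hsep⟩ := exists_cone_angle hθ1 hθ2
    obtain ⟨A, B, hne, hd, hp⟩ := hFA (r * unitDir (-θ))
    have hn : ‖(r : ℂ) * unitDir (-θ)‖ = r := norm_polar hr0 θ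
    obtain ⟨h1, h2, h3⟩ := cone_bounds hα0 hα2 hd (by rw [hn]; exact hr) hκ hc hs
      (by rw [hn]; exact hsep r hr0)
    have hA : A ≠ 0 := by
      rintro rfl
      rw [norm_zero, mul_zero] at h1
      exact (hne.resolve_left (by simp)) (norm_le_zero_iff.1 h1)
    have h4 := norm_quotient_le hα0 hα2 hf hA h2 h3 hp
    rw [hn, div_eq_mul_inv _ (√r), Real.sqrt_mul (by positivity), sqrt_inv_sqrt_eq hr0] at h4
    calc _ ≤ _ := h4
      _ = _ := by ring
  have hcone' : ∀ r : ℝ, 1 ≤ r → ∀ θ, 3 * Real.pi / 4 ≤ θ → θ ≤ 2 * Real.pi - 1 / 160 →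
      ‖F (r * unitDir (-θ))‖ ≤ √(3 / κ ^ 2) * Φ := fun r hr θ h1 h2 =>
    (hcone r hr θ h1 h2).trans (mul_le_of_le_one_right (by positivity)
      (Real.rpow_le_one_of_one_le_of_nonpos hr (by norm_num)))
  have hslant : ∀ r : ℝ, 1 ≤ r → ‖F (r * unitDir (-(Real.pi / 2 - 1 / 80)))‖ ≤
      √(10 ^ 12) * Φ := by
    intro r hr
    obtain ⟨A, B, hne, hd, hp⟩ := hFA (r * unitDir (-(Real.pi / 2 - 1 / 80)))
    obtain ⟨h1, h2, h3⟩ := slanted_bound hα hα2 hr hd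
    have hA : A ≠ 0 := by
      rintro rfl
      rw [norm_zero, mul_zero] at h3
      exact (hne.resolve_left (by simp)) (norm_le_zero_iff.1 h3)
    exact norm_quotient_le hα0 hα2 hf hA h1 h2 hp
  set p : ℝ := 1 / 2 + 1 / α with hpdef
  have hp0 : 0 ≤ p := by positivity
  have hp2 : p < 1 / 2 + 200 / 133 := by
    have : 1 / α < 1 / (133 / 200) := one_div_lt_one_div_of_lt (by norm_num) hα
    have h : (1 : ℝ) / (133 / 200) = 200 / 133 := by norm_num
    linarith
  obtain ⟨C, hC0, hC⟩ := growth_of_im_mul_growth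
    (H := fun t => F (t * unitDir (-(Real.pi / (2 + α)))))
    (hF.comp (differentiable_id.mul_const _)) (C := 20 + Φ) (p := p) (by positivity) hp0 (by
      intro t ht
      obtain ⟨A, B, hne, hd, hp⟩ := hFA (t * unitDir (-(Real.pi / (2 + α))))
      have hn : ‖t * unitDir (-(Real.pi / (2 + α)))‖ = ‖t‖ := by rw [norm_mul, norm_unitDir, mul_one]
      have h1 := abs_im_rot_mul_le hα0 hα2 hd ht hn.le
      obtain ⟨h2, h3⟩ := growth_bound hα hα2 hd (by rw [hn]; exact ht)
      rw [rot_mul_unitDir] at h1 h3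
      rw [hn] at h3
      rcases eq_or_ne A 0 with rfl | hA
      · have hB : 0 < ‖B‖ := norm_pos_iff.2 (hne.resolve_left (by simp))
        have h4 : |t.im| ≤ 0 := by
          rw [norm_zero, mul_zero] at h1
          by_contra! h4
          nlinarith
        rw [le_antisymm h4 (abs_nonneg _), zero_mul]
        positivity
      rcases eq_or_ne t.im 0 with h0 | h0
      · rw [h0, abs_zero, zero_mul]; positivity
      have h0' : 0 < |t.im| := abs_pos.2 h0
      have h5 := norm_quotient_le (D := Real.exp (40 * ‖t‖ ^ p) / |t.im| ^ 2) hα0 hα2 hf hA h2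
        (by rw [div_mul_eq_mul_div, le_div_iff₀ (by positivity), sq_abs, mul_comm]; exact h3) hp
      rw [Real.sqrt_div (by positivity), Real.sqrt_sq h0'.le, ← Real.exp_half] at h5
      have h6 : (1 : ℝ) ≤ ‖t‖ ^ p := Real.one_le_rpow ht hp0
      calc |t.im| * ‖F (t * unitDir (-(Real.pi / (2 + α))))‖
          ≤ |t.im| * (Real.exp (40 * ‖t‖ ^ p / 2) / |t.im| * Φ) := by gcongr
        _ = Real.exp (40 * ‖t‖ ^ p / 2) * Φ := by field_simp
        _ ≤ Real.exp (40 * ‖t‖ ^ p / 2) * Real.exp (Φ * ‖t‖ ^ p) := by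
            gcongr
            have := Real.add_one_le_exp (Φ * ‖t‖ ^ p)
            nlinarith
        _ = _ := by rw [← Real.exp_add]; ring_nf)
  have hgrow : ∀ z, 1 ≤ ‖z‖ → ‖F z‖ ≤ Real.exp (C * ‖z‖ ^ p) := by
    intro z hz
    have h1 := hC (rot α z) (by rw [norm_rot]; exact hz)
    have h2 : rot α z * unitDir (-(Real.pi / (2 + α))) = z := by
      rw [rot, mul_assoc, ← unitDir_add]; simp [unitDir]
    rwa [h2, norm_rot] at h1
  set M := max (√(3 / κ ^ 2) * Φ) (√(10 ^ 12) * Φ)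
  have hlow : unitDir (-(-(1 / 160))) = unitDir (-(2 * Real.pi - 1 / 160)) := by
    simp only [unitDir]
    rw [Complex.exp_eq_exp_iff_exists_int]
    exact ⟨-1, by push_cast; ring⟩
  obtain ⟨M₁, hM₁⟩ := sector_bound (a := -(1 / 160)) (b := Real.pi / 2 - 1 / 80) (M := M) hF
    (by rw [lt_div_iff₀ (by linarith)]; nlinarith) hC0 hgrow
    (fun r hr => by
      rw [hlow]
      exact (hcone' r hr _ (by linarith) le_rfl).trans (le_max_left _ _))
    (fun r hr => (hslant r hr).trans (le_max_right _ _))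
  obtain ⟨M₂, hM₂⟩ := sector_bound (a := Real.pi / 2 - 1 / 80) (b := 3 * Real.pi / 4) (M := M) hF
    (by rw [lt_div_iff₀ (by linarith)]; nlinarith) hC0 hgrow
    (fun r hr => (hslant r hr).trans (le_max_right _ _))
    (fun r hr => (hcone' r hr _ le_rfl (by linarith)).trans (le_max_left _ _))
  have hzero := entire_eq_zero hF hcone (M' := max M₁ M₂) (fun r hr θ h1 h2 => by
    rcases le_total θ (Real.pi / 2 - 1 / 80) with h | h
    · exact (hM₁ r hr θ h1 h).trans (le_max_left _ _)
    · exact (hM₂ r hr θ h h2).trans (le_max_right _ _))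
  obtain ⟨A, B, hne, hd, hp⟩ := hFA lam
  exact ⟨A, B, hne, hd, by rw [hp, hzero, zero_mul]⟩

end

section

variable {α : ℝ} {f : ℝ → ℂ}

lemma flux_mul_norm_sq_sub (g : ℂ) (u u' v v' : ℝ → ℂ) (x : ℝ) :
    flux g v v' x * ‖u x‖ ^ 2 - flux g u u' x * ‖v x‖ ^ 2 =
      (g * (u x * v' x - u' x * v x) * conj (u x * v x)).re := by
  have h : g * (u x * v' x - u' x * v x) * conj (u x * v x) =
      (g * v' x * conj (v x)) * (u x * conj (u x)) -
        (g * u' x * conj (u x)) * (v x * conj (v x)) := by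
    rw [map_mul]; ring
  rw [h, Complex.mul_conj', Complex.mul_conj', Complex.sub_re, ← Complex.ofReal_pow,
    ← Complex.ofReal_pow, Complex.re_mul_ofReal, Complex.re_mul_ofReal]
  rfl

set_option maxHeartbeats 1000000 in
/-- The Green function bound in the separated cone. -/
lemma norm_green_le {x χ κ : ℝ} (hα : 0 < α) (hα2 : α ≤ 2) (hx : 0 < x)
    (hf : MemLp f 2 (volume.restrict (Ioi 0))) {lam A B : ℂ} (hA : A ≠ 0)
    (hd : Decays (rayY α 0 lam A B) (rayY' α 0 lam A B)) (hp : pairing α f lam A B = 0)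
    (hr : 1 ≤ ‖lam‖) (hκ : 0 < κ) (hcos : κ ≤ Real.cos χ) (hsin : 0 ≤ Real.sin χ)
    (hsep : κ * ‖lam‖ ≤ -(lam * unitDir χ).re) :
    ‖raySol α 1 0 lam x * partInt α f 0 x lam - raySol α 0 0 lam x * partInt α f 1 x lam‖ ≤
      √((1 / x + (1 + (2 * x) ^ α)) / κ ^ 2) / κ * √(∫ s in Ioi (0 : ℝ), ‖f s‖ ^ 2) *
        ‖lam‖ ^ (-(1 / 4) : ℝ) := by
  set r := ‖lam‖ with hrdef
  have hr0 : 0 < r := by linarith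
  have hq1 : 1 ≤ √r := Real.one_le_sqrt.2 hr
  have hq0 : 0 < √r := by linarith
  have hq2 : √r * √r = r := Real.mul_self_sqrt hr0.le
  set g := unitDir χ with hg
  have hg1 : ‖g‖ = 1 := norm_unitDir χ
  have ha : κ ≤ g.re := by rwa [hg, unitDir_re]
  have hb : ∀ s : ℝ, 0 < s → κ * r ≤ (g * rayQ α 0 lam s).re := by
    intro s hs
    rw [hg, unitDir_mul_rayQ_re]
    simp only [mul_zero, add_zero]
    have : 0 ≤ Real.sin χ * s ^ α := by positivity
    linarith
  set ψ := rayY α 0 lam A B with hψ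
  set ψ' := rayY' α 0 lam A B
  set S := raySol α 1 0 lam
  set S' := raySol' α 1 0 lam
  have hsψ : IsSol (rayQ α 0 lam) ψ ψ' := isSol_rayY hα hα2 0 lam A B
  have hsS : IsSol (rayQ α 0 lam) S S' := isSol_raySol hα hα2 le_rfl 0 lam
  have hS0 : S 0 = 0 := by simp [S, raySol]
  have hS0' : S' 0 = 1 := by simp [S', raySol']
  set m := 1 + (2 * x) ^ α with hm
  have hm1 : 1 ≤ m := by
    have : 0 ≤ (2 * x) ^ α := by positivity
    linarith
  set K := (1 / x + m) * √r / κ with hK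
  have hK0 : 0 ≤ K := by positivity
  set ℓ := x / √r with hℓ
  have hℓ0 : 0 < ℓ := by positivity
  have hℓx : ℓ ≤ x := div_le_self hx.le hq1
  have hM : ∀ s, 0 < s → s < 2 * x → ‖rayQ α 0 lam s‖ ≤ m * r := by
    intro s hs hs2
    refine (norm_rayQ_le α 0 lam hs.le).trans ?_
    have h1 : s ^ α ≤ (2 * x) ^ α := Real.rpow_le_rpow hs.le hs2.le hα.le
    have h2 : 0 ≤ (2 * x) ^ α := by positivity
    nlinarith
  have hK1 : 1 / ℓ + m * r / √r ≤ K * κ := by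
    have h1 : m * r / √r = m * √r := by
      rw [div_eq_iff hq0.ne', mul_assoc, hq2]
    have h2 : 1 / ℓ = 1 / x * √r := by rw [hℓ]; field_simp
    have h3 : K * κ = (1 / x + m) * √r := by rw [hK]; field_simp
    rw [h1, h2, h3]; linarith
  have hK2 : m * r * √r ≤ K * (κ * r) := by
    have h3 : K * (κ * r) = (1 / x + m) * (√r * r) := by rw [hK]; field_simp
    rw [h3]
    have : 0 ≤ 1 / x * (√r * r) := by positivity
    linarith
  set c := κ * √r with hc
  have hc0 : 0 < c := by positivity
  have hc2 : c ^ 2 ≤ κ * (κ * r) := by rw [hc, mul_pow, Real.sq_sqrt hr0.le]; linarith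
  have hfluxψ : flux g ψ ψ' x + c * ‖ψ x‖ ^ 2 ≤ 0 :=
    hsψ.flux_add_sq_nonpos hd hx.le ha hκ.le (by positivity) (fun s hs => hb s (hx.trans hs)) hc2
  have hflux0 : flux g S S' 0 = 0 := by simp [flux, hS0]
  have hfluxS : c * ‖S x‖ ^ 2 ≤ flux g S S' x := by
    have := hsS.flux_add_sq_mono (c := -c) le_rfl hx.le ha hκ.le (b := κ * r) (by positivity)
      (fun s hs _ => hb s hs) (by rw [neg_sq]; exact hc2)
    rw [hflux0, hS0, norm_zero] at this
    linarith
  have hW : ψ x * S' x - ψ' x * S x = A := by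
    rw [hsψ.wronskian_const hsS hx.le, hS0, hS0', hψ, rayY_zero]; ring
  have hprod : ‖ψ x‖ * ‖S x‖ ≤ ‖A‖ / (2 * c) := by
    have h1 := flux_mul_norm_sq_sub g ψ ψ' S S' x
    have h2 : (g * (ψ x * S' x - ψ' x * S x) * conj (ψ x * S x)).re ≤ ‖A‖ * (‖ψ x‖ * ‖S x‖) := by
      refine (Complex.re_le_norm _).trans ?_
      rw [hW]; simp [hg1]
    rw [le_div_iff₀ (by positivity)]
    have h3 : 2 * c * (‖ψ x‖ * ‖S x‖) ^ 2 ≤ ‖A‖ * (‖ψ x‖ * ‖S x‖) := by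
      nlinarith [mul_le_mul_of_nonneg_right hfluxS (sq_nonneg ‖ψ x‖),
        mul_le_mul_of_nonneg_right hfluxψ (sq_nonneg ‖S x‖)]
    rcases (mul_nonneg (norm_nonneg (ψ x)) (norm_nonneg (S x))).eq_or_lt with h0 | h0
    · rw [← h0, zero_mul]; positivity
    · by_contra! hcon
      nlinarith
  have hdψ : ‖ψ' x‖ ≤ K * ‖ψ x‖ := by
    have := hsψ.norm_deriv_le_of_decays hd hx.le hℓ0 hq0 hκ.le (b := κ * r) (by positivity) ha
      (fun s hs => hb s (hx.trans hs)) (fun s hs hs2 => hM s (hx.trans hs) (by linarith)) hK0 hK1 hK2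
    rwa [hg1, mul_one] at this
  have hdS : ‖S' x‖ ≤ K * ‖S x‖ := by
    have h1 := hsS.sq_deriv_le_left (x := x - ℓ) (by linarith) hℓ0 hq0 ha (b := κ * r)
      (fun s hs _ => hb s (by linarith)) (fun s hs hs2 => hM s (by linarith) (by linarith))
      hK0 hK1 hK2
    rw [sub_add_cancel] at h1
    have h2 : 0 ≤ flux g S S' (x - ℓ) := by
      rw [← hflux0]
      exact hsS.flux_mono le_rfl (by linarith) (hκ.le.trans ha)
        (fun s hs _ => (by positivity : 0 ≤ κ * r).trans (hb s hs))
    have h3 := (abs_le.1 (abs_flux_le g S S' x)).2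
    rw [hg1, one_mul] at h3
    have h4 : ‖S' x‖ ^ 2 ≤ K * (‖S' x‖ * ‖S x‖) := h1.trans (by gcongr; linarith)
    rcases (norm_nonneg (S' x)).eq_or_lt with h0 | h0
    · rw [← h0]; positivity
    · by_contra! hcon
      nlinarith
  set b := κ * r with hbdef
  have hb0 : 0 < b := by positivity
  set Φ := √(∫ s in Ioi (0 : ℝ), ‖f s‖ ^ 2)
  have hΦ0 : 0 ≤ Φ := Real.sqrt_nonneg _
  obtain ⟨hiψ, hIψ⟩ := hsψ.integral_norm_sq_le_of_decays hd hx.le hb0 (hκ.le.trans ha)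
    (fun s hs => hb s (hx.trans hs))
  have hIψ' : ∫ s in Ioi x, ‖ψ s‖ ^ 2 ≤ K / b * ‖ψ x‖ ^ 2 := by
    refine hIψ.trans ?_
    rw [div_mul_eq_mul_div]
    refine div_le_div_of_nonneg_right ?_ hb0.le
    have h3 := (abs_le.1 (abs_flux_le g ψ ψ' x)).1
    rw [hg1, one_mul] at h3
    have h4 : ‖ψ' x‖ * ‖ψ x‖ ≤ K * ‖ψ x‖ * ‖ψ x‖ := by gcongr
    linarith
  have hIS : ∫ s in Ioc 0 x, ‖S s‖ ^ 2 ≤ K / b * ‖S x‖ ^ 2 := by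
    have h1 := hsS.integral_norm_sq_le (g := g) le_rfl hx.le (hκ.le.trans ha)
      (fun s hs _ => hb s hs)
    rw [hflux0, intervalIntegral.integral_of_le hx.le] at h1
    have h3 := (abs_le.1 (abs_flux_le g S S' x)).2
    rw [hg1, one_mul] at h3
    have h4 : ‖S' x‖ * ‖S x‖ ≤ K * ‖S x‖ * ‖S x‖ := by gcongr
    rw [div_mul_eq_mul_div, le_div_iff₀ hb0]
    linarith
  have hcsψ := cauchy_schwarz_setIntegral (Ioi_subset_Ioi hx.le) hf
    (aestronglyMeasurable_rayY hα hα2 lam A B hx.le) hiψ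
  have hcsS := cauchy_schwarz_setIntegral (s := Ioc 0 x) Ioc_subset_Ioi_self hf
    ((aestronglyMeasurable_raySol hα hα2 le_rfl 0 lam).mono_measure
      (Measure.restrict_mono Ioc_subset_Ioi_self le_rfl))
    (((hsS.norm_sq_cont.mono Icc_subset_Ici_self).integrableOn_Icc).mono_set Ioc_subset_Icc_self)
  have hsq : ∀ {J t : ℝ}, 0 ≤ t → J ≤ K / b * t ^ 2 → √J ≤ √(K / b) * t := fun ht hJ => by
    refine (Real.sqrt_le_sqrt hJ).trans ?_
    rw [Real.sqrt_mul (by positivity), Real.sqrt_sq ht]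
  have hsplit := integral_rayY_mul_Ioc hα hα2 hf lam A B x
  have htail : A * partInt α f 0 x lam + B * partInt α f 1 x lam =
      -∫ s in Ioi x, ψ s * f s := by
    rw [pairing, ← Ioc_union_Ioi_eq_Ioi hx.le, setIntegral_union (Ioc_disjoint_Ioi le_rfl)
      measurableSet_Ioi hsplit.1 hcsψ.1, hsplit.2] at hp
    exact eq_neg_of_add_eq_zero_left hp
  have hψx : ψ x = A * raySol α 0 0 lam x + B * S x := rfl
  have hgreen : A * (S x * partInt α f 0 x lam - raySol α 0 0 lam x * partInt α f 1 x lam) =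
      -(S x * ∫ s in Ioi x, ψ s * f s) - ψ x * ∫ s in Ioc 0 x, S s * f s := by
    have : partInt α f 1 x lam = ∫ s in Ioc 0 x, S s * f s := rfl
    rw [← this, hψx]
    linear_combination S x * htail
  have hA0 : 0 < ‖A‖ := norm_pos_iff.2 hA
  have hbound : ‖A‖ * ‖S x * partInt α f 0 x lam - raySol α 0 0 lam x * partInt α f 1 x lam‖ ≤
      ‖A‖ * (√(K / b) / c * Φ) := by
    rw [← norm_mul, hgreen]
    calc _ ≤ ‖S x‖ * ‖∫ s in Ioi x, ψ s * f s‖ + ‖ψ x‖ * ‖∫ s in Ioc 0 x, S s * f s‖ := by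
          refine (norm_sub_le _ _).trans ?_
          rw [norm_neg, norm_mul, norm_mul]
      _ ≤ ‖S x‖ * (√(K / b) * ‖ψ x‖ * Φ) + ‖ψ x‖ * (√(K / b) * ‖S x‖ * Φ) := by
          gcongr
          · exact hcsψ.2.trans (mul_le_mul_of_nonneg_right (hsq (norm_nonneg _) hIψ') hΦ0)
          · exact hcsS.2.trans (mul_le_mul_of_nonneg_right (hsq (norm_nonneg _) hIS) hΦ0)
      _ = 2 * √(K / b) * Φ * (‖ψ x‖ * ‖S x‖) := by ring
      _ ≤ 2 * √(K / b) * Φ * (‖A‖ / (2 * c)) := by gcongr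
      _ = _ := by field_simp
  refine (le_of_mul_le_mul_left hbound hA0).trans ?_
  have hKb : K / b = (1 / x + m) / κ ^ 2 * (√r)⁻¹ := by
    rw [hK, hbdef]
    nth_rewrite 2 [← hq2]
    field_simp
  rw [hKb, Real.sqrt_mul (by positivity), sqrt_inv_sqrt_eq hr0.le]
  have hcκ : κ ≤ c := by rw [hc]; nlinarith
  calc √((1 / x + m) / κ ^ 2) * r ^ (-(1 / 4) : ℝ) / c * Φ
      ≤ √((1 / x + m) / κ ^ 2) * r ^ (-(1 / 4) : ℝ) / κ * Φ := by gcongr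
    _ = _ := by ring

end

section

variable {α : ℝ} {f : ℝ → ℂ}

lemma norm_partInt_le (hα : 0 < α) (hα2 : α ≤ 2) {σ : ℕ} (hσ : σ ≤ 1)
    (hf : MemLp f 2 (volume.restrict (Ioi 0))) (x : ℝ) (lam : ℂ) :
    ‖partInt α f σ x lam‖ ≤
      (1 + x) * Real.exp (x ^ 2 * (x ^ α + ‖lam‖)) * ∫ s in Ioc 0 x, ‖f s‖ := by
  rw [partInt, ← integral_const_mul]
  refine norm_integral_le_of_norm_le ((integrableOn_of_memLp hf x).norm.const_mul _) ?_
  filter_upwards [ae_restrict_mem measurableSet_Ioc] with s hs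
  rw [norm_mul]
  gcongr
  exact norm_raySol_le hα hα2 hσ 0 lam hs.1.le hs.2

/-- A function annihilating all recessive solutions has proportional partial integrals. -/
lemma raySol_mul_partInt_eq (hα : 0 < α) (hα2 : α ≤ 2)
    (hf : MemLp f 2 (volume.restrict (Ioi 0)))
    (hpair : ∀ lam : ℂ, ∃ A B : ℂ, (A ≠ 0 ∨ B ≠ 0) ∧
      Decays (rayY α 0 lam A B) (rayY' α 0 lam A B) ∧ pairing α f lam A B = 0)
    {x : ℝ} (hx : 0 < x) (lam : ℂ) :
    raySol α 1 0 lam x * partInt α f 0 x lam = raySol α 0 0 lam x * partInt α f 1 x lam := by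
  have hpi := Real.pi_gt_three
  set F : ℂ → ℂ := fun lam =>
    raySol α 1 0 lam x * partInt α f 0 x lam - raySol α 0 0 lam x * partInt α f 1 x lam with hFdef
  have hF : Differentiable ℂ F :=
    ((differentiable_raySol_param hα hα2 le_rfl 0 x).mul
      (differentiable_partInt hα hα2 zero_le_one hf x)).sub
    ((differentiable_raySol_param hα hα2 zero_le_one 0 x).mul
      (differentiable_partInt hα hα2 le_rfl hf x))
  set κ := Real.sin (1 / 320)
  have hκ : 0 < κ := sin_inv_pos
  set N := √((1 / x + (1 + (2 * x) ^ α)) / κ ^ 2) / κ * √(∫ s in Ioi (0 : ℝ), ‖f s‖ ^ 2) with hN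
  have hN0 : 0 ≤ N := by positivity
  have hcone : ∀ r : ℝ, 1 ≤ r → ∀ θ, 3 * Real.pi / 4 ≤ θ → θ ≤ 2 * Real.pi - 1 / 160 →
      ‖F (r * unitDir (-θ))‖ ≤ N * r ^ (-(1 / 4) : ℝ) := by
    intro r hr θ hθ1 hθ2
    have hr0 : 0 ≤ r := by linarith
    obtain ⟨χ, hc, hs, hsep⟩ := exists_cone_angle hθ1 hθ2
    obtain ⟨A, B, hne, hd, hp⟩ := hpair (r * unitDir (-θ))
    have hn : ‖(r : ℂ) * unitDir (-θ)‖ = r := norm_polar hr0 θ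
    have hr' : 1 ≤ ‖(r : ℂ) * unitDir (-θ)‖ := by rw [hn]; exact hr
    have hsep' : κ * ‖(r : ℂ) * unitDir (-θ)‖ ≤ -((r : ℂ) * unitDir (-θ) * unitDir χ).re := by
      rw [hn]; exact hsep r hr0
    have hA : A ≠ 0 := by
      rintro rfl
      have h1 := (cone_bounds hα hα2 hd hr' hκ hc hs hsep').1
      rw [norm_zero, mul_zero] at h1
      exact (hne.resolve_left (by simp)) (norm_le_zero_iff.1 h1)
    have h4 := norm_green_le hα hα2 hx hf hA hd hp hr' hκ hc hs hsep'
    rwa [hn] at h4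
  have hcone' : ∀ r : ℝ, 1 ≤ r → ∀ θ, 3 * Real.pi / 4 ≤ θ → θ ≤ 2 * Real.pi - 1 / 160 →
      ‖F (r * unitDir (-θ))‖ ≤ N := fun r hr θ h1 h2 =>
    (hcone r hr θ h1 h2).trans (mul_le_of_le_one_right hN0
      (Real.rpow_le_one_of_one_le_of_nonpos hr (by norm_num)))
  set J := ∫ s in Ioc 0 x, ‖f s‖
  have hJ : 0 ≤ J := integral_nonneg fun s => norm_nonneg _
  set D := 2 * (1 + x) ^ 2 * J with hD
  have hD0 : 0 ≤ D := by positivity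
  have hgrow : ∀ z, 1 ≤ ‖z‖ →
      ‖F z‖ ≤ Real.exp ((D + 2 * x ^ 2 * (x ^ α + 1)) * ‖z‖ ^ (1 : ℝ)) := by
    intro z hz
    rw [Real.rpow_one]
    set E := Real.exp (x ^ 2 * (x ^ α + ‖z‖)) with hE
    have hxα : 0 ≤ x ^ α := by positivity
    calc ‖F z‖ ≤ ((1 + x) * E) * ((1 + x) * E * J) + ((1 + x) * E) * ((1 + x) * E * J) := by
          refine (norm_sub_le _ _).trans ?_
          rw [norm_mul, norm_mul]
          gcongr
          · exact norm_raySol_le hα hα2 le_rfl 0 z hx.le le_rfl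
          · exact norm_partInt_le hα hα2 zero_le_one hf x z
          · exact norm_raySol_le hα hα2 zero_le_one 0 z hx.le le_rfl
          · exact norm_partInt_le hα hα2 le_rfl hf x z
      _ = D * (E * E) := by rw [hD]; ring
      _ ≤ Real.exp D * (E * E) := by
          gcongr
          linarith [Real.add_one_le_exp D]
      _ ≤ _ := by
          rw [hE, ← Real.exp_add, ← Real.exp_add]
          refine Real.exp_le_exp.2 ?_
          have h1 : D ≤ D * ‖z‖ := le_mul_of_one_le_right hD0 hz
          have h2 : x ^ 2 * x ^ α ≤ x ^ 2 * x ^ α * ‖z‖ := le_mul_of_one_le_right (by positivity) hz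
          linarith
  have hlow : unitDir (-(-(1 / 160))) = unitDir (-(2 * Real.pi - 1 / 160)) := by
    simp only [unitDir]
    rw [Complex.exp_eq_exp_iff_exists_int]
    exact ⟨-1, by push_cast; ring⟩
  obtain ⟨M', hM'⟩ := sector_bound (a := -(1 / 160)) (b := 3 * Real.pi / 4) (M := N) hF
    (by rw [lt_div_iff₀ (by linarith)]; linarith) (by positivity) hgrow
    (fun r hr => by
      rw [hlow]
      exact hcone' r hr _ (by linarith) le_rfl)
    (fun r hr => hcone' r hr _ le_rfl (by linarith))
  exact sub_eq_zero.1 (entire_eq_zero hF hcone hM' lam)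

lemma hasDerivAt_partInt_ae (hα : 0 < α) (hα2 : α ≤ 2) {σ : ℕ} (hσ : σ ≤ 1)
    (hf : MemLp f 2 (volume.restrict (Ioi 0))) (lam : ℂ) :
    ContinuousOn (fun x => partInt α f σ x lam) (Ioi 0) ∧
    ∀ᵐ x ∂(volume.restrict (Ioi (0 : ℝ))),
      HasDerivAt (fun x => partInt α f σ x lam) (raySol α σ 0 lam x * f x) x := by
  have hint : ∀ n : ℝ, 0 ≤ n →
      IntervalIntegrable (fun s => raySol α σ 0 lam s * f s) volume 0 n := fun n hn =>
    (intervalIntegrable_iff_integrableOn_Ioc_of_le hn).2 (integrableOn_raySol_mul hα hα2 hσ hf lam n)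
  have heq : ∀ x : ℝ, 0 ≤ x →
      partInt α f σ x lam = ∫ s in (0 : ℝ)..x, raySol α σ 0 lam s * f s := fun x hx =>
    (intervalIntegral.integral_of_le hx).symm
  constructor
  · intro x hx
    have hx0 : (0 : ℝ) < x := hx
    have h1 := intervalIntegral.continuousOn_primitive_interval (a := (0 : ℝ)) (b := x + 1)
      (f := fun s => raySol α σ 0 lam s * f s) (μ := volume) (by
        have := (hint (x + 1) (by linarith)).1
        rw [uIcc_of_le (by linarith)]
        rw [integrableOn_Icc_iff_integrableOn_Ioc]; exact this)
    rw [uIcc_of_le (by linarith)] at h1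
    have h2 := h1.continuousAt (x := x) (Icc_mem_nhds hx0 (by linarith))
    refine (h2.congr ?_).continuousWithinAt
    filter_upwards [Ioi_mem_nhds hx0] with s hs using (heq s (le_of_lt hs)).symm
  · rw [ae_restrict_iff' measurableSet_Ioi]
    have h1 := ae_all_iff.2 fun n : ℕ => (hint n n.cast_nonneg).ae_hasDerivAt_integral
    filter_upwards [h1] with x hx hx0
    have hx0' : (0 : ℝ) < x := hx0
    obtain ⟨n, hn⟩ := exists_nat_ge x
    have h2 := hx n (by rw [uIcc_of_le n.cast_nonneg]; exact ⟨hx0'.le, hn⟩) 0 left_mem_uIcc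
    refine h2.congr_of_eventuallyEq ?_
    filter_upwards [Ioi_mem_nhds hx0'] with s hs using heq s (le_of_lt hs)

/-- A function annihilating all eigenfunctions vanishes. -/
lemma ae_eq_zero_of_orthogonal (hα : 133 / 200 < α) (hα2 : α ≤ 2)
    (hf : MemLp f 2 (volume.restrict (Ioi 0)))
    (horth : ∀ lam y, IsEigenfunction α Complex.I lam y → ∫ s in Ioi (0 : ℝ), y s * f s = 0) :
    ∀ᵐ x ∂(volume.restrict (Ioi (0 : ℝ))), f x = 0 := by
  have hα0 : 0 < α := by linarith
  have hrel := fun {x : ℝ} (hx : 0 < x) =>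
    raySol_mul_partInt_eq hα0 hα2 hf (pairing_eq_zero hα hα2 hf horth) hx 0
  have hW := fun {x : ℝ} (hx : 0 < x) => raySol_wronskian hα0 hα2 0 hx.le
  obtain ⟨hPc, hP⟩ := hasDerivAt_partInt_ae hα0 hα2 zero_le_one hf 0
  obtain ⟨hRc, hR⟩ := hasDerivAt_partInt_ae hα0 hα2 le_rfl hf 0
  have hmem : ∀ᵐ x ∂(volume.restrict (Ioi (0 : ℝ))), 0 < x := ae_restrict_mem measurableSet_Ioi
  have hC := isSol_raySol hα0 hα2 zero_le_one 0 0
  have hS := isSol_raySol hα0 hα2 le_rfl 0 0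
  have hzero : ∀ᵐ x ∂(volume.restrict (Ioi (0 : ℝ))),
      partInt α f 0 x 0 = 0 ∧ partInt α f 1 x 0 = 0 := by
    filter_upwards [hP, hR, hmem] with x h1 h2 hx
    have h3 := (hS.deriv x hx).mul h1
    have h4 := (hC.deriv x hx).mul h2
    have h5 := h3.unique (h4.congr_of_eventuallyEq (by
      filter_upwards [Ioi_mem_nhds hx] with s hs using hrel hs))
    have h6 := hrel hx
    have h7 := hW hx
    constructor
    · linear_combination -partInt α f 0 x 0 * h7 + raySol α 0 0 0 x * h5 - raySol' α 0 0 0 x * h6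
    · linear_combination -partInt α f 1 x 0 * h7 + raySol α 1 0 0 x * h5 - raySol' α 1 0 0 x * h6
  have hP0 : EqOn (fun x => partInt α f 0 x 0) (fun _ => 0) (Ioi 0) :=
    Measure.eqOn_open_of_ae_eq (by filter_upwards [hzero] with x hx using hx.1) isOpen_Ioi hPc
      continuousOn_const
  have hR0 : EqOn (fun x => partInt α f 1 x 0) (fun _ => 0) (Ioi 0) :=
    Measure.eqOn_open_of_ae_eq (by filter_upwards [hzero] with x hx using hx.2) isOpen_Ioi hRc
      continuousOn_const
  filter_upwards [hP, hR, hmem] with x h1 h2 hx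
  have h3 := h1.unique ((hasDerivAt_const x (0 : ℂ)).congr_of_eventuallyEq (by
    filter_upwards [Ioi_mem_nhds hx] with s hs using hP0 hs))
  have h4 := h2.unique ((hasDerivAt_const x (0 : ℂ)).congr_of_eventuallyEq (by
    filter_upwards [Ioi_mem_nhds hx] with s hs using hR0 hs))
  linear_combination -f x * hW hx + raySol' α 1 0 0 x * h3 - raySol' α 0 0 0 x * h4

end

lemma IsEigenfunction.memLp {α : ℝ} {c lam : ℂ} {y : ℝ → ℂ} (h : IsEigenfunction α c lam y) :
    MemLp y 2 (volume.restrict (Ioi (0 : ℝ))) :=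
  (memLp_two_iff_integrable_sq_norm ((h.1.mono Ioi_subset_Ici_self).aestronglyMeasurable
    measurableSet_Ioi)).2 h.2.2.2.2

/-- there exists `α₀ < 2/3` such that for every `α` with `α₀ < α < 2`,
the system of eigenfunctions of `𝓛_{i,α}` is complete in `L²((0,∞),ℂ)`. -/
theorem stmt3 :
    ∃ α₀ : ℝ, α₀ < 2 / 3 ∧ ∀ α : ℝ, α₀ < α → α < 2 →
      EigenfunctionsComplete α Complex.I := by
  refine ⟨133 / 200, by norm_num, fun α hα hα2 => ?_⟩
  unfold EigenfunctionsComplete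
  rw [← Submodule.topologicalClosure_coe, ← Submodule.top_coe (R := ℂ), SetLike.coe_set_eq,
    Submodule.topologicalClosure_eq_top_iff, Submodule.eq_bot_iff]
  intro h hh
  rw [Submodule.mem_orthogonal'] at hh
  have hconj : MemLp (fun x => conj (h x)) 2 (volume.restrict (Ioi (0 : ℝ))) := (Lp.memLp h).star
  have hzero := ae_eq_zero_of_orthogonal hα hα2.le hconj (fun lam y hy => by
    have h1 := hh hy.memLp.toLp (Submodule.subset_span ⟨lam, y, hy, hy.memLp.coeFn_toLp⟩)
    rw [L2.inner_def] at h1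
    rw [← h1]
    refine integral_congr_ae ?_
    filter_upwards [hy.memLp.coeFn_toLp] with x hx
    rw [hx, RCLike.inner_apply])
  refine (Lp.eq_zero_iff_ae_eq_zero).2 ?_
  filter_upwards [hzero] with x hx
  simpa using hx
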